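/- arXiv:1206.0694 — 3 statements merged into one kernel-verified Lean document; each statement's English description precedes it below -/
import Mathlib

section
/- Let A be a C*-algebra and X a Banach A-bimodule. Then every Jordan derivation D : A → X, i.e., every linear map satisfying D(a²) = a·D(a) + D(a)·a for all a ∈ A (not assumed bounded), is automatically continuous. -/
/-!
Fix a self-adjoint `a` in a unital `A` and let `C(σ(a))` act on `X` from both sides. The Jordan
triple identity says that `D` intertwines `b ↦ f * b * g + g * b * f` with the same operator on `X`
up to a continuous error, so a gliding hump argument leaves only finitely many points in the joint
support of `D` for these two actions. Hence some real polynomial with simple real roots maps `a`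
into the closed two-sided ideal `J` of all `c` for which `b ↦ c · D b` and `b ↦ D b · c` are
continuous. Weighted sums of infinitely many orthogonal idempotents would violate this, so `A ⧸ J`
is finite-dimensional, and it remains to bound `D` on `J`. If `D` were unbounded on the positive
part of `J`, there would be positive `aₙ ∈ J` with `‖aₙ‖ ≤ 2⁻ⁿ` and `‖D aₙ‖ > n`, all dominated by
`b = ∑ aₙ ∈ J`. With `y = b ^ (1 / 4) ∈ J` each `aₙ` factors as `y * u * star u * y` with
`‖u‖ ≤ ‖y‖`, and `c ↦ D (y * c * y)` is continuous, so the `D aₙ` are bounded after all. The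
nonunital case follows by extending `D` by zero to the unitization.
-/

open Filter Topology Polynomial

section GlidingHump

variable {𝕜 E F : Type*} [RCLike 𝕜] [NormedAddCommGroup E] [NormedSpace 𝕜 E]
  [NormedAddCommGroup F] [NormedSpace 𝕜 F]

theorem exists_mem_lt_norm_of_not_continuous {T : E →ₗ[𝕜] F} (hT : ¬Continuous T) {s : Set E}
    (hs : s ∈ 𝓝 0) (M : ℝ) : ∃ b ∈ s, M < ‖T b‖ := by
  by_contra! h
  obtain ⟨δ, hδ, hδs⟩ := Metric.mem_nhds_iff.mp hs
  obtain ⟨C, hC⟩ := LinearMap.bound_of_ball_bound hδ M T fun z hz => h z (hδs hz)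
  exact hT (AddMonoidHomClass.continuous_of_bound T C hC)

-- If all `D ∘ P k ∘ P k` were discontinuous, `c = ∑ P k (b k)` with suitable small humps would
-- satisfy `D (P k c) = D (P k (P k (b k)))`, which is too large for every `k`.
theorem exists_continuous_comp_of_orthogonal [CompleteSpace E] {D : E →ₗ[𝕜] F}
    {P : ℕ → E →L[𝕜] E} (hP : ∀ j k, j ≠ k → ∀ b, P k (P j b) = 0) {C : ℕ → ℝ}
    (hD : ∀ k c, ‖D (P k c)‖ ≤ C k * (‖c‖ + ‖D c‖)) :
    ∃ k, Continuous fun b => D (P k (P k b)) := by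
  by_contra! hcon
  have hump : ∀ k, ∃ b, ‖P k b‖ ≤ (1 / 2) ^ k ∧ k * |C k| < ‖D (P k (P k b))‖ := fun k => by
    have hnhds : P k ⁻¹' Metric.closedBall 0 ((1 / 2) ^ k) ∈ 𝓝 0 :=
      (P k).continuous.continuousAt.preimage_mem_nhds <| by
        rw [map_zero]
        exact Metric.closedBall_mem_nhds 0 (by positivity)
    simpa using exists_mem_lt_norm_of_not_continuous
      (T := D ∘ₗ ((P k).comp (P k) : E →ₗ[𝕜] E)) (hcon k) hnhds (k * |C k|)
  choose b hb hDb using hump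
  have hsum : Summable fun k => P k (b k) := .of_norm_bounded summable_geometric_two hb
  set c := ∑' k, P k (b k)
  have hPc : ∀ k, P k c = P k (P k (b k)) := fun k => by
    rw [(P k).map_tsum hsum]
    exact tsum_eq_single k fun j hj => hP j k hj _
  obtain ⟨k, hk⟩ := exists_nat_ge (‖c‖ + ‖D c‖)
  refine (hDb k).not_ge ?_
  calc ‖D (P k (P k (b k)))‖ ≤ C k * (‖c‖ + ‖D c‖) := hPc k ▸ hD k c
    _ ≤ |C k| * k := by gcongr; exact le_abs_self _
    _ = k * |C k| := mul_comm _ _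

theorem exists_continuous_of_intertwines_orthogonal [CompleteSpace E] {D : E →ₗ[𝕜] F}
    {P : ℕ → E →L[𝕜] E} {Q : ℕ → F →L[𝕜] F} (hP : ∀ j k, j ≠ k → ∀ b, P k (P j b) = 0)
    (hPQ : ∀ k, Continuous fun b => D (P k b) - Q k (D b)) :
    ∃ k, Continuous fun b => Q k (Q k (D b)) := by
  let S : ℕ → E →L[𝕜] F := fun k => ⟨D ∘ₗ (P k : E →ₗ[𝕜] E) - (Q k : F →ₗ[𝕜] F) ∘ₗ D, hPQ k⟩
  have hS : ∀ k b, S k b = D (P k b) - Q k (D b) := fun _ _ => rfl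
  have hbound : ∀ k c, ‖D (P k c)‖ ≤ (‖Q k‖ + ‖S k‖) * (‖c‖ + ‖D c‖) := fun k c =>
    calc ‖D (P k c)‖ = ‖Q k (D c) + S k c‖ := by rw [hS]; abel_nf
      _ ≤ ‖Q k‖ * ‖D c‖ + ‖S k‖ * ‖c‖ :=
        norm_add_le_of_le ((Q k).le_opNorm _) ((S k).le_opNorm _)
      _ ≤ (‖Q k‖ + ‖S k‖) * (‖c‖ + ‖D c‖) := by
        nlinarith [norm_nonneg (Q k), norm_nonneg (S k), norm_nonneg c, norm_nonneg (D c)]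
  obtain ⟨k, hk⟩ := exists_continuous_comp_of_orthogonal hP hbound
  have key : (fun b => Q k (Q k (D b))) = fun b => D (P k (P k b)) - S k (P k b) - Q k (S k b) := by
    funext b
    simp only [hS, map_sub]
    abel
  exact ⟨k, key ▸ (hk.sub (by fun_prop)).sub (by fun_prop)⟩

end GlidingHump

section BanachSteinhaus

variable {𝕜 A E F G : Type*} [NontriviallyNormedField 𝕜] [NormedAddCommGroup A] [NormedSpace 𝕜 A]
  [NormedAddCommGroup E] [NormedSpace 𝕜 E] [CompleteSpace E]
  [NormedAddCommGroup F] [NormedSpace 𝕜 F] [NormedAddCommGroup G] [NormedSpace 𝕜 G]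

theorem isClosed_setOf_continuous_comp (T : A →L[𝕜] F →L[𝕜] G) (D : E →ₗ[𝕜] F) :
    IsClosed {a | Continuous fun b => T a (D b)} := by
  refine IsSeqClosed.isClosed fun a c ha hac => ?_
  let g : ℕ → E →L[𝕜] G := fun n => ⟨(T (a n) : F →ₗ[𝕜] G) ∘ₗ D, ha n⟩
  have hg : Tendsto (fun n x => g n x) atTop (𝓝 fun b => T c (D b)) := by
    rw [tendsto_pi_nhds]
    intro b
    have hT : Continuous fun a => T a (D b) := by fun_prop
    exact (hT.tendsto c).comp hac
  exact (continuousLinearMapOfTendsto g hg).continuous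

end BanachSteinhaus

/-- `D` is a Jordan derivation from the algebra `A` into the Banach `A`-bimodule `X`, whose actions
are encoded as `l a x = a · x` and `r a x = x · a`. -/
structure IsJordanDerivation {𝕜 A X : Type*} [NontriviallyNormedField 𝕜] [NonUnitalNormedRing A]
    [NormedSpace 𝕜 A] [NormedAddCommGroup X] [NormedSpace 𝕜 X]
    (l r : A →L[𝕜] X →L[𝕜] X) (D : A →ₗ[𝕜] X) : Prop where
  left_mul : ∀ a b x, l (a * b) x = l a (l b x)
  right_mul : ∀ a b x, r (a * b) x = r b (r a x)
  comm : ∀ a b x, r b (l a x) = l a (r b x)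
  map_sq : ∀ a, D (a * a) = l a (D a) + r a (D a)

/-- A Jordan derivation into a bimodule on which `1` acts as the identity from both sides. -/
structure IsUnitalJordanDerivation {𝕜 A X : Type*} [NontriviallyNormedField 𝕜] [NormedRing A]
    [NormedSpace 𝕜 A] [NormedAddCommGroup X] [NormedSpace 𝕜 X]
    (l r : A →L[𝕜] X →L[𝕜] X) (D : A →ₗ[𝕜] X) : Prop extends IsJordanDerivation l r D where
  left_one : ∀ x, l 1 x = x
  right_one : ∀ x, r 1 x = x

section JordanTriple

variable {𝕜 A X : Type*} [NontriviallyNormedField 𝕜] [NonUnitalNormedRing A] [NormedSpace 𝕜 A]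
  [NormedAddCommGroup X] [NormedSpace 𝕜 X]

/-- The Jordan triple operator `x ↦ f · x · g + g · x · f` on a bimodule with actions
`l a x = a · x` and `r a x = x · a`. -/
noncomputable def jordanTriple (l r : A →L[𝕜] X →L[𝕜] X) (f g : A) : X →L[𝕜] X :=
  (l f).comp (r g) + (l g).comp (r f)

theorem jordanTriple_apply (l r : A →L[𝕜] X →L[𝕜] X) (f g : A) (x : X) :
    jordanTriple l r f g x = l f (r g x) + l g (r f x) := rfl

variable (𝕜) [IsScalarTower 𝕜 A A] [SMulCommClass 𝕜 A A]

/-- The Jordan triple operator `b ↦ f * b * g + g * b * f` of the algebra `A`. -/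
noncomputable abbrev jordanTripleMul (f g : A) : A →L[𝕜] A :=
  jordanTriple (ContinuousLinearMap.mul 𝕜 A) (ContinuousLinearMap.mul 𝕜 A).flip f g

theorem jordanTripleMul_apply (f g b : A) :
    jordanTripleMul 𝕜 f g b = f * b * g + g * b * f := by
  simp [jordanTriple_apply, mul_assoc]

end JordanTriple

namespace IsJordanDerivation

section Identities

variable {𝕜 A X : Type*} [NontriviallyNormedField 𝕜] [NonUnitalNormedRing A]
  [NormedSpace 𝕜 A] [NormedAddCommGroup X] [NormedSpace 𝕜 X] {l r : A →L[𝕜] X →L[𝕜] X}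
  {D : A →ₗ[𝕜] X}

theorem map_mul_add_mul (h : IsJordanDerivation l r D) (a b : A) :
    D (a * b + b * a) = l a (D b) + r b (D a) + l b (D a) + r a (D b) := by
  have expand := h.map_sq (a + b)
  have e : (a + b) * (a + b) = a * a + (a * b + b * a) + b * b := by noncomm_ring
  rw [e, map_add, map_add, h.map_sq a, h.map_sq b] at expand
  simp only [map_add, add_apply] at expand ⊢
  linear_combination (norm := module) expand

variable [CharZero 𝕜] [IsScalarTower 𝕜 A A] [SMulCommClass 𝕜 A A]

theorem map_jordanTripleMul (h : IsJordanDerivation l r D) (a b c : A) :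
    D (jordanTripleMul 𝕜 a c b) = jordanTriple l r a c (D b)
      + (l a (l b (D c)) + r c (r b (D a)) + l c (l b (D a)) + r a (r b (D c))) := by
  refine smul_right_injective _ (two_ne_zero (α := 𝕜)) ?_
  have e : (2 : 𝕜) • jordanTripleMul 𝕜 a c b =
      (a * (b * c + c * b) + (b * c + c * b) * a) + ((a * b + b * a) * c + c * (a * b + b * a))
      - ((a * c + c * a) * b + b * (a * c + c * a)) := by
    rw [jordanTripleMul_apply, two_smul]
    noncomm_ring
  simp only
  rw [← map_smul, e, map_sub, map_add, h.map_mul_add_mul a, h.map_mul_add_mul (a * b + b * a) c,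
    h.map_mul_add_mul (a * c + c * a) b, h.map_mul_add_mul a b, h.map_mul_add_mul b c,
    h.map_mul_add_mul a c]
  simp only [jordanTriple_apply, map_add, add_apply, h.left_mul, h.right_mul, h.comm]
  module

theorem continuous_map_jordanTripleMul_sub (h : IsJordanDerivation l r D) (f g : A) :
    Continuous fun b => D (jordanTripleMul 𝕜 f g b) - jordanTriple l r f g (D b) := by
  simp only [h.map_jordanTripleMul, add_sub_cancel_left]
  fun_prop

theorem continuous_map_mul_mul_self (h : IsJordanDerivation l r D) {a : A}
    (ha : Continuous fun b => l a (D b)) : Continuous fun b => D (a * b * a) := by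
  have htriple : Continuous fun b => jordanTriple l r a a (D b) := by
    simp only [jordanTriple_apply, ← h.comm]
    exact ((r a).continuous.comp ha).add ((r a).continuous.comp ha)
  have key : (fun b => D (a * b * a)) = fun b => (2 : 𝕜)⁻¹ •
      (D (jordanTripleMul 𝕜 a a b) - jordanTriple l r a a (D b) + jordanTriple l r a a (D b)) := by
    funext b
    rw [sub_add_cancel, jordanTripleMul_apply, ← two_smul 𝕜, map_smul,
      inv_smul_smul₀ two_ne_zero]
  exact key ▸ ((h.continuous_map_jordanTripleMul_sub a a).add htriple).const_smul _

end Identities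

section ContinuityIdeal

variable {𝕜 A X : Type*} [NontriviallyNormedField 𝕜] [NormedRing A] [NormedAlgebra 𝕜 A]
  [NormedAddCommGroup X] [NormedSpace 𝕜 X] {l r : A →L[𝕜] X →L[𝕜] X} {D : A →ₗ[𝕜] X}

theorem continuous_left_mul (h : IsJordanDerivation l r D) {a : A}
    (ha : Continuous fun b => l a (D b)) (c : A) : Continuous fun b => l (a * c) (D b) := by
  have key : (fun b => l (a * c) (D b)) = fun b =>
      l a (D (c * b + b * c)) - l a (r b (D c)) - l a (l b (D c)) - r c (l a (D b)) := by
    funext b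
    simp only [h.left_mul, h.map_mul_add_mul c b, map_add, h.comm]
    abel
  have hanti : Continuous fun b => l a (D (c * b + b * c)) :=
    ha.comp (f := fun b => c * b + b * c) (by fun_prop)
  exact key ▸ ((hanti.sub (by fun_prop)).sub (by fun_prop)).sub ((r c).continuous.comp ha)

theorem continuous_right_mul (h : IsJordanDerivation l r D) {a : A}
    (ha : Continuous fun b => r a (D b)) (c : A) : Continuous fun b => r (c * a) (D b) := by
  have key : (fun b => r (c * a) (D b)) = fun b =>
      r a (D (c * b + b * c)) - r a (r b (D c)) - r a (l b (D c)) - l c (r a (D b)) := by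
    funext b
    simp only [h.right_mul, h.map_mul_add_mul c b, map_add, h.comm]
    abel
  have hanti : Continuous fun b => r a (D (c * b + b * c)) :=
    ha.comp (f := fun b => c * b + b * c) (by fun_prop)
  exact key ▸ ((hanti.sub (by fun_prop)).sub (by fun_prop)).sub ((l c).continuous.comp ha)

/-- The ideal of all `a` such that `b ↦ a · D b` and `b ↦ D b · a` are continuous; it is two-sided,
and closed when `A` is complete. -/
def continuityIdeal (h : IsJordanDerivation l r D) : Ideal A where
  carrier := {a | (Continuous fun b => l a (D b)) ∧ Continuous fun b => r a (D b)}
  zero_mem' := by simp [continuous_const]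
  add_mem' ha hb := by
    simpa only [Set.mem_ofPred_eq, map_add, add_apply] using ⟨ha.1.add hb.1, ha.2.add hb.2⟩
  smul_mem' c a ha := by
    refine ⟨?_, h.continuous_right_mul ha.2 c⟩
    simpa only [smul_eq_mul, h.left_mul] using! (l c).continuous.comp ha.1

variable (h : IsJordanDerivation l r D)

theorem mem_continuityIdeal {a : A} : a ∈ h.continuityIdeal ↔
    (Continuous fun b => l a (D b)) ∧ Continuous fun b => r a (D b) := Iff.rfl

instance : h.continuityIdeal.IsTwoSided where
  mul_mem_of_left c ha := by
    refine ⟨h.continuous_left_mul ha.1 c, ?_⟩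
    simpa only [h.right_mul] using! (r c).continuous.comp ha.2

theorem isClosed_continuityIdeal [CompleteSpace A] : IsClosed (h.continuityIdeal : Set A) :=
  (isClosed_setOf_continuous_comp l D).inter (isClosed_setOf_continuous_comp r D)

end ContinuityIdeal

end IsJordanDerivation

section DisjointSequence

open Function

theorem exists_seq_mem_isOpen_pairwise_disjoint {E : Type*} [MetricSpace E] {S : Set E}
    (hS : S.Infinite) : ∃ (p : ℕ → E) (U : ℕ → Set E), (∀ n, p n ∈ S) ∧
      (∀ n, IsOpen (U n) ∧ p n ∈ U n) ∧ Pairwise (Disjoint on U) := by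
  have := hS.to_subtype
  obtain ⟨V, hV, hVo, hVd⟩ := exists_seq_infinite_isOpen_pairwise_disjoint S
  choose p hp using fun n => (hV n).nonempty
  choose δ hδ0 hδ using fun n => Metric.isOpen_iff.mp (hVo n) (p n) (hp n)
  refine ⟨fun n => p n, fun n => Metric.ball (p n : E) (δ n / 2), fun n => (p n).2,
    fun n => ⟨Metric.isOpen_ball, Metric.mem_ball_self (half_pos (hδ0 n))⟩, fun m n hmn => ?_⟩
  refine Set.disjoint_left.mpr fun x hxm hxn => ?_
  rw [Metric.mem_ball] at hxm hxn
  have hd : dist (p m) (p n) < δ m / 2 + δ n / 2 :=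
    (dist_triangle_left (p m : E) (p n) x).trans_lt (add_lt_add hxm hxn)
  rcases le_total (δ m) (δ n) with hle | hle
  · exact Set.disjoint_left.mp (hVd hmn) (hp m) (hδ n (Metric.mem_ball.mpr (by linarith)))
  · refine Set.disjoint_left.mp (hVd hmn) (hδ m (Metric.mem_ball.mpr ?_)) (hp n)
    rw [dist_comm]
    linarith

theorem exists_seq_mem_isOpen_swap_pairwise_disjoint {K : Type*} [MetricSpace K] [LinearOrder K]
    [OrderClosedTopology K] {S : Set (K × K)} (hS : S.Infinite) :
    ∃ (p : ℕ → K × K) (U : ℕ → Set (K × K)), (∀ n, p n ∈ S) ∧ (∀ n, IsOpen (U n) ∧ p n ∈ U n) ∧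
      (∀ n q, q ∈ U n → q.swap ∈ U n) ∧ Pairwise (Disjoint on U) := by
  let σ : K × K → K × K := fun q => (min q.1 q.2, max q.1 q.2)
  have hσ_cont : Continuous σ := by fun_prop
  have hσ_fiber : ∀ q ∈ σ '' S, (σ ⁻¹' {q}).Finite := fun q _ => by
    refine (Set.toFinite {q, q.swap}).subset fun x hx => ?_
    obtain rfl : σ x = q := hx
    rcases le_total x.1 x.2 with hle | hle <;> simp [σ, hle]
  have hσS : (σ '' S).Infinite := fun hfin =>
    hS ((hfin.preimage' hσ_fiber).subset (Set.subset_preimage_image σ S))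
  obtain ⟨q, V, hqS, hV, hVd⟩ := exists_seq_mem_isOpen_pairwise_disjoint hσS
  choose p hpS hpq using hqS
  refine ⟨p, fun n => σ ⁻¹' V n, hpS, fun n => ⟨(hV n).1.preimage hσ_cont, ?_⟩, fun n x hx => ?_,
    fun m n hmn => (hVd hmn).preimage σ⟩
  · simpa only [Set.mem_preimage, hpq] using (hV n).2
  · simpa only [σ, Set.mem_preimage, Prod.fst_swap, Prod.snd_swap, min_comm, max_comm] using hx

end DisjointSequence

section Bump

variable {K : Type*} [TopologicalSpace K] [NormalSpace K] [T1Space K]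

theorem exists_continuousMap_ne_zero_and_support_subset {x : K} {V : Set K} (hV : V ∈ 𝓝 x) :
    ∃ f : C(K, ℝ), f x ≠ 0 ∧ ∀ y, f y ≠ 0 → y ∈ V := by
  obtain ⟨f, hf0, hf1, -⟩ := exists_continuous_zero_one_of_isClosed
    (isOpen_interior (s := V)).isClosed_compl (isClosed_singleton (x := x))
    (Set.disjoint_singleton_right.mpr (not_not_intro (mem_interior_iff_mem_nhds.mpr hV)))
  refine ⟨f, ?_, fun y hy => interior_subset (by_contra fun hyV => hy (hf0 hyV))⟩
  simp [hf1 (Set.mem_singleton x)]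

theorem exists_continuousMap_pair_support_subset {U : Set (K × K)} {p : K × K} (hU : U ∈ 𝓝 p) :
    ∃ f g : C(K, ℝ), f p.1 ≠ 0 ∧ g p.2 ≠ 0 ∧ (∀ x y, f x ≠ 0 → g y ≠ 0 → (x, y) ∈ U) ∧
      (f * g = 0 ∨ f = g) := by
  obtain ⟨s, t⟩ := p
  obtain ⟨V, hV, W, hW, hVW⟩ := mem_nhds_prod_iff.mp hU
  rcases eq_or_ne s t with rfl | hst
  · obtain ⟨f, hfs, hf⟩ := exists_continuousMap_ne_zero_and_support_subset (inter_mem hV hW)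
    exact ⟨f, f, hfs, hfs, fun x y hx hy => hVW ⟨(hf x hx).1, (hf y hy).2⟩, .inr rfl⟩
  · obtain ⟨V', W', hV', hW', hdisj⟩ := t2_separation_nhds hst
    obtain ⟨f, hfs, hf⟩ := exists_continuousMap_ne_zero_and_support_subset (inter_mem hV hV')
    obtain ⟨g, hgt, hg⟩ := exists_continuousMap_ne_zero_and_support_subset (inter_mem hW hW')
    refine ⟨f, g, hfs, hgt, fun x y hx hy => hVW ⟨(hf x hx).1, (hg y hy).1⟩, .inl ?_⟩
    ext x
    by_contra hx
    obtain ⟨hfx, hgx⟩ := mul_ne_zero_iff.mp hx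
    exact Set.disjoint_left.mp hdisj (hf x hfx).2 (hg x hgx).2

end Bump

section JointSupport

variable {𝕜 K E X : Type*} [NontriviallyNormedField 𝕜] [TopologicalSpace K] [TopologicalSpace E]
  [NormedAddCommGroup X] [NormedSpace 𝕜 X]

/-- The joint support of a map `G : E → X` with respect to two representations `L`, `R` of `C(K, ℝ)`
on `X`: the points `(s, t)` at which every tensor `f ⊗ g` such that `L f ∘ R g ∘ G` is continuous
vanishes. -/
def jointSupport (L R : C(K, ℝ) →+* (X →L[𝕜] X)) (G : E → X) : Set (K × K) :=
  {p | ∀ f g, (Continuous fun b => L f (R g (G b))) → f p.1 = 0 ∨ g p.2 = 0}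

theorem jointSupport_swap {L R : C(K, ℝ) →+* (X →L[𝕜] X)} (hLR : ∀ f g, Commute (L f) (R g))
    (G : E → X) : jointSupport R L G = Prod.swap ⁻¹' jointSupport L R G := by
  have hcomm : ∀ f g x, R g (L f x) = L f (R g x) := fun f g => DFunLike.congr_fun (hLR f g).symm
  ext p
  simp only [jointSupport, Set.mem_preimage, Set.mem_ofPred_eq, hcomm, Prod.fst_swap,
    Prod.snd_swap]
  exact ⟨fun hp f g hfg => (hp g f hfg).symm, fun hp f g hfg => (hp g f hfg).symm⟩

/-- The ideal of all `g` for which `R g ∘ G` is continuous. -/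
def representationContinuityIdeal (R : C(K, ℝ) →+* (X →L[𝕜] X)) (G : E → X) : Ideal C(K, ℝ) where
  carrier := {g | Continuous fun b => R g (G b)}
  zero_mem' := by simp [continuous_const]
  add_mem' hf hg := by simpa only [Set.mem_ofPred_eq, map_add, add_apply] using! hf.add hg
  smul_mem' c g hg := by
    simp only [smul_eq_mul, Set.mem_ofPred_eq, map_mul]
    exact (R c).continuous.comp hg

theorem mem_representationContinuityIdeal {R : C(K, ℝ) →+* (X →L[𝕜] X)} {G : E → X} {g : C(K, ℝ)} :
    g ∈ representationContinuityIdeal R G ↔ Continuous fun b => R g (G b) := Iff.rfl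

variable [CompactSpace K] [T2Space K]

theorem exists_ne_zero_and_one_mem {C : C(K, ℝ) → Ideal C(K, ℝ)}
    (hC : ∀ f f', C f ≤ C (f * f')) {s : K}
    (hs : ∀ t, ∃ f g : C(K, ℝ), f s ≠ 0 ∧ g ∈ C f ∧ g t ≠ 0) : ∃ f, f s ≠ 0 ∧ 1 ∈ C f := by
  let N : Ideal C(K, ℝ) :=
    { carrier := {g | ∃ f, f s ≠ 0 ∧ g ∈ C f}
      zero_mem' := ⟨1, one_ne_zero, (C 1).zero_mem⟩
      add_mem' := by
        rintro g g' ⟨f, hf, hg⟩ ⟨f', hf', hg'⟩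
        exact ⟨f * f', mul_ne_zero hf hf', add_mem (hC f f' hg) (mul_comm f f' ▸ hC f' f hg')⟩
      smul_mem' := by
        rintro c g ⟨f, hf, hg⟩
        exact ⟨f, hf, (C f).mul_mem_left c hg⟩ }
  by_contra hN
  obtain ⟨M, hM, hNM⟩ := N.exists_le_maximal ((Ideal.ne_top_iff_one N).mpr hN)
  obtain ⟨t, ht⟩ := ContinuousMap.setOfIdeal_eq_compl_singleton M
  obtain ⟨f, g, hf, hg, hgt⟩ := hs t
  have htM : t ∉ ContinuousMap.setOfIdeal M := by simp [ht]
  exact hgt (ContinuousMap.notMem_setOfIdeal.mp htM (hNM ⟨f, hf, hg⟩))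

theorem exists_continuous_of_notMem_fst_jointSupport {L R : C(K, ℝ) →+* (X →L[𝕜] X)}
    (hLR : ∀ f g, Commute (L f) (R g)) {G : E → X} {s : K}
    (hs : s ∉ Prod.fst '' jointSupport L R G) :
    ∃ f, f s ≠ 0 ∧ Continuous fun b => L f (G b) := by
  have hcomm : ∀ f g x, R g (L f x) = L f (R g x) := fun f g => DFunLike.congr_fun (hLR f g).symm
  obtain ⟨f, hfs, hf⟩ := exists_ne_zero_and_one_mem
    (C := fun f => representationContinuityIdeal R fun b => L f (G b)) (s := s)
    (fun f f' g hg => by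
      rw [mem_representationContinuityIdeal] at hg ⊢
      simp only [mul_comm f f', map_mul, mul_apply_eq_comp, hcomm] at hg ⊢
      exact (L f').continuous.comp hg)
    (fun t => by
      have hst : (s, t) ∉ jointSupport L R G := fun h => hs ⟨_, h, rfl⟩
      simp only [jointSupport, Set.mem_ofPred_eq, not_forall, not_or] at hst
      obtain ⟨f, g, hfg, hf, hg⟩ := hst
      exact ⟨f, g, hf, by simpa only [mem_representationContinuityIdeal, hcomm] using hfg, hg⟩)
  exact ⟨f, hfs, by simpa [mem_representationContinuityIdeal] using hf⟩

end JointSupport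

namespace IsUnitalJordanDerivation

section Representations

variable {𝕜 K A X : Type*} [NontriviallyNormedField 𝕜] [TopologicalSpace K]
  [NormedRing A] [NormedAlgebra 𝕜 A]
  [NormedAddCommGroup X] [NormedSpace 𝕜 X] {l r : A →L[𝕜] X →L[𝕜] X} {D : A →ₗ[𝕜] X}

/-- The representation of `C(K, ℝ)` on the bimodule induced by a homomorphism into `A` and the left
action. -/
def leftRepresentation (h : IsUnitalJordanDerivation l r D) (φ : C(K, ℝ) →+* A) :
    C(K, ℝ) →+* (X →L[𝕜] X) where
  toFun f := l (φ f)
  map_one' := by ext x; simp [h.left_one]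
  map_mul' f g := by ext x; simp [h.left_mul]
  map_zero' := by simp
  map_add' f g := by simp

/-- The representation of `C(K, ℝ)` on the bimodule induced by a homomorphism into `A` and the
right action. -/
def rightRepresentation (h : IsUnitalJordanDerivation l r D) (φ : C(K, ℝ) →+* A) :
    C(K, ℝ) →+* (X →L[𝕜] X) where
  toFun f := r (φ f)
  map_one' := by ext x; simp [h.right_one]
  map_mul' f g := by ext x; simp [mul_comm f g, h.right_mul]
  map_zero' := by simp
  map_add' f g := by simp

variable (h : IsUnitalJordanDerivation l r D) (φ : C(K, ℝ) →+* A)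

theorem commute_representation (f g : C(K, ℝ)) :
    Commute (h.leftRepresentation φ f) (h.rightRepresentation φ g) := by
  ext x
  exact (h.comm _ _ x).symm

theorem jordanTriple_eq (f g : C(K, ℝ)) : jordanTriple l r (φ f) (φ g) =
    h.leftRepresentation φ f * h.rightRepresentation φ g +
      h.leftRepresentation φ g * h.rightRepresentation φ f := rfl

end Representations

end IsUnitalJordanDerivation

theorem continuousMap_eq_zero_or_eq_zero {K : Type*} [TopologicalSpace K] {u v : C(K, ℝ)}
    (h : ∀ x y, u x ≠ 0 → v y = 0) : u = 0 ∨ v = 0 := by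
  by_cases hu : u = 0
  · exact .inl hu
  · obtain ⟨x, hx⟩ := DFunLike.ne_iff.mp hu
    exact .inr (ContinuousMap.ext fun y => h x y hx)

theorem jordanTripleMul_jordanTripleMul_eq_zero {𝕜 C A : Type*} [NontriviallyNormedField 𝕜]
    [CommRing C] [NormedRing A] [NormedAlgebra 𝕜 A] (φ : C →+* A) {f g f' g' : C}
    (h : f * f' = 0 ∨ g * g' = 0) (h' : f * g' = 0 ∨ f' * g = 0) (b : A) :
    jordanTripleMul 𝕜 (φ f) (φ g) (jordanTripleMul 𝕜 (φ f') (φ g') b) = 0 := by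
  have expand : jordanTripleMul 𝕜 (φ f) (φ g) (jordanTripleMul 𝕜 (φ f') (φ g') b) =
      φ (f * f') * b * φ (g' * g) + φ (f * g') * b * φ (f' * g)
      + φ (g * f') * b * φ (g' * f) + φ (g * g') * b * φ (f' * f) := by
    simp only [jordanTripleMul_apply, map_mul]
    noncomm_ring
  rw [expand, mul_comm g' g, mul_comm g f', mul_comm g' f, mul_comm f' f]
  rcases h with h | h <;> rcases h' with h' | h' <;> simp [h, h']

-- Multiplying the square of the triple operator by `L f * R g` removes the cross terms.
theorem notMem_jointSupport_of_continuous {𝕜 K E X : Type*} [NontriviallyNormedField 𝕜]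
    [TopologicalSpace K] [TopologicalSpace E] [NormedAddCommGroup X] [NormedSpace 𝕜 X]
    {L R : C(K, ℝ) →+* (X →L[𝕜] X)} (hLR : ∀ f g, Commute (L f) (R g)) {G : E → X}
    {f g : C(K, ℝ)} (hfg : f * g = 0 ∨ f = g)
    (hG : Continuous fun b => ((L f * R g + L g * R f) ^ 2) (G b)) {p : K × K}
    (hf : f p.1 ≠ 0) (hg : g p.2 ≠ 0) : p ∉ jointSupport L R G := by
  obtain ⟨n, hn, key⟩ : ∃ n : ℕ, n ≠ 0 ∧
      L f * R g * (L f * R g + L g * R f) ^ 2 = L (n * f ^ 3) * R (g ^ 3) := by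
    have hcube : (L f * R g) ^ 3 = L (f ^ 3) * R (g ^ 3) := by
      rw [(hLR f g).mul_pow, map_pow, map_pow]
    rcases hfg with hfg | rfl
    · have hcross : L f * R g * (L g * R f) = 0 := by
        rw [mul_assoc, ← mul_assoc (R g), ← (hLR g g).eq, mul_assoc, ← mul_assoc, ← map_mul, hfg,
          map_zero, zero_mul]
      refine ⟨1, one_ne_zero, ?_⟩
      rw [Nat.cast_one, one_mul, ← hcube, sq, ← mul_assoc, mul_add (L f * R g), hcross, add_zero,
        mul_assoc, mul_add (L f * R g), hcross, add_zero, pow_succ', sq]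
    · refine ⟨4, four_ne_zero, ?_⟩
      rw [map_mul, map_natCast, mul_assoc (Nat.cast 4), ← hcube, ← nsmul_eq_mul]
      noncomm_ring
  intro hp
  have hzero := hp (n * f ^ 3) (g ^ 3) <| by
    simpa only [← mul_apply_eq_comp, ← key] using! (L f * R g).continuous.comp hG
  simp [hn, hf, hg] at hzero

namespace IsUnitalJordanDerivation

section FiniteSupport

variable {𝕜 K A X : Type*} [RCLike 𝕜] [MetricSpace K] [LinearOrder K]
  [OrderClosedTopology K] [NormedRing A] [NormedAlgebra 𝕜 A] [CompleteSpace A]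
  [NormedAddCommGroup X] [NormedSpace 𝕜 X] {l r : A →L[𝕜] X →L[𝕜] X} {D : A →ₗ[𝕜] X}

theorem finite_jointSupport (h : IsUnitalJordanDerivation l r D) (φ : C(K, ℝ) →+* A) :
    (jointSupport (h.leftRepresentation φ) (h.rightRepresentation φ) D).Finite := by
  by_contra hinf
  obtain ⟨p, U, hp, hU, hswap, hdisj⟩ := exists_seq_mem_isOpen_swap_pairwise_disjoint hinf
  choose f g hf hg hfgU hfg using fun n =>
    exists_continuousMap_pair_support_subset ((hU n).1.mem_nhds (hU n).2)
  have horth : ∀ j k, j ≠ k → ∀ b, jordanTripleMul 𝕜 (φ (f k)) (φ (g k))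
      (jordanTripleMul 𝕜 (φ (f j)) (φ (g j)) b) = 0 := fun j k hjk b => by
    refine jordanTripleMul_jordanTripleMul_eq_zero φ
      (continuousMap_eq_zero_or_eq_zero fun x y hx => by_contra fun hy => ?_)
      (continuousMap_eq_zero_or_eq_zero fun x y hx => by_contra fun hy => ?_) b <;>
    obtain ⟨hx, hx'⟩ := mul_ne_zero_iff.mp hx <;> obtain ⟨hy, hy'⟩ := mul_ne_zero_iff.mp hy
    · exact Set.disjoint_left.mp (hdisj hjk) (hfgU j x y hx' hy') (hfgU k x y hx hy)
    · exact Set.disjoint_left.mp (hdisj hjk) (hswap j _ (hfgU j y x hy hx')) (hfgU k x y hx hy')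
  obtain ⟨n, hn⟩ := exists_continuous_of_intertwines_orthogonal horth fun k =>
    h.continuous_map_jordanTripleMul_sub (φ (f k)) (φ (g k))
  refine notMem_jointSupport_of_continuous (h.commute_representation φ) (hfg n) ?_ (hf n) (hg n)
    (hp n)
  simpa only [sq, mul_apply_eq_comp, ← h.jordanTriple_eq] using hn

theorem exists_finset_forall_map_mem_continuityIdeal [CompactSpace K]
    (h : IsUnitalJordanDerivation l r D) (φ : C(K, ℝ) →+* A) (hφ : Continuous φ) :
    ∃ R : Finset K, ∀ f : C(K, ℝ), (∀ x ∈ R, f x = 0) → φ f ∈ h.continuityIdeal := by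
  classical
  have hfin := h.finite_jointSupport φ
  set S := jointSupport (h.leftRepresentation φ) (h.rightRepresentation φ) D
  let I : Ideal C(K, ℝ) := h.continuityIdeal.comap φ
  have hI : IsClosed (I : Set C(K, ℝ)) := h.isClosed_continuityIdeal.preimage hφ
  refine ⟨(hfin.image Prod.fst).toFinset ∪ (hfin.image Prod.snd).toFinset, fun f hf => ?_⟩
  suffices f ∈ I from this
  rw [← ContinuousMap.idealOfSet_ofIdeal_isClosed hI, ContinuousMap.mem_idealOfSet]
  intro s hs
  by_contra hfs
  have hsR : s ∉ Prod.fst '' S ∧ s ∉ Prod.snd '' S := by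
    simpa only [Finset.mem_union, Set.Finite.mem_toFinset, not_or] using mt (hf s) hfs
  have hcomm := h.commute_representation φ
  obtain ⟨f₁, hf₁s, hf₁⟩ := exists_continuous_of_notMem_fst_jointSupport hcomm hsR.1
  obtain ⟨f₂, hf₂s, hf₂⟩ := exists_continuous_of_notMem_fst_jointSupport
    (fun f g => (hcomm g f).symm) (G := D) (s := s) (by
      rw [jointSupport_swap hcomm]
      rintro ⟨p, hp, rfl⟩
      exact hsR.2 ⟨p.swap, hp, rfl⟩)
  have hmem : f₁ * f₂ ∈ I := by
    refine h.mem_continuityIdeal.mpr ⟨?_, ?_⟩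
    · rw [map_mul]
      exact h.continuous_left_mul hf₁ _
    · rw [map_mul]
      exact h.continuous_right_mul hf₂ _
  exact mul_ne_zero hf₁s hf₂s (ContinuousMap.notMem_setOfIdeal.mp hs hmem)

end FiniteSupport

theorem exists_aeval_nodal_mem_continuityIdeal {A X : Type*} [CStarAlgebra A]
    [NormedAddCommGroup X] [NormedSpace ℂ X] {l r : A →L[ℂ] X →L[ℂ] X} {D : A →ₗ[ℂ] X}
    (h : IsUnitalJordanDerivation l r D) {a : A} (ha : IsSelfAdjoint a) :
    ∃ R : Finset ℝ, aeval a (Lagrange.nodal R (id : ℝ → ℝ)) ∈ h.continuityIdeal := by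
  classical
  obtain ⟨R, hR⟩ := h.exists_finset_forall_map_mem_continuityIdeal
    (cfcHom (R := ℝ) ha : C(spectrum ℝ a, ℝ) →+* A) (cfcHom_continuous ha)
  refine ⟨R.image (↑), ?_⟩
  rw [← cfc_polynomial _ a ha, cfc_apply _ a ha (Polynomial.continuous _).continuousOn]
  exact hR _ fun x hx => Lagrange.eval_nodal_at_node (v := id) (Finset.mem_image_of_mem _ hx)

end IsUnitalJordanDerivation

section FiniteDimension

theorem aeval_mul_of_mul_eq_smul {R Q : Type*} [CommSemiring R] [Semiring Q] [Algebra R Q]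
    {x e : Q} {t : R} (h : x * e = t • e) (g : R[X]) : aeval x g * e = g.eval t • e := by
  induction g using Polynomial.induction_on with
  | C c => rw [aeval_C, eval_C, Algebra.smul_def]
  | add g g' hg hg' => rw [map_add, eval_add, add_mul, add_smul, hg, hg']
  | monomial n c ih =>
    rw [pow_succ, ← mul_assoc, map_mul, aeval_X, mul_assoc, h, mul_smul_comm, ih, smul_smul,
      mul_comm, eval_mul_X]

theorem commute_aeval_of_commute {R Q : Type*} [CommSemiring R] [Semiring Q] [Algebra R Q]
    {x y : Q} (h : Commute x y) (g : R[X]) : Commute (aeval x g) y := by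
  induction g using Polynomial.induction_on' with
  | add g g' hg hg' => simpa using hg.add_left hg'
  | monomial n c =>
    rw [aeval_monomial]
    exact (Algebra.commute_algebraMap_left c y).mul_left (h.pow_left n)

section Lagrange

variable {F Q : Type*} [Field F] [DecidableEq F] [Ring Q] [Algebra F Q] {x : Q} {R : Finset F}

theorem mul_aeval_basis (hR : aeval x (Lagrange.nodal R id) = 0) {t : F} (ht : t ∈ R) :
    x * aeval x (Lagrange.basis R id t) = t • aeval x (Lagrange.basis R id t) := by
  have hdvd : (X - C t) * Lagrange.basis R id t =
      C (Lagrange.nodalWeight R id t) * Lagrange.nodal R id := by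
    rw [Lagrange.basis_eq_prod_sub_inv_mul_nodal_div ht, ← Lagrange.nodal_erase_eq_nodal_div ht,
      Lagrange.nodal_eq_mul_nodal_erase ht, mul_left_comm, id]
  have hzero := congrArg (aeval x) hdvd
  rwa [map_mul, map_mul, hR, mul_zero, map_sub, aeval_X, aeval_C, sub_mul, sub_eq_zero,
    ← Algebra.smul_def] at hzero

theorem isIdempotentElem_aeval_basis (hR : aeval x (Lagrange.nodal R id) = 0) {t : F}
    (ht : t ∈ R) : IsIdempotentElem (aeval x (Lagrange.basis R id t)) := by
  have heval : (Lagrange.basis R id t).eval t = 1 :=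
    Lagrange.eval_basis_self (Set.injOn_id _) ht
  rw [IsIdempotentElem, aeval_mul_of_mul_eq_smul (mul_aeval_basis hR ht), heval, one_smul]

theorem sum_smul_aeval_basis (hR : aeval x (Lagrange.nodal R id) = 0) :
    ∑ t ∈ R, t • aeval x (Lagrange.basis R id t) = x := by
  rcases R.eq_empty_or_nonempty with rfl | hne
  · have : Subsingleton Q := subsingleton_of_zero_eq_one (by simpa using hR.symm)
    exact Subsingleton.elim _ _
  · rw [← Finset.sum_congr rfl fun t ht => mul_aeval_basis hR ht, ← Finset.mul_sum, ← map_sum,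
      Lagrange.sum_basis (Set.injOn_id _) hne, map_one, mul_one]

end Lagrange

theorem orthogonalIdempotents_sub_succ {Q : Type*} [Ring Q] {e : ℕ → Q}
    (he : ∀ n, IsIdempotentElem (e n)) (hle : ∀ n, e n * e (n + 1) = e (n + 1))
    (hle' : ∀ n, e (n + 1) * e n = e (n + 1)) :
    OrthogonalIdempotents fun n => e n - e (n + 1) := by
  have hmul : ∀ {m n}, m ≤ n → e m * e n = e n ∧ e n * e m = e n := fun {m n} hmn => by
    induction n, hmn using Nat.le_induction with
    | base => exact ⟨he m, he m⟩
    | succ n _ ih =>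
      exact ⟨by rw [← hle n, ← mul_assoc, ih.1], by rw [← hle' n, mul_assoc, ih.2]⟩
  have horth : ∀ {m n}, m < n → (e m - e (m + 1)) * (e n - e (n + 1)) = 0 ∧
      (e n - e (n + 1)) * (e m - e (m + 1)) = 0 := fun {m n} hmn => by
    simp only [sub_mul, mul_sub, hmul hmn.le, hmul (Nat.succ_le_of_lt hmn),
      hmul (Nat.le_succ_of_le hmn.le), hmul (Nat.succ_le_succ hmn.le), sub_self, and_self]
  refine ⟨fun n => ?_, fun m n hmn => ?_⟩
  · simp only [IsIdempotentElem, sub_mul, mul_sub, (he _).eq, hle, hle', sub_self, sub_zero]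
  · rcases hmn.lt_or_gt with h | h
    · exact (horth h).1
    · exact (horth h).2

section MinimalIdempotents

variable {K Q : Type*} [Field K] [Ring Q] [Algebra K Q]

variable (K Q) in
/-- The idempotents `m` of the algebra `Q` with `m Q m = K m`; zero is included. -/
def minimalIdempotents : Set Q :=
  {m | IsIdempotentElem m ∧ ∀ q, m * q * m ∈ Submodule.span K {m}}

theorem exists_corner_subset_span_singleton (hQ : ∀ x : Q, (∀ y, x * y * x = 0) → x = 0) {m n : Q}
    (hm : m ∈ minimalIdempotents K Q) (hn : n ∈ minimalIdempotents K Q) :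
    ∃ x : Q, ∀ q, m * q * n ∈ Submodule.span K {x} := by
  by_cases hzero : ∀ q, m * q * n = 0
  · exact ⟨0, fun q => by simp [hzero q]⟩
  push Not at hzero
  obtain ⟨q₀, hq₀⟩ := hzero
  obtain ⟨y, hy⟩ : ∃ y, m * q₀ * n * y * (m * q₀ * n) ≠ 0 := by
    by_contra! h
    exact hq₀ (hQ _ h)
  refine ⟨m * q₀ * n, fun q => ?_⟩
  obtain ⟨ν, hν⟩ := Submodule.mem_span_singleton.mp (hn.2 (y * m * q₀))
  obtain ⟨μ, hμ⟩ := Submodule.mem_span_singleton.mp (hm.2 (q * n * y))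
  have hν0 : ν ≠ 0 := by
    rintro rfl
    apply hy
    calc m * q₀ * n * y * (m * q₀ * n) = m * q₀ * (n * n) * y * (m * q₀ * n) := by rw [hn.1.eq]
      _ = m * q₀ * n * (n * (y * m * q₀) * n) := by noncomm_ring
      _ = 0 := by rw [← hν, zero_smul, mul_zero]
  have key : ν • (m * q * n) = μ • (m * q₀ * n) := by
    calc ν • (m * q * n) = m * q * (ν • n) := by rw [mul_smul_comm]
      _ = m * q * (n * (y * m * q₀) * n) := by rw [hν]
      _ = m * m * q * n * y * (m * m) * q₀ * n := by rw [hm.1.eq]; noncomm_ring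
      _ = m * (m * (q * n * y) * m) * m * q₀ * n := by noncomm_ring
      _ = μ • (m * q₀ * n) := by simp only [← hμ, mul_smul_comm, smul_mul_assoc, hm.1.eq]
  refine Submodule.mem_span_singleton.mpr ⟨ν⁻¹ * μ, ?_⟩
  rw [mul_smul, ← key, inv_smul_smul₀ hν0]

theorem finite_of_one_mem_span_minimalIdempotents (hQ : ∀ x : Q, (∀ y, x * y * x = 0) → x = 0)
    (hone : (1 : Q) ∈ Submodule.span K (minimalIdempotents K Q)) : Module.Finite K Q := by
  obtain ⟨T, hT, hTone⟩ := Submodule.mem_span_finite_of_mem_span hone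
  choose! x hx using fun (m : Q) (hm : m ∈ minimalIdempotents K Q) (n : Q)
    (hn : n ∈ minimalIdempotents K Q) => exists_corner_subset_span_singleton hQ hm hn
  refine Module.finite_def.mpr (Submodule.fg_def.mpr ⟨Set.image2 x T T,
    T.finite_toSet.image2 _ T.finite_toSet, eq_top_iff.mpr fun b _ => ?_⟩)
  have hleft : ∀ m ∈ T, ∀ v ∈ Submodule.span K (T : Set Q),
      m * b * v ∈ Submodule.span K (Set.image2 x T T) := by
    intro m hm v hv
    induction hv using Submodule.span_induction with
    | mem n hn =>
      refine Submodule.span_mono ?_ (hx m (hT hm) n (hT hn) b)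
      exact Set.singleton_subset_iff.mpr (Set.mem_image2_of_mem hm hn)
    | zero => simp
    | add v w _ _ h h' => rw [mul_add]; exact add_mem h h'
    | smul c v _ h => rw [mul_smul_comm]; exact Submodule.smul_mem _ _ h
  have hboth : ∀ u ∈ Submodule.span K (T : Set Q),
      u * b * 1 ∈ Submodule.span K (Set.image2 x T T) := by
    intro u hu
    induction hu using Submodule.span_induction with
    | mem m hm => exact hleft m hm 1 hTone
    | zero => simp
    | add v w _ _ h h' => rw [add_mul, add_mul]; exact add_mem h h'
    | smul c v _ h => rw [smul_mul_assoc, smul_mul_assoc]; exact Submodule.smul_mem _ _ h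
  simpa using hboth 1 hTone

end MinimalIdempotents

section JordanSubspace

variable {F Q : Type*} [Field F] [Ring Q] [Algebra F Q] {H : Submodule F Q}

theorem aeval_mem_of_mul_mul_mem (hone : 1 ∈ H) (htriple : ∀ x ∈ H, ∀ y ∈ H, x * y * x ∈ H)
    {x : Q} (hx : x ∈ H) (g : F[X]) : aeval x g ∈ H := by
  have hpow : ∀ n : ℕ, x ^ n ∈ H := by
    intro n
    induction n using Nat.twoStepInduction with
    | zero => simpa using hone
    | one => simpa using hx
    | more n ih _ => simpa [pow_succ' x (n + 1), pow_succ x n, mul_assoc] using htriple x hx _ ih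
  rw [aeval_eq_sum_range]
  exact H.sum_mem fun n _ => H.smul_mem _ (hpow n)

variable {K : Type*} [Field K] [Algebra F K] [Algebra K Q] [IsScalarTower F K Q]

theorem exists_isIdempotentElem_lt_of_notMem_minimalIdempotents (hone : 1 ∈ H)
    (htriple : ∀ x ∈ H, ∀ y ∈ H, x * y * x ∈ H) (hspan : Submodule.span K (H : Set Q) = ⊤)
    (halg : ∀ x ∈ H, ∃ R : Finset F, aeval x (Lagrange.nodal R id) = 0)
    {p : Q} (hpH : p ∈ H) (hp : IsIdempotentElem p) (hmin : p ∉ minimalIdempotents K Q) :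
    ∃ q ∈ H, IsIdempotentElem q ∧ p * q = q ∧ q * p = q ∧ q ≠ 0 ∧ q ≠ p := by
  classical
  obtain ⟨a, haH, ha⟩ : ∃ a ∈ H, p * a * p ∉ Submodule.span K {p} := by
    by_contra! hcorner
    refine hmin ⟨hp, fun q => ?_⟩
    have hq : q ∈ Submodule.span K (H : Set Q) := hspan ▸ Submodule.mem_top
    induction hq using Submodule.span_induction with
    | mem a ha => exact hcorner a ha
    | zero => simp
    | add v w _ _ hv hw => rw [mul_add, add_mul]; exact add_mem hv hw
    | smul c v _ hv => rw [mul_smul_comm, smul_mul_assoc]; exact Submodule.smul_mem _ _ hv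
  set x := p * a * p
  have hxH : x ∈ H := htriple p hpH a haH
  have hpx : p * x = x := by rw [← mul_assoc, ← mul_assoc, hp.eq]
  have hxp : x * p = x := by rw [mul_assoc, hp.eq]
  obtain ⟨R, hR⟩ := halg x hxH
  let E : F → Q := fun t => aeval x (Lagrange.basis R id t)
  have hcomm : ∀ t, Commute (E t) p := fun t => commute_aeval_of_commute (hxp.trans hpx.symm) _
  obtain ⟨t, htR, ht⟩ : ∃ t ∈ R, ¬(p * E t = 0 ∨ p * E t = p) := by
    by_contra! htrivial
    refine ha ?_
    rw [← hpx, ← sum_smul_aeval_basis hR, Finset.mul_sum]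
    refine Submodule.sum_mem _ fun t ht => ?_
    rw [mul_smul_comm]
    refine Submodule.smul_of_tower_mem _ t ?_
    rcases htrivial t ht with h | h <;> rw [show p * aeval x (Lagrange.basis R id t) = _ from h]
    · exact zero_mem _
    · exact Submodule.mem_span_singleton_self p
  rw [not_or] at ht
  refine ⟨p * E t, ?_, ?_, ?_, ?_, ht⟩
  · have hcorner : p * E t = p * E t * p := by rw [mul_assoc, (hcomm t).eq, ← mul_assoc, hp.eq]
    rw [hcorner]
    exact htriple p hpH _ (aeval_mem_of_mul_mul_mem hone htriple hxH _)
  · exact hp.mul_of_commute (hcomm t).symm (isIdempotentElem_aeval_basis hR htR)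
  · rw [← mul_assoc, hp.eq]
  · rw [mul_assoc, (hcomm t).eq, ← mul_assoc, hp.eq]

theorem mem_span_minimalIdempotents_of_isIdempotentElem (hone : 1 ∈ H)
    (htriple : ∀ x ∈ H, ∀ y ∈ H, x * y * x ∈ H) (hspan : Submodule.span K (H : Set Q) = ⊤)
    (halg : ∀ x ∈ H, ∃ R : Finset F, aeval x (Lagrange.nodal R id) = 0)
    (hseq : ∀ e : ℕ → Q, (∀ n, e n ∈ H) → OrthogonalIdempotents e → ∃ n, e n = 0)
    {p : Q} (hpH : p ∈ H) (hp : IsIdempotentElem p) :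
    p ∈ Submodule.span K (minimalIdempotents K Q) := by
  let P := {p : Q // p ∈ H ∧ IsIdempotentElem p}
  let below : P → P → Prop := fun q p => p.1 * q.1 = q.1 ∧ q.1 * p.1 = q.1 ∧ q ≠ p
  have hwf : WellFounded below := by
    refine wellFounded_iff_isEmpty_descending_chain.mpr ⟨fun ⟨s, hs⟩ => ?_⟩
    obtain ⟨n, hn⟩ := hseq _ (fun n => H.sub_mem (s n).2.1 (s (n + 1)).2.1) <|
      orthogonalIdempotents_sub_succ (fun n => (s n).2.2) (fun n => (hs n).1) fun n => (hs n).2.1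
    exact (hs n).2.2 (Subtype.ext (sub_eq_zero.mp hn).symm)
  suffices ∀ p : P, p.1 ∈ Submodule.span K (minimalIdempotents K Q) from this ⟨p, hpH, hp⟩
  intro p
  induction p using hwf.induction with
  | h p ih =>
    obtain ⟨p, hpH, hp⟩ := p
    by_cases hmin : p ∈ minimalIdempotents K Q
    · exact Submodule.subset_span hmin
    obtain ⟨q, hqH, hq, hpq, hqp, hq0, hqne⟩ :=
      exists_isIdempotentElem_lt_of_notMem_minimalIdempotents hone htriple hspan halg hpH hp hmin
    have hq' : IsIdempotentElem (p - q) := by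
      simp only [IsIdempotentElem, sub_mul, mul_sub, hp.eq, hq.eq, hpq, hqp, sub_self, sub_zero]
    change p ∈ _
    rw [← add_sub_cancel q p]
    refine add_mem (ih ⟨q, hqH, hq⟩ ⟨hpq, hqp, ?_⟩)
      (ih ⟨p - q, H.sub_mem hpH hqH, hq'⟩ ⟨?_, ?_, ?_⟩)
    · exact hqne ∘ congrArg Subtype.val
    · simp only [mul_sub, hp.eq, hpq]
    · simp only [sub_mul, hp.eq, hqp]
    · exact fun h => hq0 (sub_eq_self.mp (congrArg Subtype.val h))

theorem finite_of_forall_aeval_nodal_eq_zero (hone : 1 ∈ H)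
    (htriple : ∀ x ∈ H, ∀ y ∈ H, x * y * x ∈ H) (hspan : Submodule.span K (H : Set Q) = ⊤)
    (halg : ∀ x ∈ H, ∃ R : Finset F, aeval x (Lagrange.nodal R id) = 0)
    (hseq : ∀ e : ℕ → Q, (∀ n, e n ∈ H) → OrthogonalIdempotents e → ∃ n, e n = 0)
    (hQ : ∀ x : Q, (∀ y, x * y * x = 0) → x = 0) : Module.Finite K Q :=
  finite_of_one_mem_span_minimalIdempotents hQ <|
    mem_span_minimalIdempotents_of_isIdempotentElem hone htriple hspan halg hseq hone
      IsIdempotentElem.one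

end JordanSubspace

end FiniteDimension

section ClosedIdeal

variable {A : Type*} [CStarAlgebra A]

theorem cfcₙ_mem_of_mem {J : Ideal A} (hJ : IsClosed (J : Set A)) {b : A} (hb : b ∈ J)
    (f : ℝ → ℝ) : cfcₙ f b ∈ J := by
  by_cases hsa : IsSelfAdjoint b
  · have hadjoin : (NonUnitalStarAlgebra.adjoin ℝ {b} : Set A) ⊆ J := fun x hx => by
      rw [SetLike.mem_coe, ← NonUnitalStarSubalgebra.mem_toNonUnitalSubalgebra,
        NonUnitalStarAlgebra.adjoin_toNonUnitalSubalgebra, Set.star_singleton, hsa.star_eq,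
        Set.union_self] at hx
      induction hx using NonUnitalAlgebra.adjoin_induction with
      | mem x hx => exact Set.mem_singleton_iff.mp hx ▸ hb
      | add x y _ _ hx hy => exact J.add_mem hx hy
      | zero => exact J.zero_mem
      | mul x y _ _ _ hy => exact J.mul_mem_left x hy
      | smul c x _ hx => exact J.smul_of_tower_mem c hx
    exact closure_minimal hadjoin hJ (cfcₙ_mem_elemental f b)
  · rw [cfcₙ_apply_of_not_predicate b hsa]
    exact J.zero_mem

theorem norm_mul_le_norm_mul_of_mul_star_le [PartialOrder A] [StarOrderedRing A] {a w : A}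
    (h : a * star a ≤ w * star w) (z : A) : ‖z * a‖ ≤ ‖z * w‖ := by
  rw [mul_self_le_mul_self_iff (norm_nonneg _) (norm_nonneg _), ← CStarRing.norm_self_mul_star,
    ← CStarRing.norm_self_mul_star]
  refine CStarAlgebra.norm_le_norm_of_nonneg_of_le (mul_star_self_nonneg _) ?_
  simpa only [star_mul, mul_assoc] using star_right_conjugate_le_conjugate h z

section FourthRoot

variable [PartialOrder A] [StarOrderedRing A]

theorem norm_cfc_mul_le_of_mul_star_le_pow_four {a y : A} (hy : 0 ≤ y) (h : a * star a ≤ y ^ 4)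
    {f : ℝ → ℝ} (hf : ContinuousOn f (spectrum ℝ y)) {c : ℝ} (hc : 0 ≤ c)
    (hfc : ∀ t ∈ spectrum ℝ y, |f t| * t ^ 2 ≤ c) : ‖cfc f y * a‖ ≤ c := by
  have hsa : IsSelfAdjoint y := .of_nonneg hy
  calc ‖cfc f y * a‖ ≤ ‖cfc f y * y ^ 2‖ := by
        refine norm_mul_le_norm_mul_of_mul_star_le ?_ _
        rwa [(hsa.pow 2).star_eq, ← pow_add]
    _ = ‖cfc (fun t => f t * t ^ 2) y‖ := by rw [cfc_mul f _ y, cfc_pow_id y 2]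
    _ ≤ c := norm_cfc_le hc fun t ht => by
        rw [norm_mul, norm_pow, Real.norm_eq_abs, Real.norm_eq_abs, sq_abs]
        exact hfc t ht

theorem abs_inv_add_sub_inv_add_mul_sq_le {t a b : ℝ} (ht : 0 ≤ t) (ha : 0 < a) (hb : 0 < b) :
    |(t + a)⁻¹ - (t + b)⁻¹| * t ^ 2 ≤ |b - a| := by
  have hta := add_pos_of_nonneg_of_pos ht ha
  have htb := add_pos_of_nonneg_of_pos ht hb
  rw [inv_sub_inv hta.ne' htb.ne', add_sub_add_left_eq_sub, abs_div, abs_of_pos (mul_pos hta htb),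
    div_mul_eq_mul_div, div_le_iff₀ (mul_pos hta htb), sq]
  gcongr <;> linarith

theorem abs_mul_inv_add_sub_one_mul_sq_le {t a : ℝ} (ht : 0 ≤ t) (ha : 0 < a) :
    |t * (t + a)⁻¹ - 1| * t ^ 2 ≤ a * t := by
  have hta := add_pos_of_nonneg_of_pos ht ha
  rw [← div_eq_mul_inv, div_sub_one hta.ne', sub_add_cancel_left, abs_div, abs_neg, abs_of_pos ha,
    abs_of_pos hta, div_mul_eq_mul_div, div_le_iff₀ hta, sq, mul_assoc]
  gcongr
  linarith

theorem continuousOn_inv_add_spectrum {y : A} (hy : 0 ≤ y) {ε : ℝ} (hε : 0 < ε) :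
    ContinuousOn (fun t => (t + ε)⁻¹) (spectrum ℝ y) :=
  (continuousOn_id.add continuousOn_const).inv₀ fun _ ht =>
    (add_pos_of_nonneg_of_pos (spectrum_nonneg_of_nonneg hy ht) hε).ne'

theorem cauchySeq_cfc_inv_add_mul {a y : A} (hy : 0 ≤ y) (h : a * star a ≤ y ^ 4) {e : ℕ → ℝ}
    (he0 : ∀ n, 0 < e n) (hanti : Antitone e) (hlim : Tendsto e atTop (𝓝 0)) :
    CauchySeq fun n => cfc (fun t => (t + e n)⁻¹) y * a := by
  have hcont := fun n => continuousOn_inv_add_spectrum hy (he0 n)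
  refine cauchySeq_of_le_tendsto_0 e (fun n m N hn hm => ?_) hlim
  rw [dist_eq_norm, ← sub_mul, ← cfc_sub _ _ y (hcont n) (hcont m)]
  refine norm_cfc_mul_le_of_mul_star_le_pow_four hy h ((hcont n).sub (hcont m)) (he0 N).le
    fun t ht => ?_
  exact (abs_inv_add_sub_inv_add_mul_sq_le (spectrum_nonneg_of_nonneg hy ht) (he0 n)
    (he0 m)).trans (abs_sub_le_of_nonneg_of_le (he0 m).le (hanti hm) (he0 n).le (hanti hn))

-- The factor is the limit of `(y + ε)⁻¹ a` as `ε → 0`.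
theorem exists_eq_mul_of_mul_star_le_pow_four {a y : A} (hy : 0 ≤ y) (h : a * star a ≤ y ^ 4) :
    ∃ u, a = y * u ∧ ‖u‖ ≤ ‖y‖ := by
  have hspec : ∀ t ∈ spectrum ℝ y, 0 ≤ t ∧ t ≤ ‖y‖ := fun t ht => by
    refine ⟨spectrum_nonneg_of_nonneg hy ht, (le_abs_self t).trans ?_⟩
    simpa only [id, Real.norm_eq_abs, cfc_id ℝ y] using norm_apply_le_norm_cfc (id : ℝ → ℝ) y ht
  obtain ⟨e, hanti, he0, hlim⟩ := exists_seq_strictAnti_tendsto (0 : ℝ)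
  have hcont := fun n => continuousOn_inv_add_spectrum hy (he0 n)
  obtain ⟨u, hu⟩ := cauchySeq_tendsto_of_complete
    (cauchySeq_cfc_inv_add_mul hy h he0 hanti.antitone hlim)
  refine ⟨u, tendsto_nhds_unique ?_ (hu.const_mul y), ?_⟩
  · rw [tendsto_iff_norm_sub_tendsto_zero]
    refine squeeze_zero (fun _ => norm_nonneg _) (fun n => ?_)
      (show Tendsto (fun n => e n * ‖y‖) atTop (𝓝 0) by simpa using hlim.mul_const ‖y‖)
    have hcfc : y * (cfc (fun t => (t + e n)⁻¹) y * a) - a =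
        cfc (fun t => t * (t + e n)⁻¹ - 1) y * a := by
      rw [cfc_sub (fun t => t * (t + e n)⁻¹) (fun _ => 1) y (continuousOn_id.mul (hcont n)),
        cfc_mul (fun t => t) _ y continuousOn_id (hcont n), cfc_const_one ℝ y, cfc_id' ℝ y,
        sub_mul, one_mul, mul_assoc]
    rw [hcfc]
    refine norm_cfc_mul_le_of_mul_star_le_pow_four hy h
      ((continuousOn_id.mul (hcont n)).sub continuousOn_const)
      (mul_nonneg (he0 n).le (norm_nonneg y)) fun t ht => ?_
    exact (abs_mul_inv_add_sub_one_mul_sq_le (hspec t ht).1 (he0 n)).trans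
      (mul_le_mul_of_nonneg_left (hspec t ht).2 (he0 n).le)
  · refine le_of_tendsto hu.norm (Eventually.of_forall fun n => ?_)
    refine norm_cfc_mul_le_of_mul_star_le_pow_four hy h (hcont n) (norm_nonneg y) fun t ht => ?_
    obtain ⟨ht0, hty⟩ := hspec t ht
    rw [abs_of_nonneg (inv_nonneg.mpr (add_nonneg ht0 (he0 n).le)),
      inv_mul_le_iff₀ (add_pos_of_nonneg_of_pos ht0 (he0 n)), sq]
    have hyt : t ≤ t + e n := le_add_of_nonneg_right (he0 n).le
    gcongr
    exact ht0.trans hyt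

theorem exists_eq_sqrt_sqrt_mul {a b : A} (h : a * star a ≤ b) :
    ∃ u, a = CFC.sqrt (CFC.sqrt b) * u ∧ ‖u‖ ≤ ‖CFC.sqrt (CFC.sqrt b)‖ := by
  have hb : 0 ≤ b := (mul_star_self_nonneg a).trans h
  refine exists_eq_mul_of_mul_star_le_pow_four (CFC.sqrt_nonneg _) ?_
  rwa [show 4 = 2 * 2 from rfl, pow_mul, CFC.sq_sqrt _ (CFC.sqrt_nonneg b), CFC.sq_sqrt b]

end FourthRoot

theorem sqrt_mem_of_mem [PartialOrder A] [StarOrderedRing A] {J : Ideal A}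
    (hJ : IsClosed (J : Set A)) {b : A} (hb0 : 0 ≤ b) (hb : b ∈ J) : CFC.sqrt b ∈ J :=
  CFC.sqrt_eq_real_sqrt b ▸ cfcₙ_mem_of_mem hJ hb _

variable {J : Ideal A} [J.IsTwoSided]

theorem star_mem_of_mem (hJ : IsClosed (J : Set A)) {a : A} (ha : a ∈ J) : star a ∈ J := by
  let _ := CStarAlgebra.spectralOrder A
  have := CStarAlgebra.spectralOrderedRing A
  obtain ⟨u, hu, -⟩ := exists_eq_sqrt_sqrt_mul (le_refl (a * star a))
  have hsqrt := sqrt_mem_of_mem hJ (CFC.sqrt_nonneg _) <|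
    sqrt_mem_of_mem hJ (mul_star_self_nonneg a) (J.mul_mem_right (star a) ha)
  rw [hu, star_mul, (CFC.sqrt_nonneg (CFC.sqrt (a * star a))).star_eq]
  exact J.mul_mem_left _ hsqrt

theorem mem_of_forall_mul_mul_mem (hJ : IsClosed (J : Set A)) {x : A}
    (hx : ∀ y, x * y * x ∈ J) : x ∈ J := by
  let _ := CStarAlgebra.spectralOrder A
  have := CStarAlgebra.spectralOrderedRing A
  obtain ⟨u, hu, -⟩ := exists_eq_sqrt_sqrt_mul (le_refl (x * star x))
  have hmul : x * star x * (x * star x) ∈ J := by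
    simpa only [mul_assoc] using J.mul_mem_right (star x) (hx (star x))
  have hmem : x * star x ∈ J := by
    have hx0 := mul_star_self_nonneg x
    rw [← CFC.sqrt_mul_self (x * star x)]
    exact sqrt_mem_of_mem hJ (hx0.isSelfAdjoint.mul_self_nonneg) hmul
  rw [hu]
  exact J.mul_mem_right _ <| sqrt_mem_of_mem hJ (CFC.sqrt_nonneg _) <|
    sqrt_mem_of_mem hJ (mul_star_self_nonneg x) hmem

end ClosedIdeal

section FiniteQuotient

theorem exists_injective_summable_smul {E : Type*} [NormedAddCommGroup E] [NormedSpace ℝ E]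
    [CompleteSpace E] (e : ℕ → E) :
    ∃ μ : ℕ → ℝ, Function.Injective μ ∧ Summable fun n => μ n • e n := by
  let S : ℕ → ℝ := fun n => 1 + ∑ i ∈ Finset.range (n + 1), ‖e i‖
  have hS0 : ∀ n, 0 < S n := fun n => by positivity
  have hS : Monotone S := monotone_nat_of_le_succ fun n => by
    simp only [S, Finset.sum_range_succ _ (n + 1)]
    linarith [norm_nonneg (e (n + 1))]
  have hle : ∀ n, ‖e n‖ ≤ S n := fun n => by
    linarith [Finset.single_le_sum (f := fun i => ‖e i‖) (fun i _ => norm_nonneg _)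
      (Finset.self_mem_range_succ n)]
  refine ⟨fun n => (1 / 2) ^ n / S n, StrictAnti.injective (strictAnti_nat_of_succ_lt fun n => ?_),
    .of_norm_bounded summable_geometric_two fun n => ?_⟩
  · exact div_lt_div₀ (pow_lt_pow_right_of_lt_one₀ (by norm_num) (by norm_num) n.lt_succ_self)
      (hS n.le_succ) (by positivity) (hS0 n)
  · have hμ0 : (0 : ℝ) ≤ (1 / 2) ^ n / S n := div_nonneg (by positivity) (hS0 n).le
    rw [norm_smul, Real.norm_of_nonneg hμ0, div_mul_eq_mul_div, div_le_iff₀ (hS0 n)]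
    exact mul_le_mul_of_nonneg_left (hle n) (by positivity)

variable {A : Type*} [CStarAlgebra A] {J : Ideal A} [J.IsTwoSided]

theorem mk_mul_mk_of_hasSum_smul (hJ : IsClosed (J : Set A)) {e : ℕ → A}
    (he : OrthogonalIdempotents fun n => Ideal.Quotient.mk J (e n)) {μ : ℕ → ℝ} {s : A}
    (hs : HasSum (fun n => μ n • e n) s) (n : ℕ) :
    Ideal.Quotient.mk J s * Ideal.Quotient.mk J (e n) = μ n • Ideal.Quotient.mk J (e n) := by
  have hmem : s * e n - μ n • e n ∈ J := by
    refine hJ.mem_of_tendsto ((hs.mul_right (e n)).sub (hasSum_ite_eq n (μ n • e n)))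
      (Eventually.of_forall fun F => J.sum_mem fun i _ => ?_)
    obtain rfl | hi := eq_or_ne i n
    · rw [if_pos rfl, smul_mul_assoc, ← smul_sub]
      refine J.smul_of_tower_mem _ (Ideal.Quotient.eq.mp ?_)
      rw [map_mul]
      exact he.idem i
    · rw [if_neg hi, sub_zero, smul_mul_assoc]
      refine J.smul_of_tower_mem _ (Ideal.Quotient.eq_zero_iff_mem.mp ?_)
      rw [map_mul]
      exact he.ortho hi
  rw [← map_mul]
  exact Ideal.Quotient.eq.mpr hmem

theorem exists_mk_eq_zero_of_orthogonalIdempotents (hJ : IsClosed (J : Set A))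
    (halg : ∀ a, IsSelfAdjoint a → ∃ R : Finset ℝ, aeval a (Lagrange.nodal R id) ∈ J)
    {e : ℕ → A} (hsa : ∀ n, IsSelfAdjoint (e n))
    (he : OrthogonalIdempotents fun n => Ideal.Quotient.mk J (e n)) :
    ∃ n, Ideal.Quotient.mk J (e n) = 0 := by
  by_contra! hne
  obtain ⟨μ, hμ, s, hs⟩ := exists_injective_summable_smul e
  have hssa : IsSelfAdjoint s := by
    refine hs.star.unique ?_
    simpa only [star_smul, star_trivial, (hsa _).star_eq] using hs
  obtain ⟨R, hR⟩ := halg s hssa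
  have hμR : ∀ n, μ n ∈ R := fun n => by
    by_contra hn
    have haeval := aeval_mul_of_mul_eq_smul (mk_mul_mk_of_hasSum_smul hJ he hs n)
      (Lagrange.nodal R id)
    have hzero : aeval (Ideal.Quotient.mk J s) (Lagrange.nodal R (id : ℝ → ℝ)) = 0 :=
      (aeval_algHom_apply (Ideal.Quotient.mkₐ ℝ J) s _).trans
        (Ideal.Quotient.eq_zero_iff_mem.mpr hR)
    rw [hzero, zero_mul] at haeval
    refine hne n ((smul_eq_zero.mp haeval.symm).resolve_left ?_)
    exact Lagrange.eval_nodal_not_at_node fun i hi h => hn (h ▸ hi)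
  exact Set.infinite_range_of_injective hμ (R.finite_toSet.subset (Set.range_subset_iff.mpr hμR))

open scoped ComplexStarModule in
theorem finite_quotient_of_forall_aeval_nodal_mem (hJ : IsClosed (J : Set A))
    (halg : ∀ a, IsSelfAdjoint a → ∃ R : Finset ℝ, aeval a (Lagrange.nodal R id) ∈ J) :
    Module.Finite ℂ (A ⧸ J) := by
  let π : A →ₐ[ℝ] A ⧸ J := Ideal.Quotient.mkₐ ℝ J
  have hπ : ∀ {a}, π a = 0 ↔ a ∈ J := Ideal.Quotient.eq_zero_iff_mem
  refine finite_of_forall_aeval_nodal_eq_zero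
    (H := (selfAdjoint.submodule ℝ A).map π.toLinearMap) ⟨1, .one A, map_one π⟩ ?_ ?_ ?_ ?_ ?_
  · rintro _ ⟨x, hx, rfl⟩ _ ⟨y, hy, rfl⟩
    refine ⟨x * y * x, ?_, by simp only [AlgHom.toLinearMap_apply, map_mul]⟩
    exact IsSelfAdjoint.conjugate_self hy hx
  · refine eq_top_iff.mpr fun q _ => ?_
    obtain ⟨a, rfl⟩ := Ideal.Quotient.mk_surjective q
    have hmem : ∀ b : selfAdjoint A, Ideal.Quotient.mk J (b : A) ∈ Submodule.span ℂ
        ((selfAdjoint.submodule ℝ A).map π.toLinearMap : Set (A ⧸ J)) :=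
      fun b => Submodule.subset_span ⟨b, b.2, rfl⟩
    rw [← realPart_add_I_smul_imaginaryPart a, map_add]
    exact add_mem (hmem _) (Submodule.smul_mem _ Complex.I (hmem _))
  · rintro _ ⟨a, ha, rfl⟩
    obtain ⟨R, hR⟩ := halg a ha
    exact ⟨R, (aeval_algHom_apply π a _).trans (hπ.mpr hR)⟩
  · intro e he horth
    choose f hf hfe using he
    obtain rfl : (fun n => π (f n)) = e := funext hfe
    exact exists_mk_eq_zero_of_orthogonalIdempotents hJ halg hf horth
  · intro x hx
    obtain ⟨a, rfl⟩ := Ideal.Quotient.mk_surjective x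
    refine Ideal.Quotient.eq_zero_iff_mem.mpr (mem_of_forall_mul_mul_mem hJ fun y => ?_)
    rw [← Ideal.Quotient.eq_zero_iff_mem, map_mul, map_mul, hx]

end FiniteQuotient

section Boundedness

theorem exists_smul_norm_le_lt_norm_map {E F : Type*} [NormedAddCommGroup E] [NormedSpace ℝ E]
    [NormedAddCommGroup F] [NormedSpace ℝ F] {T : E →ₗ[ℝ] F} {ε C : ℝ} (hε : 0 < ε) {a : E}
    (ha : C / ε * ‖a‖ < ‖T a‖) : ∃ c : ℝ, 0 ≤ c ∧ ‖c • a‖ ≤ ε ∧ C < ‖T (c • a)‖ := by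
  have ha0 : 0 < ‖a‖ := norm_pos_iff.mpr <| by
    rintro rfl
    simp only [norm_zero, mul_zero, map_zero, lt_self_iff_false] at ha
  refine ⟨ε / ‖a‖, by positivity, ?_, ?_⟩
  · rw [norm_smul, Real.norm_of_nonneg (by positivity), div_mul_cancel₀ _ ha0.ne']
  · rw [map_smul, norm_smul, Real.norm_of_nonneg (by positivity)]
    calc C = ε / ‖a‖ * (C / ε * ‖a‖) := by field_simp
      _ < ε / ‖a‖ * ‖T a‖ := by gcongr

variable {A X : Type*} [CStarAlgebra A] [NormedAddCommGroup X] [NormedSpace ℂ X] {J : Ideal A}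
  {D : A →ₗ[ℂ] X}

theorem exists_norm_map_le_of_le [PartialOrder A] [StarOrderedRing A]
    (hJ : IsClosed (J : Set A)) (hD : ∀ y ∈ J, Continuous fun b => D (y * b * y)) {b : A}
    (hb : b ∈ J) : ∃ C, ∀ a, 0 ≤ a → a ≤ b → ‖D a‖ ≤ C := by
  by_cases hb0 : 0 ≤ b
  swap
  · exact ⟨0, fun a ha hab => absurd (ha.trans hab) hb0⟩
  set y := CFC.sqrt (CFC.sqrt b) with hy
  have hyJ : y ∈ J := sqrt_mem_of_mem hJ (CFC.sqrt_nonneg _) (sqrt_mem_of_mem hJ hb0 hb)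
  have hystar : star y = y := (CFC.sqrt_nonneg _).star_eq
  let T : A →L[ℂ] X := ⟨D ∘ₗ LinearMap.mulRight ℂ y ∘ₗ LinearMap.mulLeft ℂ y, hD y hyJ⟩
  refine ⟨‖T‖ * (‖y‖ * ‖y‖), fun a ha hab => ?_⟩
  have hsqrt : CFC.sqrt a * star (CFC.sqrt a) = a := by
    rw [(CFC.sqrt_nonneg a).star_eq, CFC.sqrt_mul_sqrt_self a]
  obtain ⟨u, hu, hnorm⟩ := exists_eq_sqrt_sqrt_mul (hsqrt.trans_le hab)
  have ha_eq : a = y * (u * star u) * y := by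
    rw [← hsqrt, hu, ← hy, star_mul, hystar]
    simp only [mul_assoc]
  calc ‖D a‖ = ‖T (u * star u)‖ := congrArg (‖D ·‖) ha_eq
    _ ≤ ‖T‖ * (‖u‖ * ‖u‖) := by
      rw [← CStarRing.norm_self_mul_star]
      exact T.le_opNorm _
    _ ≤ ‖T‖ * (‖y‖ * ‖y‖) := by gcongr

theorem exists_norm_map_le_mul_norm_of_nonneg [PartialOrder A] [StarOrderedRing A]
    (hJ : IsClosed (J : Set A)) (hD : ∀ y ∈ J, Continuous fun b => D (y * b * y)) :
    ∃ C : ℝ, ∀ a ∈ J, 0 ≤ a → ‖D a‖ ≤ C * ‖a‖ := by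
  by_contra! hcon
  have hseq : ∀ n : ℕ, ∃ a ∈ J, 0 ≤ a ∧ ‖a‖ ≤ (1 / 2) ^ n ∧ (n : ℝ) < ‖D a‖ := fun n => by
    obtain ⟨a, haJ, ha0, ha⟩ := hcon (n / (1 / 2) ^ n)
    obtain ⟨c, hc, hnorm, hlt⟩ :=
      exists_smul_norm_le_lt_norm_map (T := D.restrictScalars ℝ) (by positivity) ha
    exact ⟨c • a, J.smul_of_tower_mem c haJ, smul_nonneg hc ha0, hnorm, hlt⟩
  choose a haJ ha0 hnorm hlt using hseq
  obtain ⟨b, hb⟩ := Summable.of_norm_bounded summable_geometric_two hnorm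
  have hbJ : b ∈ J :=
    hJ.mem_of_tendsto hb (Eventually.of_forall fun F => J.sum_mem fun i _ => haJ i)
  obtain ⟨C, hC⟩ := exists_norm_map_le_of_le hJ hD hbJ
  obtain ⟨n, hn⟩ := exists_nat_gt C
  exact ((hlt n).trans_le (hC _ (ha0 n) (le_hasSum hb n fun i _ => ha0 i))).not_gt hn

open scoped ComplexStarModule in
theorem exists_norm_map_le_mul_norm_of_mem [J.IsTwoSided] (hJ : IsClosed (J : Set A))
    (hD : ∀ y ∈ J, Continuous fun b => D (y * b * y)) :
    ∃ C : ℝ, ∀ a ∈ J, ‖D a‖ ≤ C * ‖a‖ := by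
  let _ := CStarAlgebra.spectralOrder A
  have := CStarAlgebra.spectralOrderedRing A
  obtain ⟨C, hC⟩ := exists_norm_map_le_mul_norm_of_nonneg hJ hD
  have hposPart : ∀ b ∈ J, ‖D b⁺‖ ≤ |C| * ‖b‖ := fun b hb =>
    (hC _ (CFC.posPart_def b ▸ cfcₙ_mem_of_mem hJ hb _) (CFC.posPart_nonneg b)).trans <|
      mul_le_mul (le_abs_self C) (CStarAlgebra.norm_posPart_le b) (norm_nonneg _) (abs_nonneg C)
  have hselfAdjoint : ∀ b : selfAdjoint A, (b : A) ∈ J → ‖D b‖ ≤ 2 * (|C| * ‖b‖) := fun b hb => by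
    have hneg := hposPart _ (J.neg_mem hb)
    rw [CFC.posPart_neg, norm_neg] at hneg
    rw [← CFC.posPart_sub_negPart (b : A) b.2, map_sub, two_mul]
    exact (norm_sub_le _ _).trans (add_le_add (hposPart b hb) hneg)
  refine ⟨4 * |C|, fun a ha => ?_⟩
  have hre : (ℜ a : A) ∈ J := by
    rw [realPart_apply_coe]
    exact J.smul_of_tower_mem _ (J.add_mem ha (star_mem_of_mem hJ ha))
  have him : (ℑ a : A) ∈ J := by
    rw [imaginaryPart_apply_coe]
    exact J.smul_of_tower_mem _ <| J.smul_of_tower_mem _ <|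
      J.sub_mem ha (star_mem_of_mem hJ ha)
  calc ‖D a‖ ≤ ‖D (ℜ a : A)‖ + ‖D (ℑ a : A)‖ := by
        conv_lhs => rw [← realPart_add_I_smul_imaginaryPart a, map_add, map_smul]
        simpa only [norm_smul, Complex.norm_I, one_mul] using
          norm_add_le (D (ℜ a : A)) (Complex.I • D (ℑ a : A))
    _ ≤ 2 * (|C| * ‖a‖) + 2 * (|C| * ‖a‖) := by
        refine add_le_add ((hselfAdjoint _ hre).trans ?_) ((hselfAdjoint _ him).trans ?_)
        · gcongr
          exact realPart.norm_le a
        · gcongr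
          exact imaginaryPart.norm_le a
    _ = 4 * |C| * ‖a‖ := by ring

end Boundedness

section FiniteCodimension

theorem continuous_of_continuous_domRestrict {𝕜 E F : Type*} [NontriviallyNormedField 𝕜]
    [CompleteSpace 𝕜] [AddCommGroup E] [TopologicalSpace E] [IsTopologicalAddGroup E] [Module 𝕜 E]
    [ContinuousSMul 𝕜 E] [AddCommGroup F] [TopologicalSpace F] [IsTopologicalAddGroup F]
    [Module 𝕜 F] [ContinuousSMul 𝕜 F] {p : Submodule 𝕜 E} [FiniteDimensional 𝕜 (E ⧸ p)]
    (hp : IsClosed (p : Set E)) {f : E →ₗ[𝕜] F} (hf : Continuous (f.domRestrict p)) :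
    Continuous f := by
  have := hp
  obtain ⟨P, hP⟩ := Submodule.ClosedComplemented.of_finiteDimensional_quotient hp
  have hker : p ≤ (f - f.domRestrict p ∘ₗ P.toLinearMap).ker := fun x hx => by
    simp [hP ⟨x, hx⟩]
  let g : E ⧸ p →ₗ[𝕜] F := p.liftQ _ hker
  have hg : Continuous fun x => g (p.mkQ x) :=
    g.continuous_of_finiteDimensional.comp continuous_quot_mk
  have hsum : ⇑f = fun x => g (p.mkQ x) + f.domRestrict p (P x) := by
    ext x
    simp [g]
  rw [hsum]
  exact hg.add (hf.comp P.continuous)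

end FiniteCodimension

theorem IsUnitalJordanDerivation.continuous {A X : Type*} [CStarAlgebra A] [NormedAddCommGroup X]
    [NormedSpace ℂ X] {l r : A →L[ℂ] X →L[ℂ] X} {D : A →ₗ[ℂ] X}
    (h : IsUnitalJordanDerivation l r D) : Continuous D := by
  have hJ := h.isClosed_continuityIdeal
  have := finite_quotient_of_forall_aeval_nodal_mem hJ fun _ =>
    h.exists_aeval_nodal_mem_continuityIdeal
  have : Module.Finite ℂ (A ⧸ h.continuityIdeal.restrictScalars ℂ) :=
    .equiv (Submodule.Quotient.restrictScalarsEquiv ℂ h.continuityIdeal).symm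
  obtain ⟨C, hC⟩ := exists_norm_map_le_mul_norm_of_mem hJ fun y hy =>
    h.continuous_map_mul_mul_self (h.mem_continuityIdeal.mp hy).1
  exact continuous_of_continuous_domRestrict (p := h.continuityIdeal.restrictScalars ℂ) hJ
    (AddMonoidHomClass.continuous_of_bound _ C fun a => hC a a.2)

section Unitization

variable {A X : Type*} [NonUnitalCStarAlgebra A] [NormedAddCommGroup X] [NormedSpace ℂ X]

/-- The extension of an action of `A` on `X` to an action of the unitization in which `1` acts as
the identity. -/
noncomputable def unitizationAction (l : A →L[ℂ] X →L[ℂ] X) :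
    Unitization ℂ A →L[ℂ] X →L[ℂ] X :=
  ContinuousLinearMap.smulRight
      (⟨(Unitization.fstHom ℂ A).toLinearMap, Unitization.continuous_fst⟩ :
        Unitization ℂ A →L[ℂ] ℂ) (ContinuousLinearMap.id ℂ X) +
    l.comp ⟨Unitization.sndHom ℂ ℂ A, Unitization.continuous_snd⟩

@[simp]
theorem unitizationAction_apply (l : A →L[ℂ] X →L[ℂ] X) (a : Unitization ℂ A) (x : X) :
    unitizationAction l a x = a.fst • x + l a.snd x := rfl

namespace IsJordanDerivation

variable {l r : A →L[ℂ] X →L[ℂ] X} {D : A →ₗ[ℂ] X}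

theorem unitization (h : IsJordanDerivation l r D) :
    IsUnitalJordanDerivation (unitizationAction l) (unitizationAction r)
      (D ∘ₗ Unitization.sndHom ℂ ℂ A) where
  left_mul a b x := by
    simp only [unitizationAction_apply, Unitization.fst_mul, Unitization.snd_mul, map_add,
      map_smul, add_apply, smul_apply, h.left_mul]
    module
  right_mul a b x := by
    simp only [unitizationAction_apply, Unitization.fst_mul, Unitization.snd_mul, map_add,
      map_smul, add_apply, smul_apply, h.right_mul]
    module
  comm a b x := by
    simp only [unitizationAction_apply, map_add, map_smul, h.comm]
    module
  map_sq a := by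
    simp only [LinearMap.comp_apply, Unitization.sndHom_apply, unitizationAction_apply,
      Unitization.snd_mul, map_add, map_smul, h.map_sq]
    module
  left_one x := by simp
  right_one x := by simp

theorem continuous (h : IsJordanDerivation l r D) : Continuous D :=
  h.unitization.continuous.comp Unitization.continuous_inr

end IsJordanDerivation

end Unitization

theorem jordan_derivation_automatic_continuity_general (A X : Type*)
    [NonUnitalNormedRing A] [StarRing A] [CStarRing A] [CompleteSpace A]
    [NormedSpace ℂ A] [IsScalarTower ℂ A A] [SMulCommClass ℂ A A] [StarModule ℂ A]
    [NormedAddCommGroup X] [NormedSpace ℂ X]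
    (l : A →ₗ[ℂ] X →ₗ[ℂ] X) (r : X →ₗ[ℂ] A →ₗ[ℂ] X)
    (hlbdd : ∃ C : ℝ, ∀ (a : A) (x : X), ‖l a x‖ ≤ C * ‖a‖ * ‖x‖)
    (hrbdd : ∃ C : ℝ, ∀ (x : X) (a : A), ‖r x a‖ ≤ C * ‖x‖ * ‖a‖)
    (hmod₁ : ∀ (a b : A) (x : X), l a (l b x) = l (a * b) x)
    (hmod₂ : ∀ (a b : A) (x : X), l a (r x b) = r (l a x) b)
    (hmod₃ : ∀ (a b : A) (x : X), r (r x a) b = r x (a * b))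
    (D : A →ₗ[ℂ] X)
    (hD : ∀ a : A, D (a * a) = l a (D a) + r (D a) a) :
    Continuous D := by
  let _ : NonUnitalCStarAlgebra A := { }
  obtain ⟨Cl, hCl⟩ := hlbdd
  obtain ⟨Cr, hCr⟩ := hrbdd
  have h : IsJordanDerivation (l.mkContinuous₂ Cl hCl)
      (r.flip.mkContinuous₂ Cr fun a x => (hCr x a).trans_eq (mul_right_comm _ _ _)) D :=
    { left_mul := fun a b x => (hmod₁ a b x).symm
      right_mul := fun a b x => (hmod₃ a b x).symm
      comm := fun a b x => (hmod₂ a b x).symm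
      map_sq := hD }
  exact h.continuous

/-- Every Jordan derivation from a C*-algebra `A` into a Banach `A`-bimodule `X`
(not assumed bounded) is automatically continuous.  The bimodule actions are given by
the bounded bilinear maps `l` and `r`. -/
theorem jordan_derivation_automatic_continuity (A X : Type*)
    [NonUnitalNormedRing A] [StarRing A] [CStarRing A] [CompleteSpace A]
    [NormedSpace ℂ A] [IsScalarTower ℂ A A] [SMulCommClass ℂ A A] [StarModule ℂ A]
    [NormedAddCommGroup X] [NormedSpace ℂ X] [CompleteSpace X]
    (l : A →ₗ[ℂ] X →ₗ[ℂ] X) (r : X →ₗ[ℂ] A →ₗ[ℂ] X)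
    (hlbdd : ∃ C : ℝ, ∀ (a : A) (x : X), ‖l a x‖ ≤ C * ‖a‖ * ‖x‖)
    (hrbdd : ∃ C : ℝ, ∀ (x : X) (a : A), ‖r x a‖ ≤ C * ‖x‖ * ‖a‖)
    (hmod₁ : ∀ (a b : A) (x : X), l a (l b x) = l (a * b) x)
    (hmod₂ : ∀ (a b : A) (x : X), l a (r x b) = r (l a x) b)
    (hmod₃ : ∀ (a b : A) (x : X), r (r x a) b = r x (a * b))
    (D : A →ₗ[ℂ] X)
    (hD : ∀ a : A, D (a * a) = l a (D a) + r (D a) a) :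
    Continuous D :=
  jordan_derivation_automatic_continuity_general A X l r hlbdd hrbdd hmod₁ hmod₂ hmod₃ D hD
end

section
/- (Miers) Let M be a von Neumann algebra and let L : M → M be a Lie derivation, i.e., a linear map satisfying L([x, y]) = [L(x), y] + [x, L(y)] for all x, y ∈ M, where [x, y] = xy − yx. Then L = D + λ, where D : M → M is an associative derivation (D(xy) = D(x)y + xD(y)) and λ : M → Z(M) is a linear map into the center of M which vanishes on all commutators [x, y]. -/
/-!
By Zorn's lemma there is a maximal pair of orthogonal projections of `M` with a common central
support `f`. The range projections of a nonzero `y ∈ M (1 - f)` with `y * y = 0` and of `star y`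
would enlarge the pair, so `M (1 - f)` is reduced, hence abelian, and only the Peirce decomposition
of `M f` with respect to the pair matters.

Subtracting an inner derivation makes `L` map both projections into the center. Then `L` preserves
the off-diagonal Peirce components, and on a diagonal corner it is, up to a central element of the
opposite corner, a map into the same corner. A central element of a corner extends to one of `M`: by
spectral theory it is a norm-convergent combination of projections, and the central support of a
projection extends it. Subtracting the resulting center-valued map leaves a graded map `D` which is
a Lie derivation modulo the center.

Such a `D` is an associative derivation. The defect of the product rule is central and off-diagonal,
hence zero, whenever the two factors multiply into an off-diagonal component; this propagates to
products inside a corner by multiplying into an off-diagonal component. For opposite off-diagonal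
factors the defect comes from a central element `c`, and expanding `D (x * y * x)` in two ways gives
`c * x = 0`, then `c ^ 3 = 0`, so that `c = 0` because the center of `M` is reduced.
-/

section LieDerivations

attribute [local instance] LieRing.ofAssociativeRing

variable {𝕜 R : Type*} [CommRing 𝕜] [Ring R] [Algebra 𝕜 R]

/-- An associative derivation of an algebra that need not be commutative, as Mathlib's `Derivation`
has to be. -/
def IsAssocDerivation (D : R →ₗ[𝕜] R) : Prop :=
  ∀ x y, D (x * y) = D x * y + x * D y

/-- A Lie derivation is standard if it is an associative derivation up to a center-valued map. -/
def IsStandard (L : LieDerivation 𝕜 R R) : Prop :=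
  ∃ D : R →ₗ[𝕜] R, IsAssocDerivation D ∧ ∀ x, L x - D x ∈ Subring.center R

theorem mem_center_iff_lie_eq_zero {z : R} : z ∈ Subring.center R ↔ ∀ x : R, ⁅z, x⁆ = 0 := by
  simp only [Subring.mem_center_iff, Ring.lie_def, sub_eq_zero, eq_comm]

theorem lieDerivation_apply_mem_center (L : LieDerivation 𝕜 R R) {z : R}
    (hz : z ∈ Subring.center R) : L z ∈ Subring.center R := by
  rw [mem_center_iff_lie_eq_zero] at hz ⊢
  intro x
  have h := L.apply_lie_eq_add z x
  rwa [hz, hz, map_zero, zero_add, eq_comm] at h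

theorem apply_lie_of_sub_mem_center {L : LieDerivation 𝕜 R R} {D : R →ₗ[𝕜] R}
    (h : ∀ x, L x - D x ∈ Subring.center R) (x y : R) : L ⁅x, y⁆ = ⁅D x, y⁆ + ⁅x, D y⁆ := by
  have hx := mem_center_iff_lie_eq_zero.mp (h x) y
  have hy := mem_center_iff_lie_eq_zero.mp (h y) x
  rw [sub_lie, sub_eq_zero] at hx hy
  rw [L.apply_lie_eq_add, hx, ← lie_skew, hy, lie_skew, add_comm]

theorem IsAssocDerivation.apply_lie {D : R →ₗ[𝕜] R} (hD : IsAssocDerivation D) (x y : R) :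
    D ⁅x, y⁆ = ⁅D x, y⁆ + ⁅x, D y⁆ := by
  simp only [Ring.lie_def, map_sub, hD x y, hD y x]
  abel

theorem IsStandard.of_sub_mem_center {L L' : LieDerivation 𝕜 R R} (hL' : IsStandard L')
    (h : ∀ x, L x - L' x ∈ Subring.center R) : IsStandard L := by
  obtain ⟨D, hD, hc⟩ := hL'
  exact ⟨D, hD, fun x => by simpa using add_mem (h x) (hc x)⟩

theorem IsStandard.exists_eq_add {L : LieDerivation 𝕜 R R} (h : IsStandard L) :
    ∃ D lam : R →ₗ[𝕜] R, IsAssocDerivation D ∧ (∀ x, lam x ∈ Subring.center R) ∧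
      (∀ x y : R, lam ⁅x, y⁆ = 0) ∧ L.toLinearMap = D + lam := by
  obtain ⟨D, hD, hc⟩ := h
  refine ⟨D, L.toLinearMap - D, hD, hc, fun x y => ?_, (add_sub_cancel _ _).symm⟩
  exact sub_eq_zero.mpr ((apply_lie_of_sub_mem_center hc x y).trans (hD.apply_lie x y).symm)

theorem isAssocDerivation_ad (s : R) : IsAssocDerivation (LieAlgebra.ad 𝕜 R s) := fun x y => by
  simp only [LieAlgebra.ad_apply, Ring.lie_def]
  noncomm_ring

theorem IsStandard.of_sub_ad {L : LieDerivation 𝕜 R R} {s : R}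
    (h : IsStandard (L - LieDerivation.ad 𝕜 R s)) : IsStandard L := by
  obtain ⟨D, hD, hc⟩ := h
  refine ⟨D + LieAlgebra.ad 𝕜 R s, fun x y => ?_, fun x => ?_⟩
  · simp only [LinearMap.add_apply, hD x y, isAssocDerivation_ad s x y]
    noncomm_ring
  · simpa [sub_sub, add_comm] using hc x

theorem commute_sub_lie_lie_of_isIdempotentElem {e : R} (he : IsIdempotentElem e) (a : R) :
    Commute (a - ⁅⁅a, e⁆, e⁆) e := by
  have h (b : R) : b * e * e = b * e := by rw [mul_assoc, he.eq]
  have h' (b : R) : e * (e * b) = e * b := by rw [← mul_assoc, he.eq]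
  simp only [commute_iff_eq, Ring.lie_def, sub_mul, mul_sub, h, h', mul_assoc]
  abel

theorem mul_lie_of_mem_center {z : R} (hz : z ∈ Subring.center R) (x y : R) :
    z * ⁅x, y⁆ = ⁅z * x, y⁆ := by
  simp only [Ring.lie_def, mul_sub, ← mul_assoc, Subring.mem_center_iff.mp hz y]

theorem mul_lie_of_mem_center' {z : R} (hz : z ∈ Subring.center R) (x y : R) :
    z * ⁅x, y⁆ = ⁅x, z * y⁆ := by
  rw [← lie_skew, mul_neg, mul_lie_of_mem_center hz, lie_skew]

/-- The compression `x ↦ f * L (f * x)` of a Lie derivation to the ideal generated by a central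
idempotent `f`. -/
def centralCompression (L : LieDerivation 𝕜 R R) {f : R} (hf : f ∈ Subring.center R)
    (hff : IsIdempotentElem f) : LieDerivation 𝕜 R R where
  toLinearMap := LinearMap.mulLeft 𝕜 f ∘ₗ L.toLinearMap ∘ₗ LinearMap.mulLeft 𝕜 f
  leibniz' x y := by
    have lie_compress (x y : R) : f * ⁅f * x, L (f * y)⁆ = ⁅x, f * L (f * y)⁆ := by
      rw [← mul_lie_of_mem_center hf, ← mul_assoc, hff.eq, mul_lie_of_mem_center' hf]
    have hxy : f * ⁅x, y⁆ = ⁅f * x, f * y⁆ := by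
      rw [← mul_lie_of_mem_center hf, ← mul_lie_of_mem_center' hf, ← mul_assoc, hff.eq]
    change f * L (f * ⁅x, y⁆) = ⁅x, f * L (f * y)⁆ - ⁅y, f * L (f * x)⁆
    rw [hxy, L.apply_lie_eq_sub, mul_sub, lie_compress, lie_compress]

theorem centralCompression_apply (L : LieDerivation 𝕜 R R) {f : R} (hf : f ∈ Subring.center R)
    (hff : IsIdempotentElem f) (x : R) : centralCompression L hf hff x = f * L (f * x) :=
  rfl

theorem sub_centralCompression_mem_center (L : LieDerivation 𝕜 R R) {f : R}
    (hf : f ∈ Subring.center R) (hff : IsIdempotentElem f)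
    (hab : ∀ x y : R, f * ⁅x, y⁆ = ⁅x, y⁆) (x : R) :
    L x - centralCompression L hf hff x ∈ Subring.center R := by
  have sub_mem_center (w : R) : w - f * w ∈ Subring.center R :=
    mem_center_iff_lie_eq_zero.mpr fun y => by
      rw [sub_lie, ← mul_lie_of_mem_center hf, hab, sub_self]
  have key : L x - centralCompression L hf hff x = L (x - f * x) + (L (f * x) - f * L (f * x)) := by
    rw [centralCompression_apply, map_sub, sub_add_sub_cancel]
  exact key ▸ add_mem (lieDerivation_apply_mem_center L (sub_mem_center x)) (sub_mem_center _)

end LieDerivations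

section Peirce

variable {R : Type*} [Ring R]

/-- The Peirce component `p R q` of a ring with respect to two idempotents, described as the set of
elements fixed by `p` on the left and by `q` on the right. -/
def peirceComponent (p q : R) : AddSubgroup R where
  carrier := {x | p * x = x ∧ x * q = x}
  add_mem' ha hb := ⟨by rw [mul_add, ha.1, hb.1], by rw [add_mul, ha.2, hb.2]⟩
  zero_mem' := ⟨mul_zero p, zero_mul q⟩
  neg_mem' ha := ⟨by rw [mul_neg, ha.1], by rw [neg_mul, ha.2]⟩

theorem mul_mul_mem_peirceComponent {p q : R} (hp : IsIdempotentElem p) (hq : IsIdempotentElem q)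
    (x : R) : p * x * q ∈ peirceComponent p q :=
  ⟨by rw [← mul_assoc, ← mul_assoc, hp.eq], by rw [mul_assoc, hq.eq]⟩

theorem mul_mem_peirceComponent {p q r s x y : R} (hx : x ∈ peirceComponent p q)
    (hy : y ∈ peirceComponent r s) : x * y ∈ peirceComponent p s :=
  ⟨by rw [← mul_assoc, hx.1], by rw [mul_assoc, hy.2]⟩

theorem center_mul_mem_peirceComponent {p q z x : R} (hz : z ∈ Subring.center R)
    (hx : x ∈ peirceComponent p q) : z * x ∈ peirceComponent p q :=
  ⟨by rw [← mul_assoc, Subring.mem_center_iff.mp hz, mul_assoc, hx.1], by rw [mul_assoc, hx.2]⟩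

theorem mul_eq_zero_of_mem_peirceComponent {p q r s x y : R} (hqr : q * r = 0)
    (hx : x ∈ peirceComponent p q) (hy : y ∈ peirceComponent r s) : x * y = 0 := by
  rw [← hx.2, ← hy.1, mul_assoc, ← mul_assoc q, hqr, zero_mul, mul_zero]

theorem lie_mem_peirceComponent {p q x y : R} (hx : x ∈ peirceComponent p q) (hp : Commute y p)
    (hq : Commute y q) : ⁅y, x⁆ ∈ peirceComponent p q := by
  constructor
  · rw [Ring.lie_def, mul_sub, ← mul_assoc, ← mul_assoc, ← hp.eq, mul_assoc, hx.1]
  · rw [Ring.lie_def, sub_mul, mul_assoc, mul_assoc, hq.eq, ← mul_assoc x, hx.2]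

/-- A pair of orthogonal idempotents, with central sum `f`, in sufficiently general position: the
ideal generated by either one has no annihilator under `f`, and each central element of either
corner extends to a central element of the ring, which has a reduced center. -/
structure PeircePair (f : R) (e : Bool → R) : Prop where
  orthogonalIdempotents : OrthogonalIdempotents e
  sum_eq : ∑ i, e i = f
  mem_center : f ∈ Subring.center R
  mul_eq_zero_of_forall : ∀ i x, (∀ m, x * m * e i = 0) → x * f = 0
  exists_mem_center : ∀ i c, (∀ m, Commute c (e i * m * e i)) →
    ∃ z ∈ Subring.center R, z * e i = c * e i
  isReduced_center : IsReduced (Subring.center R)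

namespace PeircePair

variable {f : R} {e : Bool → R}

theorem isIdempotentElem (h : PeircePair f e) (i : Bool) : IsIdempotentElem (e i) :=
  h.orthogonalIdempotents.idem i

theorem idem_mem_component (h : PeircePair f e) (i : Bool) :
    e i ∈ peirceComponent (e i) (e i) :=
  ⟨h.isIdempotentElem i, h.isIdempotentElem i⟩

theorem mul_eq_zero (h : PeircePair f e) {i j : Bool} (hij : i ≠ j) : e i * e j = 0 :=
  h.orthogonalIdempotents.ortho hij

theorem add_not_eq (h : PeircePair f e) (i : Bool) : e i + e (!i) = f := by
  rw [← h.sum_eq, Fintype.sum_bool]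
  cases i
  exacts [add_comm _ _, rfl]

theorem isIdempotentElem_sum (h : PeircePair f e) : IsIdempotentElem f :=
  h.sum_eq ▸ h.orthogonalIdempotents.isIdempotentElem_sum

theorem sum_mul_component (h : PeircePair f e) {i j : Bool} {x : R}
    (hx : x ∈ peirceComponent (e i) (e j)) : f * x = x := by
  rw [← hx.1, ← mul_assoc, ← h.sum_eq, Finset.sum_mul,
    Finset.sum_eq_single i (fun k _ hk => h.mul_eq_zero hk) (by simp), h.isIdempotentElem i]

theorem component_mul_sum (h : PeircePair f e) {i j : Bool} {x : R}
    (hx : x ∈ peirceComponent (e i) (e j)) : x * f = x := by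
  rw [Subring.mem_center_iff.mp h.mem_center, h.sum_mul_component hx]

theorem sum_mul_eq (h : PeircePair f e) (x : R) : f * x = ∑ i, ∑ j, e i * x * e j := by
  simp only [← Finset.mul_sum, ← Finset.sum_mul, h.sum_eq]
  rw [mul_assoc, Subring.mem_center_iff.mp h.mem_center, ← mul_assoc, h.isIdempotentElem_sum]

theorem mul_mul_mem (h : PeircePair f e) (i j : Bool) (x : R) :
    e i * x * e j ∈ peirceComponent (e i) (e j) :=
  mul_mul_mem_peirceComponent (h.isIdempotentElem i) (h.isIdempotentElem j) x

theorem component_mul_component (h : PeircePair f e) {i j k l : Bool} (hjk : j ≠ k) {x y : R}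
    (hx : x ∈ peirceComponent (e i) (e j)) (hy : y ∈ peirceComponent (e k) (e l)) : x * y = 0 :=
  mul_eq_zero_of_mem_peirceComponent (h.mul_eq_zero hjk) hx hy

theorem induction (h : PeircePair f e) {P : R → Prop}
    (component : ∀ i j, ∀ x ∈ peirceComponent (e i) (e j), P x)
    (add : ∀ x y, P x → P y → P (x + y)) (x : R) : P (f * x) := by
  have hP (i j : Bool) : P (e i * x * e j) := component i j _ (h.mul_mul_mem i j x)
  simp only [h.sum_mul_eq, Fintype.sum_bool]
  exact add _ _ (add _ _ (hP _ _) (hP _ _)) (add _ _ (hP _ _) (hP _ _))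

theorem eq_zero_of_mul_component (h : PeircePair f e) {i j : Bool} (k : Bool) {w : R}
    (hw : w ∈ peirceComponent (e i) (e j))
    (hwx : ∀ x ∈ peirceComponent (e j) (e k), w * x = 0) : w = 0 := by
  rw [← h.component_mul_sum hw]
  refine h.mul_eq_zero_of_forall k w fun m => ?_
  rw [← hw.2, mul_assoc, mul_assoc, ← mul_assoc (e j)]
  exact hwx _ (h.mul_mul_mem j k m)

theorem eq_zero_of_mem_center (h : PeircePair f e) {z : R} (hz : z ∈ Subring.center R)
    (hfz : f * z = z) {i : Bool} (hzi : z * e i = 0) : z = 0 := by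
  rw [Subring.mem_center_iff] at hz
  rw [← hfz, hz]
  exact h.mul_eq_zero_of_forall i z fun m => by rw [← hz m, mul_assoc, hzi, mul_zero]

theorem eq_zero_of_mem_center_of_mem_component (h : PeircePair f e) {i j : Bool} (hij : i ≠ j)
    {z : R} (hz : z ∈ Subring.center R) (hzij : z ∈ peirceComponent (e i) (e j)) : z = 0 := by
  rw [← hzij.2, ← Subring.mem_center_iff.mp hz, ← hzij.1, ← mul_assoc, h.mul_eq_zero hij.symm,
    zero_mul]

theorem mul_component_eq (h : PeircePair f e) {i j k : Bool} {x : R}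
    (hx : x ∈ peirceComponent (e i) (e j)) : e k * x = if k = i then x else 0 := by
  split_ifs with hki
  · rw [hki, hx.1]
  · rw [← hx.1, ← mul_assoc, h.mul_eq_zero hki, zero_mul]

theorem component_mul_eq (h : PeircePair f e) {i j k : Bool} {x : R}
    (hx : x ∈ peirceComponent (e i) (e j)) : x * e k = if j = k then x else 0 := by
  split_ifs with hjk
  · rw [← hjk, hx.2]
  · rw [← hx.2, mul_assoc, h.mul_eq_zero hjk, mul_zero]

theorem eq_zero_of_mem_component (h : PeircePair f e) {i j k l : Bool} (hik : i ≠ k) {x : R}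
    (hx : x ∈ peirceComponent (e i) (e j)) (hx' : x ∈ peirceComponent (e k) (e l)) : x = 0 := by
  rw [← hx.1, h.mul_component_eq hx', if_neg hik]

/-- Against an off-diagonal `x`, an element `w` of a corner satisfies `⁅a, w⁆ * x = 0`, because `a`
commutes with both `w * x` and `x`. -/
theorem mem_center_of_commute (h : PeircePair f e) {a : R} (hfa : f * a = a)
    (he : ∀ i, Commute a (e i))
    (hoff : ∀ i, ∀ x ∈ peirceComponent (e i) (e !i), Commute a x) : a ∈ Subring.center R := by
  have hdiag (i : Bool) (w : R) (hw : w ∈ peirceComponent (e i) (e i)) : Commute a w := by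
    have haw := lie_mem_peirceComponent hw (he i) (he i)
    refine sub_eq_zero.mp (h.eq_zero_of_mul_component (!i) haw fun x hx => ?_)
    rw [sub_mul, mul_assoc, mul_assoc, (hoff i x hx).eq,
      (hoff i _ (mul_mem_peirceComponent hw hx)).eq, mul_assoc, sub_self]
  refine Subring.mem_center_iff.mpr fun m => ?_
  have hm : Commute a (f * m) := by
    refine h.induction (P := Commute a) (fun i j x hx => ?_) (fun _ _ => Commute.add_right) m
    rcases Bool.eq_or_eq_not j i with rfl | rfl
    exacts [hdiag j x hx, hoff i x hx]
  have hfc := Subring.mem_center_iff.mp h.mem_center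
  rw [← hfa, ← mul_assoc, hfc, hm.symm.eq, ← mul_assoc, hfc a]

end PeircePair

end Peirce

section Graded

attribute [local instance] LieRing.ofAssociativeRing

variable {𝕜 R : Type*} [CommRing 𝕜] [Ring R] [Algebra 𝕜 R]

theorem center_mul_center_mul_map_eq_zero {D : R →ₗ[𝕜] R} {c p w : R}
    (hc : c ∈ Subring.center R) (hcw : c * w = 0) (hpw : p * D w = D w)
    (hD : D (c * p * w) = D (c * p) * w + c * p * D w) (hw : p * w = w) :
    c * (c * D w) = 0 := by
  rw [mul_assoc, hw, hcw, map_zero, mul_assoc c, hpw] at hD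
  have hcD := congr(c * $hD)
  rwa [mul_zero, mul_add, ← mul_assoc c (D _), ← Subring.mem_center_iff.mp hc, mul_assoc, hcw,
    mul_zero, zero_add, eq_comm] at hcD

/-- A linear map that preserves the Peirce components of a family of idempotents, does not see the
complement of `f`, and is a Lie derivation modulo the center. -/
structure IsGradedLieDerivation (f : R) (e : Bool → R) (D : R →ₗ[𝕜] R) : Prop where
  map_sum_mul : ∀ x, D (f * x) = D x
  map_mem : ∀ i j, ∀ x ∈ peirceComponent (e i) (e j), D x ∈ peirceComponent (e i) (e j)
  map_lie_sub_mem_center : ∀ x y, D ⁅x, y⁆ - ⁅D x, y⁆ - ⁅x, D y⁆ ∈ Subring.center R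

namespace IsGradedLieDerivation

variable {f : R} {e : Bool → R} {D : R →ₗ[𝕜] R}

/-- The defect of the Lie product rule is a central element of an off-diagonal component. -/
theorem map_mul_of_ne (hD : IsGradedLieDerivation f e D) (h : PeircePair f e) {i j l : Bool}
    (hil : i ≠ l) {x y : R} (hx : x ∈ peirceComponent (e i) (e j))
    (hy : y ∈ peirceComponent (e j) (e l)) : D (x * y) = D x * y + x * D y := by
  have hDx := hD.map_mem i j x hx
  have hDy := hD.map_mem j l y hy
  have hz := hD.map_lie_sub_mem_center x y
  simp only [Ring.lie_def, h.component_mul_component hil.symm hy hx,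
    h.component_mul_component hil.symm hy hDx, h.component_mul_component hil.symm hDy hx,
    sub_zero] at hz
  have hmem : D (x * y) - D x * y - x * D y ∈ peirceComponent (e i) (e l) :=
    sub_mem (sub_mem (hD.map_mem i l _ (mul_mem_peirceComponent hx hy))
      (mul_mem_peirceComponent hDx hy)) (mul_mem_peirceComponent hx hDy)
  have hzero := h.eq_zero_of_mem_center_of_mem_component hil hz hmem
  rwa [sub_sub, sub_eq_zero] at hzero

theorem map_mul_diag (hD : IsGradedLieDerivation f e D) (h : PeircePair f e) {i : Bool}
    {x y : R} (hx : x ∈ peirceComponent (e i) (e i)) (hy : y ∈ peirceComponent (e i) (e i)) :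
    D (x * y) = D x * y + x * D y := by
  have hxy := mul_mem_peirceComponent hx hy
  have hmem : D (x * y) - D x * y - x * D y ∈ peirceComponent (e i) (e i) :=
    sub_mem (sub_mem (hD.map_mem i i _ hxy)
      (mul_mem_peirceComponent (hD.map_mem i i x hx) hy))
      (mul_mem_peirceComponent hx (hD.map_mem i i y hy))
  have hzero := h.eq_zero_of_mul_component (!i) hmem fun t ht => by
    have hi : i ≠ !i := (Bool.not_ne_self i).symm
    have hassoc : D (x * y) * t + x * y * D t = D x * (y * t) + x * (D y * t + y * D t) := by
      rw [← hD.map_mul_of_ne h hi hxy ht, ← hD.map_mul_of_ne h hi hy ht,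
        ← hD.map_mul_of_ne h hi hx (mul_mem_peirceComponent hy ht), mul_assoc]
    rw [← sub_eq_zero] at hassoc
    rw [← hassoc]
    noncomm_ring
  rwa [sub_sub, sub_eq_zero] at hzero

theorem exists_center_map_mul (hD : IsGradedLieDerivation f e D) (h : PeircePair f e)
    {i : Bool} {x y : R} (hx : x ∈ peirceComponent (e i) (e !i))
    (hy : y ∈ peirceComponent (e !i) (e i)) :
    ∃ c ∈ Subring.center R, f * c = c ∧ D (x * y) = D x * y + x * D y + c * e i ∧
      D (y * x) = D y * x + y * D x - c * e !i := by
  have hDx := hD.map_mem _ _ x hx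
  have hDy := hD.map_mem _ _ y hy
  have hz := hD.map_lie_sub_mem_center x y
  set a := D (x * y) - (D x * y + x * D y) with ha
  set b := D (y * x) - (D y * x + y * D x) with hb
  have ha_mem : a ∈ peirceComponent (e i) (e i) :=
    sub_mem (hD.map_mem _ _ _ (mul_mem_peirceComponent hx hy))
      (add_mem (mul_mem_peirceComponent hDx hy) (mul_mem_peirceComponent hx hDy))
  have hb_mem : b ∈ peirceComponent (e !i) (e !i) :=
    sub_mem (hD.map_mem _ _ _ (mul_mem_peirceComponent hy hx))
      (add_mem (mul_mem_peirceComponent hDy hx) (mul_mem_peirceComponent hy hDx))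
  have hab : D ⁅x, y⁆ - ⁅D x, y⁆ - ⁅x, D y⁆ = a - b := by
    simp only [Ring.lie_def, map_sub, ha, hb]
    abel
  refine ⟨a - b, hab ▸ hz, ?_, ?_, ?_⟩
  · rw [mul_sub, h.sum_mul_component ha_mem, h.sum_mul_component hb_mem]
  · rw [sub_mul, ha_mem.2, h.component_mul_eq hb_mem, if_neg (Bool.not_ne_self i), sub_zero, ha]
    abel
  · rw [sub_mul, hb_mem.2, h.component_mul_eq ha_mem, if_neg (Bool.not_ne_self i).symm, hb]
    abel

/-- Expand `D (x * y * x)` in two ways. -/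
theorem center_mul_eq_zero [IsAddTorsionFree R] (hD : IsGradedLieDerivation f e D)
    (h : PeircePair f e) {i : Bool} {x y c : R} (hx : x ∈ peirceComponent (e i) (e !i))
    (hy : y ∈ peirceComponent (e !i) (e i))
    (hc : c ∈ Subring.center R) (hxy : D (x * y) = D x * y + x * D y + c * e i)
    (hyx : D (y * x) = D y * x + y * D x - c * e !i) : c * x = 0 := by
  have hi : i ≠ !i := (Bool.not_ne_self i).symm
  have hleft := hD.map_mul_of_ne h hi (mul_mem_peirceComponent hx hy) hx
  have hright := hD.map_mul_of_ne h hi hx (mul_mem_peirceComponent hy hx)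
  have hcx : x * (c * e !i) = c * x := by
    rw [← mul_assoc, Subring.mem_center_iff.mp hc, mul_assoc, hx.2]
  rw [hxy, add_mul, mul_assoc c, hx.1] at hleft
  rw [hyx, mul_sub, hcx, ← mul_assoc x y x, hleft] at hright
  refine self_eq_neg.mp (sub_eq_zero.mp ?_)
  rw [← sub_eq_zero] at hright
  rw [← hright]
  noncomm_ring

theorem map_mul_opposite [IsAddTorsionFree R] (hD : IsGradedLieDerivation f e D)
    (h : PeircePair f e) {i : Bool} {x y : R} (hx : x ∈ peirceComponent (e i) (e !i))
    (hy : y ∈ peirceComponent (e !i) (e i)) : D (x * y) = D x * y + x * D y := by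
  obtain ⟨c, hc, hfc, hxy, hyx⟩ := hD.exists_center_map_mul h hx hy
  have hcx : c * x = 0 := hD.center_mul_eq_zero h hx hy hc hxy hyx
  have hcxy : c * (x * y) = 0 := by rw [← mul_assoc, hcx, zero_mul]
  have hxy_mem := mul_mem_peirceComponent hx hy
  have hDx := hD.map_mem _ _ x hx
  have hDxy := hD.map_mem _ _ _ hxy_mem
  have hce : c * e i ∈ peirceComponent (e i) (e i) :=
    center_mul_mem_peirceComponent hc (h.idem_mem_component i)
  have hccDx := center_mul_center_mul_map_eq_zero hc hcx hDx.1
    (hD.map_mul_of_ne h (Bool.not_ne_self i).symm hce hx) hx.1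
  have hccDxy := center_mul_center_mul_map_eq_zero hc hcxy hDxy.1
    (hD.map_mul_diag h hce hxy_mem) hxy_mem.1
  have hcube : c ^ 3 * e i = 0 := by
    rw [hxy, mul_add, mul_add, mul_add, mul_add, ← mul_assoc c (D x), ← mul_assoc c (c * D x),
      hccDx, zero_mul, ← mul_assoc c x, hcx, zero_mul, mul_zero, add_zero, zero_add] at hccDxy
    rw [← hccDxy]
    noncomm_ring
  have hcube' : c ^ 3 = 0 := h.eq_zero_of_mem_center (pow_mem hc 3) (by
    rw [pow_succ', ← mul_assoc, hfc]) hcube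
  have := h.isReduced_center
  have hc0 : (⟨c, hc⟩ : Subring.center R) = 0 :=
    eq_zero_of_pow_eq_zero (n := 3) (Subtype.ext hcube')
  rw [hxy, show c = 0 from congr(($hc0).1), zero_mul, add_zero]

theorem map_mul_component [IsAddTorsionFree R] (hD : IsGradedLieDerivation f e D)
    (h : PeircePair f e) {i j k l : Bool} {x y : R} (hx : x ∈ peirceComponent (e i) (e j))
    (hy : y ∈ peirceComponent (e k) (e l)) : D (x * y) = D x * y + x * D y := by
  rcases eq_or_ne j k with rfl | hjk
  · rcases eq_or_ne i l with rfl | hil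
    · rcases Bool.eq_or_eq_not j i with rfl | rfl
      exacts [hD.map_mul_diag h hx hy, hD.map_mul_opposite h hx hy]
    · exact hD.map_mul_of_ne h hil hx hy
  · rw [h.component_mul_component hjk hx hy, h.component_mul_component hjk (hD.map_mem i j x hx) hy,
      h.component_mul_component hjk hx (hD.map_mem k l y hy), map_zero, add_zero]

theorem isAssocDerivation [IsAddTorsionFree R] (hD : IsGradedLieDerivation f e D)
    (h : PeircePair f e) : IsAssocDerivation D := fun x y => by
  have hfc := Subring.mem_center_iff.mp h.mem_center
  have hfD (x : R) : f * D x = D x := by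
    rw [← hD.map_sum_mul x]
    refine h.induction (P := fun x => f * D x = D x)
      (fun i j x hx => h.sum_mul_component (hD.map_mem i j x hx)) (fun x y hx hy => ?_) x
    rw [map_add, mul_add, hx, hy]
  have key : D (f * x * (f * y)) = D (f * x) * (f * y) + f * x * D (f * y) := by
    refine h.induction (P := fun x => D (x * (f * y)) = D x * (f * y) + x * D (f * y))
      (fun i j x hx => ?_) (fun x x' hx hx' => ?_) x
    · refine h.induction (P := fun y => D (x * y) = D x * y + x * D y)
        (fun k l y hy => hD.map_mul_component h hx hy) (fun y y' hy hy' => ?_) y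
      simp only [mul_add, map_add, hy, hy']
      abel
    · simp only [add_mul, map_add, hx, hx']
      abel
  have hfxy : f * x * (f * y) = f * (x * y) := by
    rw [mul_assoc, ← mul_assoc x, hfc x, mul_assoc, ← mul_assoc, h.isIdempotentElem_sum]
  rwa [hfxy, hD.map_sum_mul, hD.map_sum_mul, hD.map_sum_mul, ← mul_assoc, hfc, hfD, ← hfc,
    mul_assoc, hfD] at key

end IsGradedLieDerivation

end Graded

section Standard

attribute [local instance] LieRing.ofAssociativeRing

variable {𝕜 R : Type*} [CommRing 𝕜] [Ring R] [Algebra 𝕜 R]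

theorem exists_linearMap_comp_eq {V U W : Type*} [AddCommGroup V] [Module 𝕜 V] [AddCommGroup U]
    [Module 𝕜 U] [AddCommGroup W] [Module 𝕜 W] {φ : U →ₗ[𝕜] W} (hφ : Function.Injective φ)
    {g : V →ₗ[𝕜] W} (hg : ∀ v, ∃ u, φ u = g v) : ∃ l : V →ₗ[𝕜] U, φ ∘ₗ l = g := by
  refine ⟨(LinearEquiv.ofInjective φ hφ).symm ∘ₗ g.codRestrict φ.range hg, ?_⟩
  ext v
  exact congr(($((LinearEquiv.ofInjective φ hφ).apply_symm_apply ⟨g v, hg v⟩)).1)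

/-- The central elements under an idempotent `f`; multiplication by an idempotent of a `PeircePair`
is injective on them. -/
def centerUnder (𝕜 : Type*) {R : Type*} [CommRing 𝕜] [Ring R] [Algebra 𝕜 R] (f : R) :
    Submodule 𝕜 R :=
  Subalgebra.toSubmodule (Subalgebra.center 𝕜 R) ⊓
    LinearMap.eqLocus (LinearMap.mulLeft 𝕜 f) LinearMap.id

theorem mem_centerUnder {f z : R} : z ∈ centerUnder 𝕜 f ↔ z ∈ Subring.center R ∧ f * z = z :=
  Iff.rfl

/-- A Lie derivation that lives under the idempotent `f` and maps the idempotents `e i` into the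
center; every Lie derivation is of this form up to standard ones. -/
structure IsNormalized (f : R) (e : Bool → R) (L : LieDerivation 𝕜 R R) : Prop where
  map_sum_mul : ∀ x, L (f * x) = L x
  sum_mul_map : ∀ x, f * L x = L x
  map_idem_mem_center : ∀ i, L (e i) ∈ Subring.center R

theorem IsNormalized.map_lie_idem {f : R} {e : Bool → R} {L : LieDerivation 𝕜 R R}
    (hL : IsNormalized f e L) (i : Bool) (x : R) : L ⁅e i, x⁆ = ⁅e i, L x⁆ := by
  rw [L.apply_lie_eq_add, mem_center_iff_lie_eq_zero.mp (hL.map_idem_mem_center i), add_zero]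

namespace PeircePair

variable {f : R} {e : Bool → R} {L : LieDerivation 𝕜 R R}

theorem lie_idem_eq (h : PeircePair f e) {i : Bool} {x : R}
    (hx : x ∈ peirceComponent (e i) (e !i)) : ⁅e i, x⁆ = x := by
  rw [Ring.lie_def, hx.1, h.component_mul_eq hx, if_neg (Bool.not_ne_self i), sub_zero]

theorem commute_map_idem (h : PeircePair f e) {i : Bool} (hcomm : ∀ j, Commute (L (e i)) (e j))
    {x : R} (hx : x ∈ peirceComponent (e i) (e !i)) : Commute (L (e i)) x := by
  have hmem := lie_mem_peirceComponent hx (hcomm i) (hcomm !i)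
  have hL := L.apply_lie_eq_add (e i) x
  rw [h.lie_idem_eq hx, Ring.lie_def (e i)] at hL
  have hcompr := congr(e i * $hL * e !i)
  rw [mul_add, add_mul, hmem.1, hmem.2, mul_sub, sub_mul, ← mul_assoc (e i) (e i),
    (h.isIdempotentElem i).eq, ← mul_assoc, mul_assoc (e i * _), h.mul_eq_zero
    (Bool.not_ne_self i).symm, mul_zero, sub_zero, left_eq_add] at hcompr
  rwa [commute_iff_lie_eq]

theorem map_idem_mem_center (h : PeircePair f e) (hfL : ∀ x, f * L x = L x)
    (he : Commute (L (e true)) (e true)) (i : Bool) : L (e i) ∈ Subring.center R := by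
  have hLf := lieDerivation_apply_mem_center L h.mem_center
  have hcenter {z : R} (hz : z ∈ Subring.center R) (x : R) : Commute z x :=
    (Subring.mem_center_iff.mp hz x).symm
  have hsum : e true + e false = f := h.add_not_eq true
  have hcomm (j : Bool) : Commute (L (e true)) (e j) := by
    cases j
    · rw [← add_sub_cancel_left (e true) (e false), hsum]
      exact (hcenter h.mem_center _).symm.sub_right he
    · exact he
  have hfalse : L (e false) = L f - L (e true) := by
    rw [← hsum, map_add, add_sub_cancel_left]
  have hcomm' (j : Bool) : Commute (L (e false)) (e j) :=
    hfalse ▸ (hcenter hLf _).sub_left (hcomm j)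
  have htrue : L (e true) ∈ Subring.center R := by
    refine h.mem_center_of_commute (hfL _) hcomm fun i x hx => ?_
    cases i
    · rw [← sub_sub_cancel (L f) (L (e true)), ← hfalse]
      exact (hcenter hLf _).sub_left (h.commute_map_idem hcomm' hx)
    · exact h.commute_map_idem hcomm hx
  cases i
  · exact hfalse ▸ sub_mem hLf htrue
  · exact htrue

theorem mem_component_of_lie_eq [IsAddTorsionFree R] (h : PeircePair f e) {i : Bool} {y : R}
    (hfy : f * y = y) (hy : ⁅e i, y⁆ = y) : y ∈ peirceComponent (e i) (e !i) := by
  have he := (h.isIdempotentElem i).eq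
  rw [Ring.lie_def] at hy
  have heye : e i * y * e i = 0 := by
    have hcompr := congr(e i * $hy * e i)
    rw [mul_sub, sub_mul, ← mul_assoc, ← mul_assoc, he, mul_assoc _ (e i) (e i), he,
      sub_self] at hcompr
    exact hcompr.symm
  have hye : y * e i = 0 := by
    have hneg := congr($hy * e i)
    rw [sub_mul, heye, mul_assoc y, he, zero_sub] at hneg
    exact self_eq_neg.mp hneg.symm
  rw [hye, sub_zero] at hy
  refine ⟨hy, ?_⟩
  rw [← add_zero (y * _), ← hye, add_comm, ← mul_add, h.add_not_eq,
    Subring.mem_center_iff.mp h.mem_center, hfy]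

theorem mem_component_of_commute (h : PeircePair f e) {i : Bool} {y : R}
    (hfy : f * y = y) (hy : Commute y (e i)) (hy0 : y * e (!i) = 0) :
    y ∈ peirceComponent (e i) (e i) := by
  have hye : y * e i = y := by
    rw [← add_zero (y * _), ← hy0, ← mul_add, h.add_not_eq,
      Subring.mem_center_iff.mp h.mem_center, hfy]
  exact ⟨hy.eq ▸ hye, hye⟩

theorem map_mem_component_of_ne [IsAddTorsionFree R] (h : PeircePair f e)
    (hL : IsNormalized f e L) {i : Bool} {x : R} (hx : x ∈ peirceComponent (e i) (e !i)) :
    L x ∈ peirceComponent (e i) (e !i) :=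
  h.mem_component_of_lie_eq (hL.sum_mul_map x) (by rw [← hL.map_lie_idem, h.lie_idem_eq hx])

theorem commute_map_component (h : PeircePair f e) (hL : IsNormalized f e L) {i : Bool} {x : R}
    (hx : x ∈ peirceComponent (e i) (e i)) (j : Bool) : Commute (L x) (e j) := by
  have hlie : ⁅e j, x⁆ = 0 := by
    rw [Ring.lie_def, h.mul_component_eq hx, h.component_mul_eq hx]
    simp only [eq_comm, sub_self]
  exact (commute_iff_lie_eq.mpr (by rw [← hL.map_lie_idem, hlie, map_zero])).symm

/-- For `x` and `n` in opposite corners, `⁅L x, n⁆ = -⁅x, L n⁆` lies in both corners. -/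
theorem commute_map_opposite_corner (h : PeircePair f e) (hL : IsNormalized f e L) {i : Bool}
    {x : R} (hx : x ∈ peirceComponent (e i) (e i)) (m : R) :
    Commute (L x) (e (!i) * m * e !i) := by
  have hi : i ≠ !i := (Bool.not_ne_self i).symm
  set n := e (!i) * m * e !i
  have hn : n ∈ peirceComponent (e !i) (e !i) := h.mul_mul_mem _ _ m
  have hxn : ⁅x, n⁆ = 0 := by
    rw [Ring.lie_def, h.component_mul_component hi hx hn, h.component_mul_component hi.symm hn hx,
      sub_zero]
  have hLxn : ⁅x, L n⁆ + ⁅L x, n⁆ = 0 := by rw [← L.apply_lie_eq_add, hxn, map_zero]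
  have hn' := lie_mem_peirceComponent hn (h.commute_map_component hL hx !i)
    (h.commute_map_component hL hx !i)
  have hx' := lie_mem_peirceComponent hx (h.commute_map_component hL hn i)
    (h.commute_map_component hL hn i)
  rw [← lie_skew, neg_add_eq_zero] at hLxn
  exact commute_iff_lie_eq.mpr (h.eq_zero_of_mem_component hi (hLxn ▸ hx') hn')

theorem exists_centerUnder_mul_eq (h : PeircePair f e) (hL : IsNormalized f e L) {i : Bool}
    {x : R} (hx : x ∈ peirceComponent (e i) (e i)) :
    ∃ z ∈ centerUnder 𝕜 f, z * e (!i) = L x * e !i := by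
  obtain ⟨z, hz, hze⟩ := h.exists_mem_center (!i) (L x) (h.commute_map_opposite_corner hL hx)
  refine ⟨f * z, mem_centerUnder.mpr ⟨mul_mem h.mem_center hz, ?_⟩, ?_⟩
  · rw [← mul_assoc, h.isIdempotentElem_sum]
  · rw [mul_assoc, hze, ← mul_assoc, hL.sum_mul_map]

theorem exists_center_linearMap (h : PeircePair f e) (hL : IsNormalized f e L) (i : Bool) :
    ∃ l : R →ₗ[𝕜] R, (∀ x, l x ∈ Subring.center R) ∧ (∀ x, e i * x * e i = 0 → l x = 0) ∧
      ∀ x ∈ peirceComponent (e i) (e i), L x - l x ∈ peirceComponent (e i) (e i) := by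
  have hinj : Function.Injective ((LinearMap.mulRight 𝕜 (e !i)).domRestrict (centerUnder 𝕜 f)) :=
    (injective_iff_map_eq_zero _).mpr fun z hz =>
      Subtype.ext (h.eq_zero_of_mem_center z.2.1 z.2.2 hz)
  obtain ⟨l, hl⟩ := exists_linearMap_comp_eq hinj
    (g := LinearMap.mulRight 𝕜 (e !i) ∘ₗ L.toLinearMap ∘ₗ LinearMap.mulLeftRight 𝕜 (e i, e i))
    fun x => by
      obtain ⟨z, hz, hze⟩ := h.exists_centerUnder_mul_eq hL (h.mul_mul_mem i i x)
      exact ⟨⟨z, hz⟩, hze⟩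
  have hle (x : R) : (l x : R) * e (!i) = L (e i * x * e i) * e !i := LinearMap.congr_fun hl x
  have hl_center (x : R) : (l x : R) ∈ Subring.center R := (mem_centerUnder.mp (l x).2).1
  have hfl (x : R) : f * l x = l x := (mem_centerUnder.mp (l x).2).2
  refine ⟨(centerUnder 𝕜 f).subtype ∘ₗ l, hl_center, fun x hx => ?_, fun x hx => ?_⟩
  · exact h.eq_zero_of_mem_center (hl_center x) (hfl x) (i := !i)
      ((hle x).trans (by rw [hx, map_zero, zero_mul]))
  · refine h.mem_component_of_commute (y := L x - l x) ?_ ?_ ?_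
    · rw [mul_sub, hL.sum_mul_map, hfl]
    · exact (h.commute_map_component hL hx i).sub_left
        (Subring.mem_center_iff.mp (hl_center x) _).symm
    · rw [sub_mul, hle, hx.1, hx.2, sub_self]

theorem exists_isGradedLieDerivation [IsAddTorsionFree R] (h : PeircePair f e)
    (hL : IsNormalized f e L) :
    ∃ D : R →ₗ[𝕜] R, IsGradedLieDerivation f e D ∧ ∀ x, L x - D x ∈ Subring.center R := by
  choose l hl_center hl0 hl using h.exists_center_linearMap hL
  have hD_center (x : R) : L x - (L.toLinearMap - ∑ j, l j) x ∈ Subring.center R := by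
    simpa using add_mem (hl_center true x) (hl_center false x)
  have hsum (i : Bool) (x : R) : (∑ j, l j) x = l i x + l (!i) x := by
    cases i <;> simp [add_comm]
  refine ⟨L.toLinearMap - ∑ j, l j, ⟨fun x => ?_, fun i j x hx => ?_, fun x y => ?_⟩, hD_center⟩
  · have hx : (∑ j, l j) (x - f * x) = 0 := by
      have hex (i : Bool) : e i * (x - f * x) * e i = 0 := by
        rw [mul_sub, ← mul_assoc (e i), Subring.mem_center_iff.mp h.mem_center (e i),
          h.sum_mul_component (h.idem_mem_component i), sub_self, zero_mul]
      rw [hsum true, hl0 _ _ (hex _), hl0 _ _ (hex _), add_zero]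
    rw [map_sub, sub_eq_zero] at hx
    exact congr($(hL.map_sum_mul x) - $(hx.symm))
  · rw [LinearMap.sub_apply, hsum i, ← sub_sub]
    have hcompr (k : Bool) (hk : k ≠ i ∨ j ≠ k) : e k * x * e k = 0 := by
      rw [h.mul_component_eq hx, ite_mul, h.component_mul_eq hx]
      grind
    rcases Bool.eq_or_eq_not j i with rfl | rfl
    · rw [hl0 (!j) x (hcompr _ (.inl (Bool.not_ne_self j))), sub_zero]
      exact hl j x hx
    · rw [hl0 i x (hcompr _ (.inr (Bool.not_ne_self i))),
        hl0 (!i) x (hcompr _ (.inl (Bool.not_ne_self i))), sub_zero, sub_zero]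
      exact h.map_mem_component_of_ne hL hx
  · rw [sub_sub, ← apply_lie_of_sub_mem_center hD_center, ← neg_sub]
    exact neg_mem (hD_center ⁅x, y⁆)

theorem isStandard_of_isNormalized [IsAddTorsionFree R] (h : PeircePair f e)
    (hL : IsNormalized f e L) : IsStandard L := by
  obtain ⟨D, hD, hLD⟩ := h.exists_isGradedLieDerivation hL
  exact ⟨D, hD.isAssocDerivation h, hLD⟩

theorem isNormalized_centralCompression (h : PeircePair f e) (he : Commute (L (e true)) (e true)) :
    IsNormalized f e (centralCompression L h.mem_center h.isIdempotentElem_sum) where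
  map_sum_mul x := by simp only [centralCompression_apply, ← mul_assoc, h.isIdempotentElem_sum.eq]
  sum_mul_map x := by simp only [centralCompression_apply, ← mul_assoc, h.isIdempotentElem_sum.eq]
  map_idem_mem_center := h.map_idem_mem_center
    (fun x => by simp only [centralCompression_apply, ← mul_assoc, h.isIdempotentElem_sum.eq]) <| by
      rw [centralCompression_apply, h.sum_mul_component (h.idem_mem_component true)]
      exact Commute.mul_left (Subring.mem_center_iff.mp h.mem_center _).symm he

theorem isStandard [IsAddTorsionFree R] (h : PeircePair f e)
    (hab : ∀ x y : R, f * ⁅x, y⁆ = ⁅x, y⁆) (L : LieDerivation 𝕜 R R) : IsStandard L := by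
  refine IsStandard.of_sub_ad (s := ⁅L (e true), e true⁆) ?_
  refine IsStandard.of_sub_mem_center ?_
    (sub_centralCompression_mem_center _ h.mem_center h.isIdempotentElem_sum hab)
  exact h.isStandard_of_isNormalized <| h.isNormalized_centralCompression <| by
    simpa only [LieDerivation.sub_apply, LieDerivation.ad_apply_apply] using
      commute_sub_lie_lie_of_isIdempotentElem (h.isIdempotentElem true) (L (e true))

theorem exists_assocDerivation_add [IsAddTorsionFree R] (h : PeircePair f e)
    (hab : ∀ x y, f * (x * y - y * x) = x * y - y * x) (L : R →ₗ[𝕜] R)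
    (hL : ∀ x y, L (x * y - y * x) = (L x * y - y * L x) + (x * L y - L y * x)) :
    ∃ D lam : R →ₗ[𝕜] R, (∀ x y, D (x * y) = D x * y + x * D y) ∧
      (∀ x z, lam x * z = z * lam x) ∧ (∀ x y, lam (x * y - y * x) = 0) ∧ L = D + lam := by
  let L' : LieDerivation 𝕜 R R :=
    { L with leibniz' x y := (hL x y).trans (by simp only [Ring.lie_def]; abel) }
  obtain ⟨D, lam, hD, hcenter, hlie, hadd⟩ := (h.isStandard hab L').exists_eq_add
  exact ⟨D, lam, hD, fun x z => (Subring.mem_center_iff.mp (hcenter x) z).symm, hlie, hadd⟩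

end PeircePair

end Standard

section Projections

variable {H : Type*} [NormedAddCommGroup H] [InnerProductSpace ℂ H] [CompleteSpace H]

/-- The orthogonal projection onto the closure of a subspace. -/
noncomputable def closureProj (K : Submodule ℂ H) : H →L[ℂ] H :=
  K.topologicalClosure.starProjection

theorem isStarProjection_closureProj (K : Submodule ℂ H) : IsStarProjection (closureProj K) :=
  isStarProjection_starProjection

theorem closureProj_apply_eq_self_iff {K : Submodule ℂ H} {v : H} :
    closureProj K v = v ↔ v ∈ K.topologicalClosure :=
  Submodule.starProjection_eq_self_iff

theorem closureProj_apply_of_mem {K : Submodule ℂ H} {v : H} (hv : v ∈ K) : closureProj K v = v :=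
  closureProj_apply_eq_self_iff.mpr (K.le_topologicalClosure hv)

theorem closureProj_apply_mem (K : Submodule ℂ H) (v : H) :
    closureProj K v ∈ K.topologicalClosure :=
  Submodule.starProjection_apply_mem _ v

theorem closureProj_mul_eq_self {K : Submodule ℂ H} {T : H →L[ℂ] H}
    (hT : ∀ v, T v ∈ K.topologicalClosure) : closureProj K * T = T :=
  ContinuousLinearMap.ext fun v => closureProj_apply_eq_self_iff.mpr (hT v)

theorem mul_closureProj_eq_self {K : Submodule ℂ H} {T : H →L[ℂ] H}
    (hT : ∀ v, star T v ∈ K.topologicalClosure) : T * closureProj K = T := by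
  have h := congr(star $(closureProj_mul_eq_self hT))
  rwa [star_mul, star_star, (isStarProjection_closureProj K).isSelfAdjoint.star_eq] at h

theorem closureProj_mul_mul_closureProj {K : Submodule ℂ H} {y : H →L[ℂ] H}
    (hy : ∀ v ∈ K, y v ∈ K) :
    closureProj K * (y * closureProj K) = y * closureProj K :=
  closureProj_mul_eq_self fun v =>
    show y (closureProj K v) ∈ _ from map_mem_closure y.continuous (closureProj_apply_mem K v) hy

theorem commute_closureProj {K : Submodule ℂ H} {y : H →L[ℂ] H}
    (hy : ∀ v ∈ K, y v ∈ K) (hy' : ∀ v ∈ K, star y v ∈ K) : Commute (closureProj K) y := by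
  have h := congr(star $(closureProj_mul_mul_closureProj hy'))
  simp only [star_mul, star_star, (isStarProjection_closureProj K).isSelfAdjoint.star_eq] at h
  rw [mul_assoc, closureProj_mul_mul_closureProj hy] at h
  exact h.symm

theorem mul_nonneg_of_isStarProjection_of_commute {A : Type*} [NonUnitalRing A] [PartialOrder A]
    [StarRing A] [StarOrderedRing A] {E b : A} (hE : IsStarProjection E)
    (hb : 0 ≤ b) (h : Commute E b) : 0 ≤ b * E := by
  have hconj := hE.isSelfAdjoint.conjugate_nonneg hb
  rwa [h.eq, mul_assoc, hE.isIdempotentElem.eq] at hconj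

/-- Take the projection onto the closure of the range of the positive part of `s`. -/
theorem exists_isStarProjection_mul_nonneg {s : H →L[ℂ] H} (hs : IsSelfAdjoint s) :
    ∃ E : H →L[ℂ] H, IsStarProjection E ∧ (∀ y, Commute s y → Commute E y) ∧
      0 ≤ s * E ∧ s * (1 - E) ≤ 0 := by
  have hpos_comm (y : H →L[ℂ] H) (hy : Commute s y) : ∀ v ∈ s⁺.range, y v ∈ s⁺.range := by
    rintro _ ⟨w, rfl⟩
    exact ⟨y w, congr($((hy.cfcₙ_real _ : Commute s⁺ y).eq) w)⟩
  have hpos : s⁺ * closureProj s⁺.range = s⁺ := mul_closureProj_eq_self fun v => by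
    rw [(CFC.posPart_nonneg s).isSelfAdjoint.star_eq]
    exact Submodule.le_topologicalClosure _ ⟨v, rfl⟩
  have hneg : s⁻ * closureProj s⁺.range = 0 := by
    have hker : s⁺.range.topologicalClosure ≤ s⁻.ker :=
      Submodule.topologicalClosure_minimal _
        (by rintro _ ⟨w, rfl⟩; exact congr($(CFC.negPart_mul_posPart s) w)) s⁻.isClosed_ker
    exact ContinuousLinearMap.ext fun v => hker (closureProj_apply_mem _ v)
  have hsE : s * closureProj s⁺.range = s⁺ := by
    have h : (s⁺ - s⁻) * closureProj s⁺.range = s⁺ := by rw [sub_mul, hpos, hneg, sub_zero]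
    rwa [CFC.posPart_sub_negPart s hs] at h
  have hsE' : s * (1 - closureProj s⁺.range) = -s⁻ := by
    rw [mul_sub, mul_one, hsE, sub_eq_iff_eq_add, neg_add_eq_sub, CFC.posPart_sub_negPart s hs]
  exact ⟨closureProj s⁺.range, isStarProjection_closureProj _,
    fun y hy => commute_closureProj (hpos_comm y hy)
      (hpos_comm _ (by simpa [hs.star_eq] using hy.star_star)),
    by rw [hsE]; exact CFC.posPart_nonneg s,
    by rw [hsE']; exact neg_nonpos.mpr (CFC.negPart_nonneg s)⟩

theorem exists_isStarProjection_sub_half {a : H →L[ℂ] H} {r : ℝ} (ha : 0 ≤ a)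
    (har : a ≤ algebraMap ℝ _ r) :
    ∃ E : H →L[ℂ] H, IsStarProjection E ∧ (∀ y, Commute a y → Commute E y) ∧
      0 ≤ a - (r / 2) • E ∧ a - (r / 2) • E ≤ algebraMap ℝ _ (r / 2) := by
  obtain ⟨E, hE, hcomm, hpos, hneg⟩ := exists_isStarProjection_mul_nonneg
    (ha.isSelfAdjoint.sub (.algebraMap (H →L[ℂ] H) (.all (r / 2))))
  have hcomm' (y : H →L[ℂ] H) (hy : Commute a y) : Commute E y :=
    hcomm y (hy.sub_left (Algebra.commutes _ y))
  have hEa := hcomm' a (.refl a)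
  have hhalf : algebraMap ℝ (H →L[ℂ] H) r = algebraMap ℝ _ (r / 2) + algebraMap ℝ _ (r / 2) := by
    rw [← map_add, add_halves]
  have hlow : 0 ≤ a * (1 - E) :=
    mul_nonneg_of_isStarProjection_of_commute hE.one_sub ha ((Commute.one_left a).sub_left hEa)
  have hhigh : 0 ≤ (algebraMap ℝ _ r - a) * E :=
    mul_nonneg_of_isStarProjection_of_commute hE (sub_nonneg.mpr har)
      (.sub_right (Algebra.commutes r E).symm hEa)
  refine ⟨E, hE, hcomm', ?_, ?_⟩
  · convert add_nonneg hpos hlow using 1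
    rw [Algebra.smul_def]
    noncomm_ring
  · rw [← sub_nonneg]
    convert add_nonneg hhigh (neg_nonneg.mpr hneg) using 1
    rw [Algebra.smul_def, hhalf]
    noncomm_ring

theorem exists_isStarProjection_sub_sum_le {a : H →L[ℂ] H} (ha : 0 ≤ a) :
    ∃ p : ℕ → H →L[ℂ] H, (∀ n, IsStarProjection (p n)) ∧
      (∀ n y, Commute a y → Commute (p n) y) ∧
      ∀ N, 0 ≤ a - ∑ n ∈ Finset.range N, (‖a‖ / 2 ^ n / 2) • p n ∧
        a - ∑ n ∈ Finset.range N, (‖a‖ / 2 ^ n / 2) • p n ≤ algebraMap ℝ _ (‖a‖ / 2 ^ N) := by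
  choose! p hp hcomm hpos hle using fun (b : H →L[ℂ] H) (r : ℝ)
    (h : 0 ≤ b ∧ b ≤ algebraMap ℝ _ r) => exists_isStarProjection_sub_half h.1 h.2
  let u : ℕ → H →L[ℂ] H :=
    Nat.rec a fun n b => b - (‖a‖ / 2 ^ n / 2) • p b (‖a‖ / 2 ^ n)
  have hu (n : ℕ) : 0 ≤ u n ∧ u n ≤ algebraMap ℝ _ (‖a‖ / 2 ^ n) := by
    induction n with
    | zero => exact ⟨ha, by simpa [u] using ha.isSelfAdjoint.le_algebraMap_norm_self⟩
    | succ n ih =>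
      rw [pow_succ, ← div_div]
      exact ⟨hpos _ _ ih, hle _ _ ih⟩
  have hu_comm (n : ℕ) : ∀ y, Commute a y → Commute (u n) y := by
    induction n with
    | zero => exact fun _ h => h
    | succ n ih =>
      exact fun y hy => (ih y hy).sub_left (.smul_left (hcomm _ _ (hu n) y (ih y hy)) _)
  have hu_eq (N : ℕ) :
      a - ∑ n ∈ Finset.range N, (‖a‖ / 2 ^ n / 2) • p (u n) (‖a‖ / 2 ^ n) = u N := by
    induction N with
    | zero => simp [u]
    | succ N ih => rw [Finset.sum_range_succ, ← sub_sub, ih]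
  exact ⟨fun n => p (u n) (‖a‖ / 2 ^ n), fun n => hp _ _ (hu n),
    fun n y hy => hcomm _ _ (hu n) y (hu_comm n y hy), fun N => by rw [hu_eq]; exact hu N⟩

theorem summable_smul_isStarProjection {A ι : Type*} [CStarAlgebra A] {r : ι → ℝ} {p : ι → A}
    (hr : Summable r) (hr0 : ∀ n, 0 ≤ r n) (hp : ∀ n, IsStarProjection (p n)) :
    Summable fun n => r n • p n :=
  hr.of_norm_bounded fun n => by
    rw [norm_smul, Real.norm_of_nonneg (hr0 n)]
    exact mul_le_of_le_one_right (hr0 n) ((hp n).norm_le)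

/-- The binary expansion of a positive operator: each digit is a spectral projection of the
remainder, which it halves. -/
theorem exists_hasSum_isStarProjection {a : H →L[ℂ] H} (ha : 0 ≤ a) :
    ∃ (r : ℕ → ℝ) (p : ℕ → H →L[ℂ] H), Summable r ∧ (∀ n, 0 ≤ r n) ∧
      (∀ n, IsStarProjection (p n)) ∧ (∀ n y, Commute a y → Commute (p n) y) ∧
      HasSum (fun n => r n • p n) a := by
  obtain ⟨p, hp, hcomm, hle⟩ := exists_isStarProjection_sub_sum_le ha
  have hsum : Summable fun n : ℕ => ‖a‖ / 2 ^ n / 2 :=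
    (summable_geometric_two' ‖a‖).congr fun n => div_right_comm ..
  have hr (n : ℕ) : 0 ≤ ‖a‖ / 2 ^ n / 2 := by positivity
  refine ⟨_, p, hsum, hr, hp, hcomm, ?_⟩
  rw [Summable.hasSum_iff_tendsto_nat (summable_smul_isStarProjection hsum hr hp),
    tendsto_iff_norm_sub_tendsto_zero]
  refine squeeze_zero (g := fun N : ℕ => ‖a‖ / 2 ^ N) (fun _ => norm_nonneg _) (fun N => ?_) ?_
  · rw [norm_sub_rev, CStarAlgebra.norm_le_iff_le_algebraMap _ (by positivity) (hle N).1]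
    exact (hle N).2
  · exact tendsto_const_nhds.div_atTop (tendsto_pow_atTop_atTop_of_one_lt one_lt_two)

end Projections

section OperatorAlgebra

theorem commute_of_hasSum {A ι : Type*} [NonUnitalNonAssocSemiring A] [TopologicalSpace A]
    [IsTopologicalSemiring A] [T2Space A] {g : ι → A} {a x : A} (h : ∀ i, Commute x (g i))
    (hg : HasSum g a) : Commute x a :=
  (hg.mul_left x).unique (by simpa only [(h _).eq] using hg.mul_right x)

theorem mem_of_forall_nonneg_mem {A : Type*} [CStarAlgebra A] [PartialOrder A] [StarOrderedRing A]
    (V : StarSubalgebra ℂ A) (S : Submodule ℂ A) (h : ∀ a ∈ V, 0 ≤ a → a ∈ S) {a : A}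
    (ha : a ∈ V) : a ∈ S := by
  have hsa (b : selfAdjoint A) (hb : (b : A) ∈ V) : (b : A) ∈ S := by
    have hV (r : ℝ) : algebraMap ℝ A r ∈ V := V.algebraMap_mem (r : ℂ)
    have hpos : (b : A) + algebraMap ℝ A ‖(b : A)‖ ∈ S := h _ (add_mem hb (hV _))
      (neg_le_iff_add_nonneg.mp b.2.neg_algebraMap_norm_le_self)
    have hnorm : algebraMap ℝ A ‖(b : A)‖ ∈ S := h _ (hV _) (algebraMap_nonneg _ (norm_nonneg _))
    simpa using sub_mem hpos hnorm
  have : SMulMemClass (StarSubalgebra ℂ A) ℝ A := .ofIsScalarTower _ ℝ ℂ A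
  rw [← realPart_add_I_smul_imaginaryPart a]
  refine add_mem (hsa _ ?_) (S.smul_mem _ (hsa _ ?_))
  · rw [realPart_apply_coe]
    exact SMulMemClass.smul_mem _ (add_mem ha (star_mem ha))
  · rw [imaginaryPart_apply_coe]
    exact V.smul_mem (SMulMemClass.smul_mem _ (sub_mem ha (star_mem ha))) _

theorem mul_commutator_eq_zero {R σ : Type*} [Ring R] [SetLike σ R] [SubringClass σ R] {S : σ}
    {g e x : R} (hg : ∀ y ∈ S, y * y = 0 → g * y = 0) (he : IsIdempotentElem e) (heS : e ∈ S)
    (hx : x ∈ S) : g * (e * x - x * e) = 0 := by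
  have he' : 1 - e ∈ S := sub_mem (one_mem S) heS
  have h₁ : g * ((1 - e) * x * e) = 0 := hg _ (mul_mem (mul_mem he' hx) heS) <| by
    rw [mul_assoc _ x e, mul_assoc, ← mul_assoc (x * e), mul_assoc x, he.mul_one_sub_self]
    simp
  have h₂ : g * (e * x * (1 - e)) = 0 := hg _ (mul_mem (mul_mem heS hx) he') <| by
    rw [mul_assoc e, mul_assoc, ← mul_assoc (x * _), mul_assoc x, he.one_sub_mul_self]
    simp
  calc g * (e * x - x * e) = g * (e * x * (1 - e)) - g * ((1 - e) * x * e) := by noncomm_ring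
    _ = 0 := by rw [h₁, h₂, sub_zero]

end OperatorAlgebra

section InvariantSubspaces

open VonNeumannAlgebra

variable {H : Type*} [NormedAddCommGroup H] [InnerProductSpace ℂ H] [CompleteSpace H]
variable {M : VonNeumannAlgebra H}

theorem mem_of_forall_mem_commutant_commute {x : H →L[ℂ] H}
    (h : ∀ y ∈ M.commutant, Commute x y) : x ∈ M := by
  rw [← M.commutant_commutant, mem_commutant_iff]
  exact fun y hy => (h y hy).eq.symm

theorem commute_of_mem_commutant {x y : H →L[ℂ] H} (hx : x ∈ M) (hy : y ∈ M.commutant) :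
    Commute x y :=
  mem_commutant_iff.mp hy x hx

theorem mem_of_hasSum {ι : Type*} {g : ι → H →L[ℂ] H} {a : H →L[ℂ] H} (h : ∀ i, g i ∈ M)
    (hg : HasSum g a) : a ∈ M :=
  mem_of_forall_mem_commutant_commute fun _ hy =>
    (commute_of_hasSum (fun i => (commute_of_mem_commutant (h i) hy).symm) hg).symm

theorem real_smul_mem (r : ℝ) {a : H →L[ℂ] H} (ha : a ∈ M) : r • a ∈ M :=
  M.toStarSubalgebra.smul_mem ha (r : ℂ)

theorem commute_of_forall_isStarProjection {a x : H →L[ℂ] H} (ha : a ∈ M)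
    (hx : ∀ p ∈ M, IsStarProjection p → Commute x p) : Commute x a := by
  suffices a ∈ Subalgebra.toSubmodule (Subalgebra.centralizer ℂ {x}) from this x rfl
  refine mem_of_forall_nonneg_mem M.toStarSubalgebra _ (fun b hb hb0 => ?_) ha
  obtain ⟨r, p, -, -, hp, hcomm, hsum⟩ := exists_hasSum_isStarProjection hb0
  have hpM (n : ℕ) : p n ∈ M :=
    mem_of_forall_mem_commutant_commute fun y hy => hcomm n y (commute_of_mem_commutant hb hy)
  rintro _ rfl
  exact commute_of_hasSum (fun n => (hx _ (hpM n) (hp n)).smul_right (r n)) hsum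

/-- A subspace mapped into itself by every element of `N`; when `N` is the commutant of `M`,
these are the subspaces whose closures are the ranges of projections of `M`. -/
def IsInvariantSubspace (N : VonNeumannAlgebra H) (K : Submodule ℂ H) : Prop :=
  ∀ y ∈ N, K ≤ K.comap y.toLinearMap

theorem IsInvariantSubspace.sSup {N : VonNeumannAlgebra H} {s : Set (Submodule ℂ H)}
    (h : ∀ K ∈ s, IsInvariantSubspace N K) : IsInvariantSubspace N (sSup s) := fun y hy =>
  sSup_le fun K hK _ hv => le_sSup hK (h K hK y hy hv)

theorem IsInvariantSubspace.sup {N : VonNeumannAlgebra H} {K₁ K₂ : Submodule ℂ H}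
    (h₁ : IsInvariantSubspace N K₁) (h₂ : IsInvariantSubspace N K₂) :
    IsInvariantSubspace N (K₁ ⊔ K₂) := fun y hy =>
  sup_le ((h₁ y hy).trans (Submodule.comap_mono le_sup_left))
    ((h₂ y hy).trans (Submodule.comap_mono le_sup_right))

theorem IsInvariantSubspace.commute_closureProj {N : VonNeumannAlgebra H} {K : Submodule ℂ H}
    (hK : IsInvariantSubspace N K) {y : H →L[ℂ] H} (hy : y ∈ N) : Commute (closureProj K) y :=
  _root_.commute_closureProj (hK y hy) (hK _ (star_mem hy))

theorem IsInvariantSubspace.closureProj_mem {K : Submodule ℂ H}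
    (hK : IsInvariantSubspace M.commutant K) : closureProj K ∈ M :=
  mem_of_forall_mem_commutant_commute fun _ => hK.commute_closureProj

theorem isInvariantSubspace_commutant_range {a : H →L[ℂ] H} (ha : a ∈ M) :
    IsInvariantSubspace M.commutant a.range := by
  rintro y hy _ ⟨w, rfl⟩
  exact ⟨y w, congr($(commute_of_mem_commutant ha hy) w)⟩

/-- The smallest closed subspace containing the image of `P` under every element of `M`; the
projection onto it is the central support of the projection onto `P` when the latter is in `M`. -/
def cyclicClosure (M : VonNeumannAlgebra H) (P : Submodule ℂ H) : Submodule ℂ H :=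
  (Submodule.span ℂ {w | ∃ m ∈ M, ∃ v ∈ P, m v = w}).topologicalClosure

variable {P Q : Submodule ℂ H}

theorem isClosed_cyclicClosure : IsClosed (cyclicClosure M P : Set H) :=
  Submodule.isClosed_topologicalClosure _

theorem cyclicClosure_le {K : Submodule ℂ H} (hK : IsClosed (K : Set H))
    (h : ∀ m ∈ M, ∀ v ∈ P, m v ∈ K) : cyclicClosure M P ≤ K := by
  refine Submodule.topologicalClosure_minimal _ (Submodule.span_le.mpr ?_) hK
  rintro _ ⟨m, hm, v, hv, rfl⟩
  exact h m hm v hv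

theorem apply_mem_cyclicClosure {m : H →L[ℂ] H} (hm : m ∈ M) {v : H} (hv : v ∈ P) :
    m v ∈ cyclicClosure M P :=
  Submodule.le_topologicalClosure _ (Submodule.subset_span ⟨m, hm, v, hv, rfl⟩)

theorem le_cyclicClosure : P ≤ cyclicClosure M P := fun _ hv =>
  apply_mem_cyclicClosure (one_mem M) hv

theorem cyclicClosure_le_comap {y : H →L[ℂ] H}
    (h : ∀ m ∈ M, ∀ v ∈ P, y (m v) ∈ cyclicClosure M P) :
    cyclicClosure M P ≤ (cyclicClosure M P).comap y.toLinearMap :=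
  cyclicClosure_le (isClosed_cyclicClosure.preimage y.continuous) h

theorem isInvariantSubspace_cyclicClosure : IsInvariantSubspace M (cyclicClosure M P) := fun _ hy =>
  cyclicClosure_le_comap fun _ hm _ hv => apply_mem_cyclicClosure (mul_mem hy hm) hv

theorem IsInvariantSubspace.cyclicClosure (hP : IsInvariantSubspace M.commutant P) :
    IsInvariantSubspace M.commutant (cyclicClosure M P) := fun y hy =>
  cyclicClosure_le_comap fun m hm v hv => by
    have hcomm : y (m v) = m (y v) := congr($((commute_of_mem_commutant hm hy).eq.symm) v)
    rw [hcomm]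
    exact apply_mem_cyclicClosure hm (hP y hy hv)

theorem cyclicClosure_le_cyclicClosure (h : P ≤ cyclicClosure M Q) :
    cyclicClosure M P ≤ cyclicClosure M Q :=
  cyclicClosure_le isClosed_cyclicClosure fun m hm _ hv =>
    isInvariantSubspace_cyclicClosure m hm (h hv)

theorem cyclicClosure_mono (h : P ≤ Q) : cyclicClosure M P ≤ cyclicClosure M Q :=
  cyclicClosure_le_cyclicClosure (h.trans le_cyclicClosure)

theorem closureProj_cyclicClosure_apply_eq_self_iff {v : H} :
    closureProj (cyclicClosure M P) v = v ↔ v ∈ cyclicClosure M P := by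
  rw [closureProj_apply_eq_self_iff, isClosed_cyclicClosure.submodule_topologicalClosure_eq]

theorem closureProj_cyclicClosure_apply_mem (v : H) :
    closureProj (cyclicClosure M P) v ∈ cyclicClosure M P :=
  isClosed_cyclicClosure.submodule_topologicalClosure_eq.le (closureProj_apply_mem _ v)

theorem closureProj_cyclicClosure_mem_commutant :
    closureProj (cyclicClosure M P) ∈ M.commutant :=
  mem_commutant_iff.mpr fun _ hm =>
    (isInvariantSubspace_cyclicClosure.commute_closureProj hm).eq.symm

theorem range_le_cyclicClosure_range_star {a : H →L[ℂ] H} (ha : a ∈ M) :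
    a.range ≤ cyclicClosure M (star a).range := by
  have hsupp : a * closureProj (cyclicClosure M (star a).range) = a :=
    mul_closureProj_eq_self fun v => Submodule.le_topologicalClosure _
      (le_cyclicClosure (LinearMap.mem_range_self _ v))
  rintro _ ⟨v, rfl⟩
  have hv : a (closureProj (cyclicClosure M (star a).range) v) = a v := congr($hsupp v)
  exact hv ▸ isInvariantSubspace_cyclicClosure a ha (closureProj_cyclicClosure_apply_mem v)

end InvariantSubspaces

section OrthoPair

open VonNeumannAlgebra

variable {H : Type*} [NormedAddCommGroup H] [InnerProductSpace ℂ H] [CompleteSpace H]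
variable {M : VonNeumannAlgebra H}

/-- Orthogonal subspaces, each invariant under the commutant and each contained in the cyclic
closure of the other: up to closures, the ranges of a pair of orthogonal projections of `M` with
the same central support. -/
structure IsOrthoPair (M : VonNeumannAlgebra H) (p : Submodule ℂ H × Submodule ℂ H) : Prop where
  invariant_fst : IsInvariantSubspace M.commutant p.1
  invariant_snd : IsInvariantSubspace M.commutant p.2
  ortho : p.1 ⟂ p.2
  fst_le : p.1 ≤ cyclicClosure M p.2
  snd_le : p.2 ≤ cyclicClosure M p.1

theorem exists_maximal_isOrthoPair (M : VonNeumannAlgebra H) : ∃ p, Maximal (IsOrthoPair M) p := by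
  refine zorn_le₀ {p | IsOrthoPair M p} fun c hc hchain =>
    ⟨(sSup (Prod.fst '' c), sSup (Prod.snd '' c)), ⟨?_, ?_, ?_, ?_, ?_⟩, fun z hz =>
      ⟨le_sSup (Set.mem_image_of_mem _ hz), le_sSup (Set.mem_image_of_mem _ hz)⟩⟩
  · exact .sSup (Set.forall_mem_image.mpr fun p hp => (hc hp).invariant_fst)
  · exact .sSup (Set.forall_mem_image.mpr fun p hp => (hc hp).invariant_snd)
  · simp only [Submodule.isOrtho_sSup_left, Submodule.isOrtho_sSup_right, Set.forall_mem_image]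
    intro q hq p hp
    rcases hchain.total hp hq with h | h
    · exact (hc hq).ortho.mono_left h.1
    · exact (hc hp).ortho.mono_right h.2
  · exact sSup_le (Set.forall_mem_image.mpr fun p hp =>
      (hc hp).fst_le.trans (cyclicClosure_mono (le_sSup (Set.mem_image_of_mem _ hp))))
  · exact sSup_le (Set.forall_mem_image.mpr fun p hp =>
      (hc hp).snd_le.trans (cyclicClosure_mono (le_sSup (Set.mem_image_of_mem _ hp))))

namespace IsOrthoPair

variable {p q : Submodule ℂ H × Submodule ℂ H}

theorem sup (hp : IsOrthoPair M p) (hq : IsOrthoPair M q) (h₁ : p.1 ⟂ q.2) (h₂ : q.1 ⟂ p.2) :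
    IsOrthoPair M (p ⊔ q) where
  invariant_fst := hp.invariant_fst.sup hq.invariant_fst
  invariant_snd := hp.invariant_snd.sup hq.invariant_snd
  ortho := Submodule.isOrtho_sup_left.mpr
    ⟨Submodule.isOrtho_sup_right.mpr ⟨hp.ortho, h₁⟩, Submodule.isOrtho_sup_right.mpr ⟨h₂, hq.ortho⟩⟩
  fst_le := sup_le (hp.fst_le.trans (cyclicClosure_mono le_sup_left))
    (hq.fst_le.trans (cyclicClosure_mono le_sup_right))
  snd_le := sup_le (hp.snd_le.trans (cyclicClosure_mono le_sup_left))
    (hq.snd_le.trans (cyclicClosure_mono le_sup_right))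

theorem range_star {y : H →L[ℂ] H} (hy : y ∈ M) (hyy : y * y = 0) :
    IsOrthoPair M (y.range, (star y).range) where
  invariant_fst := isInvariantSubspace_commutant_range hy
  invariant_snd := isInvariantSubspace_commutant_range (star_mem hy)
  ortho := by
    rw [Submodule.isOrtho_iff_inner_eq]
    rintro _ ⟨v, rfl⟩ _ ⟨w, rfl⟩
    have hyv : y (y v) = 0 := congr($hyy v)
    simp [ContinuousLinearMap.star_eq_adjoint, ContinuousLinearMap.adjoint_inner_right, hyv]
  fst_le := range_le_cyclicClosure_range_star hy
  snd_le := by simpa only [star_star] using range_le_cyclicClosure_range_star (star_mem hy)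

end IsOrthoPair

theorem isOrtho_range_of_closureProj_mul_eq_zero {a : H →L[ℂ] H} {K : Submodule ℂ H}
    (ha : closureProj K * a = 0) : a.range ⟂ K := by
  rw [Submodule.isOrtho_iff_inner_eq]
  rintro _ ⟨v, rfl⟩ w hw
  have hav : closureProj K (a v) = 0 := congr($ha v)
  rw [← closureProj_apply_of_mem hw, ← ContinuousLinearMap.adjoint_inner_left,
    ← ContinuousLinearMap.star_eq_adjoint, (isStarProjection_closureProj K).isSelfAdjoint.star_eq]
  exact (congr(inner ℂ $hav w)).trans (inner_zero_left w)

variable {p : Submodule ℂ H × Submodule ℂ H}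

/-- Otherwise the ranges of `y` and `star y` would enlarge the pair. -/
theorem eq_zero_of_maximal_isOrthoPair (hp : Maximal (IsOrthoPair M) p) {y : H →L[ℂ] H}
    (hy : y ∈ M) (hyy : y * y = 0) (hfy : closureProj (cyclicClosure M p.1) * y = 0) : y = 0 := by
  have hfy' : closureProj (cyclicClosure M p.1) * star y = 0 := by
    have h := congr(star $hfy)
    rwa [star_mul, star_zero, (isStarProjection_closureProj _).isSelfAdjoint.star_eq,
      (commute_of_mem_commutant (star_mem hy) closureProj_cyclicClosure_mem_commutant).eq] at h
  have hle := hp.2 (hp.1.sup (.range_star hy hyy)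
    ((isOrtho_range_of_closureProj_mul_eq_zero hfy').mono_right le_cyclicClosure).symm
    ((isOrtho_range_of_closureProj_mul_eq_zero hfy).mono_right hp.1.snd_le)) le_sup_left
  ext v
  have hv : y v ∈ cyclicClosure M p.1 :=
    le_cyclicClosure (hle.1 (le_sup_right (a := p.1) (LinearMap.mem_range_self _ v)))
  rw [← closureProj_cyclicClosure_apply_eq_self_iff.mpr hv]
  exact congr($hfy v)

theorem mul_commutator_eq_of_maximal_isOrthoPair (hp : Maximal (IsOrthoPair M) p)
    {x y : H →L[ℂ] H} (hx : x ∈ M) (hy : y ∈ M) :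
    closureProj (cyclicClosure M p.1) * (x * y - y * x) = x * y - y * x := by
  set f := closureProj (cyclicClosure M p.1)
  have hf : IsIdempotentElem f := (isStarProjection_closureProj _).isIdempotentElem
  have hgM : 1 - f ∈ M := sub_mem (one_mem M) hp.1.invariant_fst.cyclicClosure.closureProj_mem
  have hg {m : H →L[ℂ] H} (hm : m ∈ M) : Commute (1 - f) m :=
    (commute_of_mem_commutant hm
      (sub_mem (one_mem _) closureProj_cyclicClosure_mem_commutant)).symm
  have hg_sq (w : H →L[ℂ] H) (hw : w ∈ M) (hww : w * w = 0) : (1 - f) * w = 0 :=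
    eq_zero_of_maximal_isOrthoPair hp (mul_mem hgM hw)
      (by rw [mul_assoc, ← mul_assoc w, ← (hg hw).eq, mul_assoc, hww, mul_zero, mul_zero])
      (by rw [← mul_assoc, hf.mul_one_sub_self, zero_mul])
  have hiff {a : H →L[ℂ] H} (ha : a ∈ M) :
      (1 - f) * (a * y - y * a) = 0 ↔ Commute ((1 - f) * y) a := by
    rw [mul_sub, sub_eq_zero, ← mul_assoc, ← mul_assoc, (hg ha).eq, mul_assoc, commute_iff_eq,
      eq_comm]
  have h : (1 - f) * (x * y - y * x) = 0 :=
    (hiff hx).mpr <| commute_of_forall_isStarProjection hx fun e he hpe =>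
      (hiff he).mp (mul_commutator_eq_zero hg_sq hpe.isIdempotentElem he hy)
  rwa [sub_mul, one_mul, sub_eq_zero, eq_comm] at h

end OrthoPair

section Corner

open VonNeumannAlgebra

variable {H : Type*} [NormedAddCommGroup H] [InnerProductSpace ℂ H] [CompleteSpace H]
variable {M : VonNeumannAlgebra H} {e p : H →L[ℂ] H}

/-- Take the central support of `p`. -/
theorem exists_isStarProjection_mul_eq (heM : e ∈ M) (hpM : p ∈ M) (hp : IsStarProjection p)
    (hep : e * p = p) (hpe : p * e = p) (hcorner : ∀ m ∈ M, Commute p (e * m * e)) :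
    ∃ z ∈ M, z ∈ M.commutant ∧ IsStarProjection z ∧ z * e = p := by
  set z := closureProj (cyclicClosure M p.range)
  have hzM' : z ∈ M.commutant := closureProj_cyclicClosure_mem_commutant
  have hzp : z * p = p := ContinuousLinearMap.ext fun v =>
    closureProj_cyclicClosure_apply_eq_self_iff.mpr
      (le_cyclicClosure (LinearMap.mem_range_self _ v))
  have hker : cyclicClosure M p.range ≤ ((1 - p) * e).ker :=
    cyclicClosure_le ((1 - p) * e).isClosed_ker fun m hm => by
      rintro _ ⟨v, rfl⟩
      have h : (1 - p) * e * (m * p) = 0 := by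
        rw [← hep, ← mul_assoc m, mul_assoc _ e, ← mul_assoc e, ← mul_assoc e, hep,
          ← (hcorner m hm).eq, ← mul_assoc, hp.isIdempotentElem.one_sub_mul_self, zero_mul]
      exact congr($h v)
  have hez : (1 - p) * e * z = 0 :=
    ContinuousLinearMap.ext fun v => hker (closureProj_cyclicClosure_apply_mem v)
  refine ⟨z, (isInvariantSubspace_commutant_range hpM).cyclicClosure.closureProj_mem, hzM',
    isStarProjection_closureProj _, ?_⟩
  rw [sub_mul, one_mul, hpe, sub_mul, sub_eq_zero, (commute_of_mem_commutant hpM hzM').eq,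
    hzp] at hez
  exact (commute_of_mem_commutant heM hzM').eq.symm.trans hez

theorem exists_mul_eq_of_nonneg {c : H →L[ℂ] H} (heM : e ∈ M) (he : IsStarProjection e)
    (hcM : c ∈ M) (hc : 0 ≤ c) (hcorner : ∀ m ∈ M, Commute c (e * m * e)) :
    ∃ z ∈ M, z ∈ M.commutant ∧ z * e = c * e := by
  obtain ⟨r, p, hr, hr0, hp, hcomm, hsum⟩ := exists_hasSum_isStarProjection hc
  have hpM (n : ℕ) : p n ∈ M :=
    mem_of_forall_mem_commutant_commute fun y hy => hcomm n y (commute_of_mem_commutant hcM hy)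
  have hpe (n : ℕ) : Commute (p n) e := by
    simpa [he.isIdempotentElem.eq] using hcomm n _ (hcorner 1 (one_mem M))
  choose z hzM hzM' hz hze using fun n => exists_isStarProjection_mul_eq heM (mul_mem (hpM n) heM)
    ((hp n).mul he (hpe n))
    (by rw [← mul_assoc, ← (hpe n).eq, mul_assoc, he.isIdempotentElem.eq])
    (by rw [mul_assoc, he.isIdempotentElem.eq])
    fun m hm => (hcomm n _ (hcorner m hm)).mul_left (by
      rw [commute_iff_eq, mul_assoc _ e e, he.isIdempotentElem.eq, ← mul_assoc, ← mul_assoc,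
        he.isIdempotentElem.eq])
  have hz_sum := (summable_smul_isStarProjection hr hr0 hz).hasSum
  refine ⟨_, mem_of_hasSum (fun n => real_smul_mem (r n) (hzM n)) hz_sum,
    mem_of_hasSum (fun n => real_smul_mem (r n) (hzM' n)) hz_sum,
    (hz_sum.mul_right e).unique ?_⟩
  simpa only [smul_mul_assoc, hze] using hsum.mul_right e

theorem exists_mem_commutant_mul_eq {c : H →L[ℂ] H} (heM : e ∈ M) (he : IsStarProjection e)
    (hcM : c ∈ M) (hcorner : ∀ m ∈ M, Commute c (e * m * e)) :
    ∃ z ∈ M, z ∈ M.commutant ∧ z * e = c * e := by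
  let V := M.toStarSubalgebra ⊓ StarSubalgebra.centralizer ℂ {x | ∃ m ∈ M, e * m * e = x}
  let Z := Subalgebra.toSubmodule
    (M.toStarSubalgebra ⊓ M.commutant.toStarSubalgebra).toSubalgebra
  let S := (Z.map (LinearMap.mulRight ℂ e)).comap (LinearMap.mulRight ℂ e)
  have hcV : c ∈ V := by
    refine ⟨hcM, (StarSubalgebra.mem_centralizer_iff ℂ).mpr ?_⟩
    rintro _ ⟨m, hm, rfl⟩
    have hm' := hcorner _ (star_mem hm)
    simp only [star_mul, he.isSelfAdjoint.star_eq, ← mul_assoc]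
    exact ⟨(hcorner m hm).eq.symm, hm'.eq.symm⟩
  have hS : c ∈ S := mem_of_forall_nonneg_mem V S (fun b hb hb0 => by
    obtain ⟨z, hzM, hzM', hze⟩ := exists_mul_eq_of_nonneg heM he hb.1 hb0 fun m hm =>
      (((StarSubalgebra.mem_centralizer_iff ℂ).mp hb.2 _ ⟨m, hm, rfl⟩).1).symm
    exact ⟨z, ⟨hzM, hzM'⟩, hze⟩) hcV
  obtain ⟨z, ⟨hzM, hzM'⟩, hze⟩ := hS
  exact ⟨z, hzM, hzM', hze⟩

end Corner

section PeirceDecomposition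

open VonNeumannAlgebra

theorem eq_zero_of_mul_self_eq_zero_of_commute_star {A : Type*} [NonUnitalNormedRing A] [StarRing A]
    [CStarRing A] {c : A} (hc : Commute c (star c)) (h : c * c = 0) : c = 0 := by
  rw [← CStarRing.star_mul_self_eq_zero_iff, ← CStarRing.star_mul_self_eq_zero_iff, star_mul,
    star_star, mul_assoc, ← mul_assoc c, hc.eq, mul_assoc (star c), h, mul_zero, mul_zero]

theorem isReduced_center {A : Type*} [NormedRing A] [StarRing A] [CStarRing A] :
    IsReduced (Subring.center A) :=
  (isReduced_iff_pow_one_lt 2 one_lt_two).mpr fun c hc => Subtype.ext <|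
    eq_zero_of_mul_self_eq_zero_of_commute_star (Subring.mem_center_iff.mp c.2 _).symm
      (by simpa [pow_two] using congr(($hc).1))

variable {H : Type*} [NormedAddCommGroup H] [InnerProductSpace ℂ H] [CompleteSpace H]
variable {M : VonNeumannAlgebra H} {e f : H →L[ℂ] H}

theorem mul_eq_zero_of_forall_mul_mul_eq_zero {x : H →L[ℂ] H}
    (hf : ∀ v, f v ∈ cyclicClosure M e.range) (h : ∀ m ∈ M, x * m * e = 0) : x * f = 0 := by
  have hker : cyclicClosure M e.range ≤ x.ker := cyclicClosure_le x.isClosed_ker fun m hm => by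
    rintro _ ⟨w, rfl⟩
    exact congr($(h m hm) w)
  exact ContinuousLinearMap.ext fun v => hker (hf v)

theorem closureProj_cyclicClosure_mul_closureProj (P : Submodule ℂ H) :
    closureProj (cyclicClosure M P) * closureProj P = closureProj P :=
  closureProj_mul_eq_self fun v =>
    Submodule.topologicalClosure_mono le_cyclicClosure (closureProj_apply_mem P v)

theorem exists_isStarProjection_generating (M : VonNeumannAlgebra H) :
    ∃ f ∈ M, ∃ p ∈ M, f ∈ M.commutant ∧ IsStarProjection f ∧ IsStarProjection p ∧ f * p = p ∧
      (∀ v, f v ∈ cyclicClosure M p.range) ∧ (∀ v, f v ∈ cyclicClosure M (f - p).range) ∧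
      ∀ x ∈ M, ∀ y ∈ M, f * (x * y - y * x) = x * y - y * x := by
  obtain ⟨⟨P, Q⟩, hmax⟩ := exists_maximal_isOrthoPair M
  obtain ⟨hP, -, hort, hPQ, hQP⟩ := hmax.1
  refine ⟨closureProj (cyclicClosure M P), hP.cyclicClosure.closureProj_mem, closureProj P,
    hP.closureProj_mem, closureProj_cyclicClosure_mem_commutant, isStarProjection_closureProj _,
    isStarProjection_closureProj _, closureProj_cyclicClosure_mul_closureProj P, fun v => ?_,
    fun v => ?_, fun x hx y hy => mul_commutator_eq_of_maximal_isOrthoPair hmax hx hy⟩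
  · have hle : P ≤ (closureProj P).range := fun w hw => ⟨w, closureProj_apply_of_mem hw⟩
    exact cyclicClosure_mono hle (closureProj_cyclicClosure_apply_mem v)
  · have hle : Q ≤ (closureProj (cyclicClosure M P) - closureProj P).range := fun q hq => by
      have hPq : closureProj P q = 0 := by
        rw [closureProj, Submodule.starProjection_apply_eq_zero_iff, Submodule.orthogonal_closure]
        exact Submodule.isOrtho_iff_le.mp hort.symm hq
      refine ⟨q, ?_⟩
      change closureProj (cyclicClosure M P) q - closureProj P q = q
      rw [hPq, closureProj_cyclicClosure_apply_eq_self_iff.mpr (hQP hq), sub_zero]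
    exact cyclicClosure_mono hle (cyclicClosure_le_cyclicClosure hPQ
      (closureProj_cyclicClosure_apply_mem v))

theorem exists_peircePair (M : VonNeumannAlgebra H) :
    ∃ (f : M.toStarSubalgebra) (e : Bool → M.toStarSubalgebra), PeircePair f e ∧
      ∀ x y, f * (x * y - y * x) = x * y - y * x := by
  obtain ⟨f, hfM, p, hpM, hfM', hf, hp, hfp, hcp, hcq, hab⟩ := exists_isStarProjection_generating M
  let e : Bool → M.toStarSubalgebra := fun i => cond i ⟨p, hpM⟩ ⟨f - p, sub_mem hfM hpM⟩
  have hpf : p * f = p := by rw [(commute_of_mem_commutant hpM hfM').eq, hfp]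
  have he (i : Bool) : IsStarProjection (e i).1 := by
    cases i
    exacts [hp.sub_of_mul_eq_left hf hpf, hp]
  have hcyc (i : Bool) (v : H) : f v ∈ cyclicClosure M (e i).1.range := by
    cases i
    exacts [hcq v, hcp v]
  have horth : OrthogonalIdempotents e := by
    refine ⟨fun i => Subtype.ext (he i).isIdempotentElem, ?_⟩
    rintro (_ | _) (_ | _) hij
    exacts [(hij rfl).elim, Subtype.ext (by simp [e, sub_mul, hfp, hp.isIdempotentElem.eq]),
      Subtype.ext (by simp [e, mul_sub, hpf, hp.isIdempotentElem.eq]), (hij rfl).elim]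
  refine ⟨⟨f, hfM⟩, e, ⟨horth, ?_, ?_, fun i x h => ?_, fun i c h => ?_, isReduced_center⟩,
    fun x y => Subtype.ext (hab x x.2 y y.2)⟩
  · exact Subtype.ext (by simp [e])
  · exact Subring.mem_center_iff.mpr fun x => Subtype.ext (mem_commutant_iff.mp hfM' x x.2)
  · exact Subtype.ext <| mul_eq_zero_of_forall_mul_mul_eq_zero (hcyc i) fun m hm =>
      congr(($(h ⟨m, hm⟩)).1)
  · obtain ⟨z, hzM, hzM', hze⟩ := exists_mem_commutant_mul_eq (e i).2 (he i) c.2 fun m hm =>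
      congr(($(h ⟨m, hm⟩)).1)
    exact ⟨⟨z, hzM⟩, Subring.mem_center_iff.mpr fun x =>
      Subtype.ext (mem_commutant_iff.mp hzM' x x.2), Subtype.ext hze⟩

end PeirceDecomposition

/-- (Miers) Every Lie derivation `L` of a von Neumann algebra `M` decomposes as
`L = D + λ` with `D` an associative derivation and `λ` a center-valued linear map
vanishing on commutators. -/
theorem miers_lie_derivation (H : Type*) [NormedAddCommGroup H] [InnerProductSpace ℂ H]
    [CompleteSpace H] (M : VonNeumannAlgebra H)
    (L : M.toStarSubalgebra →ₗ[ℂ] M.toStarSubalgebra)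
    (hL : ∀ x y : M.toStarSubalgebra,
      L (x * y - y * x) = (L x * y - y * L x) + (x * L y - L y * x)) :
    ∃ D lam : M.toStarSubalgebra →ₗ[ℂ] M.toStarSubalgebra,
      (∀ x y : M.toStarSubalgebra, D (x * y) = D x * y + x * D y) ∧
      (∀ x z : M.toStarSubalgebra, lam x * z = z * lam x) ∧
      (∀ x y : M.toStarSubalgebra, lam (x * y - y * x) = 0) ∧
      L = D + lam := by
  obtain ⟨f, e, h, hab⟩ := exists_peircePair M
  have : IsAddTorsionFree M.toStarSubalgebra := .of_isTorsionFree ℂ _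
  exact h.exists_assocDerivation_add hab L hL
end

section
/- (First Whitehead lemma) Let L be a finite-dimensional semisimple Lie algebra over a field of characteristic 0 and let M be a finite-dimensional L-module. Then every linear map f : L → M satisfying f([x, y]) = x·f(y) − y·f(x) for all x, y ∈ L is of the form f(x) = x·m for some fixed m ∈ M (i.e., H¹(L, M) = 0: every 1-cocycle is a coboundary). -/
/-!
The first cohomology of `L` with coefficients in `M` vanishes exactly when `LieDerivation.inner` is
surjective. This property passes from a submodule and its quotient to the whole module, so `M` may
be taken irreducible.

For an irreducible `M` with nonzero trace form, pick an ideal `J` on which that form is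
nondegenerate. With `b` a basis of `J` and `b'` its dual basis, the tensor `∑ bᵢ ⊗ b'ᵢ` is
`L`-invariant, so the Casimir operator `Ω = ∑ bᵢ b'ᵢ` commutes with `L`; its trace is `dim J ≠ 0`,
so it is invertible by Schur's lemma. Invariance also gives `x · ∑ bᵢ · D b'ᵢ = Ω (D x)` for every
derivation `D`, and therefore `D` is inner, given by `Ω⁻¹ (∑ bᵢ · D b'ᵢ)`.

If the trace form vanishes, Cartan's criterion makes `M` nilpotent, hence trivial, and a derivation
into a trivial module kills `⁅L, L⁆ = L`.
-/

open LieAlgebra LieModule Module TensorProduct Function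

namespace WhiteheadLemma

section Extensions

variable {R L M P : Type*} [CommRing R] [LieRing L] [LieAlgebra R L]
  [AddCommGroup M] [Module R M] [LieRingModule L M] [LieModule R L M]
  [AddCommGroup P] [Module R P] [LieRingModule L P] [LieModule R L P]

/-- The composite of a Lie derivation with a homomorphism of coefficient modules. -/
def mapDerivation (φ : M →ₗ⁅R,L⁆ P) (D : LieDerivation R L M) : LieDerivation R L P where
  toLinearMap := (φ : M →ₗ[R] P) ∘ₗ (D : L →ₗ[R] M)
  leibniz' x y := by simp

/-- A Lie derivation whose values lie in a Lie submodule, as a derivation into that submodule. -/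
def codRestrictDerivation (D : LieDerivation R L M) (N : LieSubmodule R L M)
    (hD : ∀ x, D x ∈ N) : LieDerivation R L N where
  toLinearMap := (D : L →ₗ[R] M).codRestrict N.toSubmodule hD
  leibniz' x y := Subtype.ext (D.apply_lie_eq_sub x y)

theorem surjective_inner_of_submodule_of_quotient (N : LieSubmodule R L M)
    (hN : Surjective (LieDerivation.inner R L N))
    (hQ : Surjective (LieDerivation.inner R L (M ⧸ N))) :
    Surjective (LieDerivation.inner R L M) := by
  intro D
  obtain ⟨q, hq⟩ := hQ (mapDerivation (LieSubmodule.Quotient.mk' N) D)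
  obtain ⟨m, rfl⟩ := LieSubmodule.Quotient.surjective_mk' N q
  have hmem (x : L) : (D - LieDerivation.inner R L M m) x ∈ N := by
    rw [← LieSubmodule.Quotient.mk_eq_zero, LieDerivation.sub_apply, map_sub, sub_eq_zero]
    exact (LieDerivation.congr_fun hq x).symm
  obtain ⟨n, hn⟩ := hN (codRestrictDerivation _ N hmem)
  have hn' : LieDerivation.inner R L M n = D - LieDerivation.inner R L M m :=
    LieDerivation.ext fun x ↦ congr_arg Subtype.val (LieDerivation.congr_fun hn x)
  exact ⟨n + m, by rw [map_add, hn', sub_add_cancel]⟩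

end Extensions

section Casimir

variable {R L M : Type*} [CommRing R] [LieRing L] [LieAlgebra R L]
  [AddCommGroup M] [Module R M] [LieRingModule L M] [LieModule R L M]

variable (R L M) in
/-- The action of `L ⊗ L` on an `L`-module through the universal enveloping algebra:
`x ⊗ y` acts as `m ↦ ⁅x, ⁅y, m⁆⁆`. The Casimir operator is the action of an invariant tensor. -/
def tensorAction : L ⊗[R] L →ₗ[R] End R M :=
  LinearMap.mul' R (End R M) ∘ₗ TensorProduct.map (toEnd R L M : L →ₗ[R] End R M) (toEnd R L M)

@[simp]
theorem tensorAction_tmul_apply (x y : L) (m : M) :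
    tensorAction R L M (x ⊗ₜ y) m = ⁅x, ⁅y, m⁆⁆ := by
  simp [tensorAction]

theorem trace_tensorAction_tmul (x y : L) :
    LinearMap.trace R M (tensorAction R L M (x ⊗ₜ y)) = traceForm R L M x y := by
  simp [tensorAction, traceForm_apply_apply, Module.End.mul_eq_comp]

/-- The contraction `x ⊗ y ↦ ⁅x, D y⁆` of a tensor against a Lie derivation `D`. -/
def contraction (D : LieDerivation R L M) : L ⊗[R] L →ₗ[R] M :=
  (toModuleHom R L M : L ⊗[R] M →ₗ[R] M) ∘ₗ (D : L →ₗ[R] M).lTensor L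

@[simp]
theorem contraction_tmul (D : LieDerivation R L M) (x y : L) :
    contraction D (x ⊗ₜ y) = ⁅x, D y⁆ := by
  simp [contraction]

theorem contraction_inner (m : M) (t : L ⊗[R] L) :
    contraction (LieDerivation.inner R L M m) t = tensorAction R L M t m := by
  induction t with
  | zero => simp
  | tmul x y => simp
  | add s t hs ht => simp [hs, ht]

theorem lie_contraction (D : LieDerivation R L M) (x : L) (t : L ⊗[R] L) :
    ⁅x, contraction D t⁆ = contraction D ⁅x, t⁆ + tensorAction R L M t (D x) := by
  induction t with
  | zero => simp
  | tmul u v => simp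
  | add s t hs ht =>
    simp only [map_add, lie_add, hs, ht, LinearMap.add_apply]
    abel

theorem tensorAction_lie_of_invariant {t : L ⊗[R] L} (ht : ∀ x : L, ⁅x, t⁆ = 0) (x : L) (m : M) :
    tensorAction R L M t ⁅x, m⁆ = ⁅x, tensorAction R L M t m⁆ := by
  have h := lie_contraction (LieDerivation.inner R L M m) x t
  rw [contraction_inner, ht, map_zero, zero_add] at h
  simpa using h.symm

theorem surjective_inner_of_bijective_tensorAction {t : L ⊗[R] L} (ht : ∀ x : L, ⁅x, t⁆ = 0)
    (hΩ : Bijective (tensorAction R L M t)) : Surjective (LieDerivation.inner R L M) := by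
  intro D
  obtain ⟨m, hm⟩ := hΩ.surjective (contraction D t)
  refine ⟨m, LieDerivation.ext fun x ↦ hΩ.injective ?_⟩
  calc tensorAction R L M t ⁅x, m⁆
    _ = ⁅x, contraction D t⁆ := by rw [tensorAction_lie_of_invariant ht, hm]
    _ = tensorAction R L M t (D x) := by rw [lie_contraction, ht, map_zero, zero_add]

end Casimir

section InvariantForms

variable {K L V : Type*} [Field K] [LieRing L] [LieAlgebra K L]
  [AddCommGroup V] [Module K V] [LieRingModule L V] [LieModule K L V]

theorem lie_sum_tmul_dualBasis {ι : Type*} [Fintype ι] [DecidableEq ι]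
    {B : LinearMap.BilinForm K V} (hinv : B.lieInvariant L) (hB : B.Nondegenerate)
    (b : Basis ι K V) (x : L) : ⁅x, ∑ i, b i ⊗ₜ[K] B.dualBasis hB b i⁆ = 0 := by
  set d := B.dualBasis hB b with hd
  have expand_b (v : V) : v = ∑ j, B (d j) v • b j := by
    have hrepr (j : ι) : b.repr v j = B (d j) v := by
      have h := B.flip.dualBasis_repr_apply hB.flip d v j
      rwa [hd, B.dualBasis_flip_dualBasis] at h
    simpa only [hrepr] using (b.sum_repr v).symm
  have expand_d (v : V) : v = ∑ j, B v (b j) • d j := by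
    simpa only [hd, B.dualBasis_repr_apply] using (d.sum_repr v).symm
  have hcancel : ∑ i, ⁅x, b i⁆ ⊗ₜ[K] d i = -∑ i, b i ⊗ₜ[K] ⁅x, d i⁆ :=
    calc ∑ i, ⁅x, b i⁆ ⊗ₜ[K] d i
      _ = ∑ i, ∑ j, B (d j) ⁅x, b i⁆ • b j ⊗ₜ[K] d i := by
        refine Finset.sum_congr rfl fun i _ ↦ ?_
        conv_lhs => rw [expand_b ⁅x, b i⁆]
        simp only [sum_tmul, smul_tmul']
      _ = -∑ j, ∑ i, B ⁅x, d j⁆ (b i) • b j ⊗ₜ[K] d i := by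
        rw [Finset.sum_comm]
        simp only [hinv x, neg_smul, Finset.sum_neg_distrib, neg_neg]
      _ = -∑ j, b j ⊗ₜ[K] ⁅x, d j⁆ := by
        congr 1
        refine Finset.sum_congr rfl fun j _ ↦ ?_
        conv_rhs => rw [expand_d ⁅x, d j⁆]
        simp only [tmul_sum, tmul_smul]
  rw [lie_sum]
  simp only [TensorProduct.LieModule.lie_tmul_right, Finset.sum_add_distrib, hcancel,
    neg_add_cancel]

theorem exists_lieIdeal_ne_bot_restrict_nondegenerate {R L : Type*} [CommRing R] [LieRing L]
    [LieAlgebra R L] [IsSemisimple R L] {B : LinearMap.BilinForm R L} (hinv : B.lieInvariant L)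
    (hsymm : LinearMap.IsSymm B) (hB : B ≠ 0) :
    ∃ J : LieIdeal R L, J ≠ ⊥ ∧ (B.restrict J.toSubmodule).Nondegenerate := by
  let radB : LieIdeal R L := InvariantForm.orthogonal B hinv ⊤
  have hrad : radB.toSubmodule = LinearMap.ker B := by
    simp [radB, LinearMap.BilinForm.orthogonal_top_eq_ker hsymm.isRefl]
  obtain ⟨J, hJ⟩ := exists_isCompl radB
  refine ⟨J, ?_, ?_⟩
  · rintro rfl
    refine hB (LinearMap.ker_eq_top.mp ?_)
    rw [← hrad, eq_top_of_isCompl_bot hJ, LieSubmodule.top_toSubmodule]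
  · refine hsymm.nondegenerate_restrict_of_isCompl_ker ?_
    rw [← hrad]
    exact LieSubmodule.isCompl_toSubmodule.mpr hJ.symm

theorem exists_invariant_tensor_trace_ne_zero {M : Type*} [CharZero K] [Module.Finite K L]
    [IsSemisimple K L] [AddCommGroup M] [Module K M] [LieRingModule L M] [LieModule K L M]
    (h : traceForm K L M ≠ 0) :
    ∃ t : L ⊗[K] L, (∀ x : L, ⁅x, t⁆ = 0) ∧ LinearMap.trace K M (tensorAction K L M t) ≠ 0 := by
  obtain ⟨J, hJ, hB⟩ := exists_lieIdeal_ne_bot_restrict_nondegenerate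
    (traceForm_lieInvariant K L M) (traceForm_isSymm K L M) h
  let B : LinearMap.BilinForm K J := (traceForm K L M).restrict J.toSubmodule
  have hinv : B.lieInvariant L := fun x y z ↦ traceForm_lieInvariant K L M x y z
  have hsymm : B.IsSymm := ⟨fun x y ↦ traceForm_comm K L M x y⟩
  let b := finBasis K J
  refine ⟨TensorProduct.LieModule.mapIncl J J (∑ i, b i ⊗ₜ B.dualBasis hB b i), fun x ↦ ?_, ?_⟩
  · rw [← LieModuleHom.map_lie, lie_sum_tmul_dualBasis hinv hB b x, map_zero]
  · have htrace (i) : traceForm K L M (b i) (B.dualBasis hB b i) = 1 :=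
      (B.apply_dualBasis_right hB hsymm b i i).trans (if_pos rfl)
    have : Nontrivial J := (LieSubmodule.nontrivial_iff_ne_bot K L L).mpr hJ
    simpa [trace_tensorAction_tmul, htrace] using (finrank_pos (R := K) (M := J)).ne'

end InvariantForms

section Perfect

variable {R L M : Type*} [CommRing R] [LieRing L] [LieAlgebra R L]
  [AddCommGroup M] [Module R M] [LieRingModule L M] [LieModule R L M]

variable (R L) in
theorem derivedSeries_one_eq_top_of_isSemisimple [IsSemisimple R L] :
    derivedSeries R L 1 = ⊤ := by
  obtain ⟨C, hC⟩ := exists_isCompl (derivedSeries R L 1)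
  have habelian : IsLieAbelian C := by
    rw [LieSubmodule.lie_abelian_iff_lie_self_eq_bot, eq_bot_iff, ← hC.inf_eq_bot]
    exact le_inf (LieSubmodule.mono_lie le_top le_top) (LieSubmodule.lie_le_left _ _)
  rw [(hasTrivialRadical_iff_no_abelian_ideals R L).mp inferInstance C habelian] at hC
  exact eq_top_of_isCompl_bot hC

theorem derivation_eq_zero_of_isTrivial [IsTrivial L M] (hL : derivedSeries R L 1 = ⊤)
    (D : LieDerivation R L M) : D = 0 := by
  have hker : (derivedSeries R L 1).toSubmodule ≤ LinearMap.ker (D : L →ₗ[R] M) := by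
    change (⁅(⊤ : LieIdeal R L), (⊤ : LieIdeal R L)⁆ : LieIdeal R L).toSubmodule ≤ _
    rw [LieSubmodule.lieIdeal_oper_eq_linear_span', Submodule.span_le]
    rintro _ ⟨x, -, y, -, rfl⟩
    simp [trivial_lie_zero]
  rw [hL] at hker
  exact LieDerivation.ext fun x ↦ hker (Submodule.mem_top (x := x))

theorem isNilpotent_of_traceForm_eq_zero [IsDomain R] [CharZero R] [Module.Free R M]
    [IsNoetherian R M] (hL : derivedSeries R L 1 = ⊤) (h : traceForm R L M = 0) :
    LieModule.IsNilpotent L M := by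
  have hnil := isNilpotent_derivedSeries_of_traceForm_eq_zero h
  rw [LieModule.isNilpotent_iff_forall' (R := R)] at hnil ⊢
  exact fun x ↦ hnil ⟨x, hL ▸ LieSubmodule.mem_top x⟩

variable (R) in
theorem isTrivial_of_isNilpotent_of_isIrreducible [LieModule.IsNilpotent L M]
    [IsIrreducible R L M] : IsTrivial L M := by
  have : Nontrivial M := nontrivial_of_isIrreducible R L M
  have : Nontrivial (maxTrivSubmodule R L M) := nontrivial_max_triv_of_isNilpotent R L M
  rw [LieModule.isTrivial_iff_max_triv_eq_top R]
  exact LieSubmodule.eq_top_of_isIrreducible R L M _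

end Perfect

section Vanishing

theorem injective_of_isIrreducible {R L M P : Type*} [CommRing R] [LieRing L]
    [AddCommGroup M] [Module R M] [LieRingModule L M] [IsIrreducible R L M]
    [AddCommGroup P] [Module R P] [LieRingModule L P] {φ : M →ₗ⁅R,L⁆ P} (hφ : φ ≠ 0) :
    Injective φ := by
  rw [← LieModuleHom.ker_eq_bot]
  refine (eq_bot_or_eq_top φ.ker).resolve_right fun h ↦ hφ <| LieModuleHom.ext fun m ↦ ?_
  exact LieModuleHom.mem_ker.mp (h ▸ LieSubmodule.mem_top m)

variable {K L M : Type*} [Field K] [LieRing L] [LieAlgebra K L]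
  [AddCommGroup M] [Module K M] [LieRingModule L M] [LieModule K L M] [Module.Finite K M]

theorem bijective_tensorAction_of_trace_ne_zero [IsIrreducible K L M] {t : L ⊗[K] L}
    (ht : ∀ x : L, ⁅x, t⁆ = 0) (htrace : LinearMap.trace K M (tensorAction K L M t) ≠ 0) :
    Bijective (tensorAction K L M t) := by
  let Ω : M →ₗ⁅K,L⁆ M :=
    { tensorAction K L M t with map_lie' := tensorAction_lie_of_invariant ht _ _ }
  have hΩ : Ω ≠ 0 := fun h ↦ htrace <| by
    rw [show tensorAction K L M t = 0 from congr_arg LieModuleHom.toLinearMap h, map_zero]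
  have hinj : Injective (tensorAction K L M t) := injective_of_isIrreducible hΩ
  exact ⟨hinj, LinearMap.injective_iff_surjective.mp hinj⟩

theorem surjective_inner_of_isIrreducible [CharZero K] [Module.Finite K L] [IsSemisimple K L]
    [IsIrreducible K L M] : Surjective (LieDerivation.inner K L M) := by
  by_cases h : traceForm K L M = 0
  · have hL := derivedSeries_one_eq_top_of_isSemisimple K L
    have := isNilpotent_of_traceForm_eq_zero hL h
    have := isTrivial_of_isNilpotent_of_isIrreducible K (L := L) (M := M)
    exact fun D ↦ ⟨0, by rw [map_zero, derivation_eq_zero_of_isTrivial hL D]⟩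
  · obtain ⟨t, ht, htrace⟩ := exists_invariant_tensor_trace_ne_zero h
    exact surjective_inner_of_bijective_tensorAction ht
      (bijective_tensorAction_of_trace_ne_zero ht htrace)

theorem surjective_inner_of_isSemisimple [CharZero K] [Module.Finite K L] [IsSemisimple K L] :
    Surjective (LieDerivation.inner K L M) := by
  induction hn : finrank K M using Nat.strong_induction_on generalizing M with
  | _ n ih =>
  rcases subsingleton_or_nontrivial M with hM | hM
  · exact fun D ↦ ⟨0, LieDerivation.ext fun x ↦ Subsingleton.elim _ _⟩
  by_cases hirr : ∀ N : LieSubmodule K L M, N ≠ ⊥ → N = ⊤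
  · have := LieModule.IsIrreducible.mk hirr
    exact surjective_inner_of_isIrreducible
  push Not at hirr
  obtain ⟨N, hbot, htop⟩ := hirr
  have : Nontrivial N := (LieSubmodule.nontrivial_iff_ne_bot K L M).mpr hbot
  have hN : 0 < finrank K N := finrank_pos
  have hNM : finrank K N < finrank K M :=
    Submodule.finrank_lt (s := N.toSubmodule) (by simpa using htop)
  have hadd : finrank K (M ⧸ N) + finrank K N = finrank K M :=
    N.toSubmodule.finrank_quotient_add_finrank
  have : Module.Finite K (M ⧸ N) := inferInstanceAs (Module.Finite K (M ⧸ N.toSubmodule))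
  exact surjective_inner_of_submodule_of_quotient N
    (ih (finrank K N) (by omega) rfl) (ih (finrank K (M ⧸ N)) (by omega) rfl)

end Vanishing

end WhiteheadLemma

open WhiteheadLemma

/-- (First Whitehead lemma) For a finite-dimensional semisimple Lie algebra `L` over a
field of characteristic 0 and a finite-dimensional `L`-module `M`, every 1-cocycle
`f : L → M` (i.e. `f ⁅x, y⁆ = x • f y − y • f x`) is a coboundary: `f x = x • m` for
some fixed `m ∈ M`. -/
theorem first_whitehead_lemma (K L M : Type*) [Field K] [CharZero K]
    [LieRing L] [LieAlgebra K L] [Module.Finite K L] [LieAlgebra.HasTrivialRadical K L]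
    [AddCommGroup M] [Module K M] [LieRingModule L M] [LieModule K L M] [Module.Finite K M]
    (f : L →ₗ[K] M)
    (hf : ∀ x y : L, f ⁅x, y⁆ = ⁅x, f y⁆ - ⁅y, f x⁆) :
    ∃ m : M, ∀ x : L, f x = ⁅x, m⁆ := by
  obtain ⟨m, hm⟩ := surjective_inner_of_isSemisimple (K := K) (L := L) (M := M) ⟨f, hf⟩
  exact ⟨m, fun x ↦ (LieDerivation.congr_fun hm x).symm⟩
end
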